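/- Let ν = (ν⁰, ν^∞) where ν⁰ is a Borel probability measure on 𝕍 with finite first moment and ν^∞ is a finite positive Borel measure on the unit sphere 𝕊_𝕍, and let z ∈ 𝕍. Then ν ∈ Y(z) if and only if ν̄⁰ + ν̄^∞ = z (where ν̄ denotes the first moment of a measure) and for every 𝒜-quasiconvex integrand f : 𝕍 → ℝ of linear growth the Jensen-type inequality ∫_𝕍 f dν⁰ + ∫_{𝕊_𝕍} f^∞ dν^∞ ≥ f(z) holds, where f^∞ is the upper recession function of f. -/

import Mathlib

open MeasureTheory Filter Topology

noncomputable section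

/-! ## Basic PDE setup -/

abbrev Dom (n : ℕ) := Fin n → ℝ

def unitCube (n : ℕ) : Set (Dom n) := Set.univ.pi fun _ => Set.Ioo (-(1/2) : ℝ) (1/2)

def closedUnitCube (n : ℕ) : Set (Dom n) := Set.univ.pi fun _ => Set.Icc (-(1/2) : ℝ) (1/2)

/-- The finite set of multi-indices of degree `k`. -/
def degSet (n k : ℕ) : Finset (Fin n → ℕ) :=
  (Fintype.piFinset fun _ : Fin n => Finset.range (k+1)).filter fun α => (∑ i, α i) = k

/-- Partial derivative in the `j`-th coordinate direction. -/
def pderivDir {n : ℕ} {V : Type*} [NormedAddCommGroup V] [NormedSpace ℝ V]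
    (j : Fin n) (u : Dom n → V) : Dom n → V :=
  fun x => fderiv ℝ u x (Pi.single j 1)

/-- The multi-index partial derivative `∂^α`. -/
def mderiv {n : ℕ} {V : Type*} [NormedAddCommGroup V] [NormedSpace ℝ V]
    (α : Fin n → ℕ) (u : Dom n → V) : Dom n → V :=
  (List.finRange n).foldr (fun j f => (pderivDir j)^[α j] f) u

/-- The action of a homogeneous `k`-th order constant-coefficient operator with
coefficients `A α` on a function. -/
def opApply {n : ℕ} {V W : Type*} [NormedAddCommGroup V] [NormedSpace ℝ V]
    [NormedAddCommGroup W] [NormedSpace ℝ W]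
    (A : (Fin n → ℕ) → (V →L[ℝ] W)) (k : ℕ) (u : Dom n → V) (x : Dom n) : W :=
  ∑ α ∈ degSet n k, A α (mderiv α u x)

/-- The symbol `𝒜(ξ) = Σ_{|α|=k} ξ^α A_α`. -/
def opSymbol {n : ℕ} {V W : Type*} [NormedAddCommGroup V] [NormedSpace ℝ V]
    [NormedAddCommGroup W] [NormedSpace ℝ W]
    (A : (Fin n → ℕ) → (V →L[ℝ] W)) (k : ℕ) (ξ : Dom n) : V →L[ℝ] W :=
  ∑ α ∈ degSet n k, (∏ i, ξ i ^ α i) • A α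

/-- The wave cone `Λ_𝒜 = ⋃_{ξ ≠ 0} ker 𝒜(ξ)`. -/
def waveCone {n : ℕ} {V W : Type*} [NormedAddCommGroup V] [NormedSpace ℝ V]
    [NormedAddCommGroup W] [NormedSpace ℝ W]
    (A : (Fin n → ℕ) → (V →L[ℝ] W)) (k : ℕ) : Set V :=
  {v | ∃ ξ : Dom n, ξ ≠ 0 ∧ opSymbol A k ξ v = 0}

/-- The wave cone is spanning. -/
def SpanningCone {n : ℕ} {V W : Type*} [NormedAddCommGroup V] [NormedSpace ℝ V]
    [NormedAddCommGroup W] [NormedSpace ℝ W]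
    (A : (Fin n → ℕ) → (V →L[ℝ] W)) (k : ℕ) : Prop :=
  Submodule.span ℝ (waveCone A k) = ⊤

/-- `ℬ` is an exact potential of `𝒜`:  `ker 𝒜(ξ) = im ℬ(ξ)` for all `ξ ≠ 0`. -/
def ExactPotential {n : ℕ} {U V W : Type*} [NormedAddCommGroup V] [NormedSpace ℝ V]
    [NormedAddCommGroup W] [NormedSpace ℝ W] [NormedAddCommGroup U] [NormedSpace ℝ U]
    (A : (Fin n → ℕ) → (V →L[ℝ] W)) (k : ℕ)
    (B : (Fin n → ℕ) → (U →L[ℝ] V)) (l : ℕ) : Prop :=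
  ∀ ξ : Dom n, ξ ≠ 0 → LinearMap.ker (opSymbol A k ξ : V →ₗ[ℝ] W) = LinearMap.range (opSymbol B l ξ : U →ₗ[ℝ] V)

/-- `ℤⁿ`-periodicity. -/
def ZPeriodic {n : ℕ} {V : Type*} (v : Dom n → V) : Prop :=
  ∀ (x : Dom n) (m : Fin n → ℤ), v (x + fun i => (m i : ℝ)) = v x

/-- `𝒜`-quasiconvexity of a continuous integrand. -/
def AQuasiconvex {n : ℕ} {V W : Type*} [NormedAddCommGroup V] [NormedSpace ℝ V]
    [NormedAddCommGroup W] [NormedSpace ℝ W]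
    (A : (Fin n → ℕ) → (V →L[ℝ] W)) (k : ℕ) (f : V → ℝ) : Prop :=
  Continuous f ∧ ∀ (z : V) (v : Dom n → V), ContDiff ℝ (⊤ : ℕ∞) v → ZPeriodic v →
    (∫ x in unitCube n, v x) = 0 → (∀ x, opApply A k v x = 0) →
    f z ≤ ∫ x in unitCube n, f (z + v x)

def LinearGrowth {V : Type*} [NormedAddCommGroup V] (f : V → ℝ) : Prop :=
  ∃ c : ℝ, ∀ z, |f z| ≤ c * (1 + ‖z‖)

/-- Upper recession function `f^∞(z) = limsup_{t→∞, z'→z} f(tz')/t`. -/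
def urec {V : Type*} [NormedAddCommGroup V] [NormedSpace ℝ V] (f : V → ℝ) (z : V) : ℝ :=
  limsup (fun p : ℝ × V => f (p.1 • p.2) / p.1) (atTop ×ˢ 𝓝 z)

/-- The radial recession function `z ↦ limsup_{t→∞} f(tz)/t`. -/
def rrec {V : Type*} [NormedAddCommGroup V] [NormedSpace ℝ V] (f : V → ℝ) (z : V) : ℝ :=
  limsup (fun t : ℝ => f (t • z) / t) atTop

/-- `g` is the recession function of `Φ`, the limit being locally uniform. -/
def HasRec {V : Type*} [NormedAddCommGroup V] [NormedSpace ℝ V] (Φ g : V → ℝ) : Prop :=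
  TendstoLocallyUniformly (fun (t : ℝ) (z : V) => Φ (t • z) / t) g atTop

/-- Membership in the class `ℍ`. -/
def MemH {V : Type*} [NormedAddCommGroup V] [NormedSpace ℝ V] (Φ : V → ℝ) : Prop :=
  Continuous Φ ∧ LinearGrowth Φ ∧ ∃ g : V → ℝ, HasRec Φ g

/-- `C_c^∞` functions with support in `Ω`. -/
def CcSmooth {n : ℕ} {U : Type*} [NormedAddCommGroup U] [NormedSpace ℝ U]
    (Ω : Set (Dom n)) (u : Dom n → U) : Prop :=
  ContDiff ℝ (⊤ : ℕ∞) u ∧ HasCompactSupport u ∧ tsupport u ⊆ Ω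

/-- The `W^{l-1,1}` norm : sum of the `L¹` norms of derivatives of order `< l`. -/
def sobNorm {n : ℕ} {U : Type*} [NormedAddCommGroup U] [NormedSpace ℝ U]
    (l : ℕ) (u : Dom n → U) : ℝ :=
  ∑ j ∈ Finset.range l, ∫ x : Dom n, ‖iteratedFDeriv ℝ j u x‖

/-- Membership of a pair `(ν⁰, ν^∞)` in the set `Y(z)` of Young measures generated by
sequences `z + ℬ u_j` with `u_j ∈ C_c^∞(𝕏, 𝕌)` and `‖u_j‖_{W^{l-1,1}} → 0`. -/
def memY {n : ℕ} {U V : Type*} [NormedAddCommGroup V] [InnerProductSpace ℝ V]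
    [FiniteDimensional ℝ V] [MeasurableSpace V] [BorelSpace V]
    [NormedAddCommGroup U] [NormedSpace ℝ U]
    (B : (Fin n → ℕ) → (U →L[ℝ] V)) (l : ℕ) (z : V)
    (nu0 : Measure V) (nuInf : Measure (Metric.sphere (0:V) 1)) : Prop :=
  ∃ u : ℕ → Dom n → U,
    (∀ j, CcSmooth (unitCube n) (u j)) ∧
    Tendsto (fun j => sobNorm l (u j)) atTop (𝓝 0) ∧
    ∀ Φ : V → ℝ, MemH Φ →
      Tendsto (fun j => ∫ x in unitCube n, Φ (z + opApply B l (u j) x)) atTop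
        (𝓝 ((∫ v, Φ v ∂nu0) + ∫ w, rrec Φ (w : V) ∂nuInf))

/-! ## Statement 1: Hahn–Banach characterization of homogeneous Young measures -/

/-!
Under `v ↦ v / (1 + ‖v‖)` the integrands in `ℍ` become the continuous functions on the closed unit
ball, with the recession function as boundary values on the sphere.

*Necessity.* An `𝒜`-quasiconvex `f` of linear growth is the decreasing limit of integrands in `ℍ`
whose recession functions decrease to `f^∞` (sup-convolutions on the ball). Extended periodically,
`ℬu_j` is admissible in the definition of quasiconvexity, so each of these integrands satisfies the
Jensen-type inequality along the generating sequence; dominated convergence gives it for `f`.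

*Sufficiency.* Finitely many energies `∫ Φ_i(z + ℬu)` can be averaged by gluing shrunken copies of
test functions on a grid, so the closure of the set of energy vectors is convex. If the vector of
pairings of `(ν⁰, ν^∞)` were outside, Hahn–Banach would give one integrand `Φ` whose energies all
exceed its pairing, contradicting the Jensen-type inequality for the quasiconvex envelope of `Φ`.
That the envelope, built from test functions `ℬu`, is `𝒜`-quasiconvex uses exactness: an `𝒜`-free
trigonometric polynomial of mean zero is `ℬw` for a periodic `w`, cutting off the rapidly
oscillating field `c^{-l} w(c x)` costs little, and mollification reduces the periodic fields to
trigonometric polynomials. A countable dense family of integrands and a diagonal sequence then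
generate `(ν⁰, ν^∞)`; gluing many copies of the same test function makes its `W^{l-1,1}` norm small
without changing its energies.
-/

open scoped ContDiff

section MultiIndexDerivatives

variable {n : ℕ} {V V' : Type*} [NormedAddCommGroup V] [NormedSpace ℝ V]
  [NormedAddCommGroup V'] [NormedSpace ℝ V']

theorem contDiff_pderivDir {u : Dom n → V} (hu : ContDiff ℝ ∞ u) (j : Fin n) :
    ContDiff ℝ ∞ (pderivDir j u) :=
  (hu.fderiv_right (m := ∞) (by simp)).clm_apply contDiff_const

theorem contDiff_pderivDir_iterate {u : Dom n → V} (hu : ContDiff ℝ ∞ u) (j : Fin n) (m : ℕ) :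
    ContDiff ℝ ∞ ((pderivDir j)^[m] u) := by
  induction m with
  | zero => exact hu
  | succ m ih =>
    rw [Function.iterate_succ_apply']
    exact contDiff_pderivDir ih j

theorem pderivDir_comm {u : Dom n → V} (hu : ContDiff ℝ ∞ u) (i j : Fin n) :
    pderivDir i (pderivDir j u) = pderivDir j (pderivDir i u) := by
  funext x
  have hsymm : IsSymmSndFDerivAt ℝ u x := by
    refine hu.contDiffAt.isSymmSndFDerivAt ?_
    rw [minSmoothness_of_isRCLikeNormedField]
    exact WithTop.coe_le_coe.2 (le_top : (2 : ℕ∞) ≤ ⊤)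
  have hdiff : DifferentiableAt ℝ (fderiv ℝ u) x :=
    (hu.fderiv_right (m := ∞) (by simp)).differentiable (by simp) x
  have pderivDir_pderivDir (i j : Fin n) : pderivDir i (pderivDir j u) x =
      fderiv ℝ (fderiv ℝ u) x (Pi.single i 1) (Pi.single j 1) := by
    unfold pderivDir
    rw [fderiv_clm_apply hdiff (differentiableAt_const _)]
    simp
  rw [pderivDir_pderivDir, pderivDir_pderivDir]
  exact hsymm.eq _ _

theorem pderivDir_iterate_comm {u : Dom n → V} (hu : ContDiff ℝ ∞ u) (i j : Fin n) (m : ℕ) :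
    pderivDir i ((pderivDir j)^[m] u) = (pderivDir j)^[m] (pderivDir i u) := by
  induction m with
  | zero => rfl
  | succ m ih =>
    rw [Function.iterate_succ_apply', Function.iterate_succ_apply',
      pderivDir_comm (contDiff_pderivDir_iterate hu j m), ih]

/-- The derivative `∂^α` restricted to the coordinates in the list `L`, so that `mderiv` is the
case `L = List.finRange n`; it makes induction on the set of coordinates possible. -/
def mderivList (L : List (Fin n)) (α : Fin n → ℕ) (u : Dom n → V) : Dom n → V :=
  L.foldr (fun j f => (pderivDir j)^[α j] f) u

theorem contDiff_mderivList {u : Dom n → V} (hu : ContDiff ℝ ∞ u) (L : List (Fin n))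
    (α : Fin n → ℕ) : ContDiff ℝ ∞ (mderivList L α u) := by
  induction L with
  | nil => exact hu
  | cons j L ih => exact contDiff_pderivDir_iterate ih j _

theorem contDiff_mderiv {u : Dom n → V} (hu : ContDiff ℝ ∞ u) (α : Fin n → ℕ) :
    ContDiff ℝ ∞ (mderiv α u) :=
  contDiff_mderivList hu _ α

theorem pderivDir_mderivList_comm {u : Dom n → V} (hu : ContDiff ℝ ∞ u) (i : Fin n)
    (L : List (Fin n)) (α : Fin n → ℕ) :
    pderivDir i (mderivList L α u) = mderivList L α (pderivDir i u) := by
  induction L with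
  | nil => rfl
  | cons j L ih =>
    change pderivDir i ((pderivDir j)^[α j] (mderivList L α u)) =
      (pderivDir j)^[α j] (mderivList L α (pderivDir i u))
    rw [pderivDir_iterate_comm (contDiff_mderivList hu L α), ih]

theorem pderivDir_iterate_mderivList_comm {u : Dom n → V} (hu : ContDiff ℝ ∞ u) (i : Fin n)
    (m : ℕ) (L : List (Fin n)) (α : Fin n → ℕ) :
    (pderivDir i)^[m] (mderivList L α u) = mderivList L α ((pderivDir i)^[m] u) := by
  induction m generalizing u with
  | zero => rfl
  | succ m ih =>
    rw [Function.iterate_succ_apply, Function.iterate_succ_apply, pderivDir_mderivList_comm hu,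
      ih (contDiff_pderivDir hu i)]

theorem mderiv_mderiv {u : Dom n → V} (hu : ContDiff ℝ ∞ u) (α β : Fin n → ℕ) :
    mderiv α (mderiv β u) = mderiv (α + β) u := by
  change mderivList _ α (mderivList _ β u) = mderivList _ (α + β) u
  induction List.finRange n with
  | nil => rfl
  | cons j L ih =>
    change (pderivDir j)^[α j] (mderivList L α ((pderivDir j)^[β j] (mderivList L β u))) =
      (pderivDir j)^[α j + β j] (mderivList L (α + β) u)
    rw [← pderivDir_iterate_mderivList_comm (contDiff_mderivList hu L β), ih,
      Function.iterate_add_apply]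

section Induction

variable {M : Type*} [CommMonoid M] {p : Fin n → M}
  {R : M → (Dom n → V) → (Dom n → V') → Prop}

theorem pderivDir_iterate_induction
    (step : ∀ c u v j, R c u v → R (c * p j) (pderivDir j u) (pderivDir j v))
    {c : M} {u : Dom n → V} {v : Dom n → V'} (base : R c u v) (j : Fin n) (m : ℕ) :
    R (c * p j ^ m) ((pderivDir j)^[m] u) ((pderivDir j)^[m] v) := by
  induction m with
  | zero => simpa using base
  | succ m ih =>
    rw [Function.iterate_succ_apply', Function.iterate_succ_apply', pow_succ, ← mul_assoc]
    exact step _ _ _ j ih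

theorem mderivList_induction
    (step : ∀ c u v j, R c u v → R (c * p j) (pderivDir j u) (pderivDir j v))
    {c : M} {u : Dom n → V} {v : Dom n → V'} (base : R c u v) (L : List (Fin n))
    (α : Fin n → ℕ) :
    R (c * (L.map fun j => p j ^ α j).prod) (mderivList L α u) (mderivList L α v) := by
  induction L with
  | nil => simpa [mderivList] using base
  | cons j L ih =>
    rw [List.map_cons, List.prod_cons, mul_comm (p j ^ α j), ← mul_assoc]
    exact pderivDir_iterate_induction step ih j (α j)

theorem mderiv_induction
    (step : ∀ c u v j, R c u v → R (c * p j) (pderivDir j u) (pderivDir j v))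
    {c : M} {u : Dom n → V} {v : Dom n → V'} (base : R c u v) (α : Fin n → ℕ) :
    R (c * ∏ j, p j ^ α j) (mderiv α u) (mderiv α v) := by
  have := mderivList_induction step base (List.finRange n) α
  rwa [← List.ofFn_eq_map, List.prod_ofFn] at this

end Induction

theorem mderiv_clm_comp (L : V →L[ℝ] V') {u : Dom n → V} (hu : ContDiff ℝ ∞ u)
    (α : Fin n → ℕ) : mderiv α (fun x => L (u x)) = fun x => L (mderiv α u x) := by
  refine (mderiv_induction (M := ℕ) (p := 1) (c := 1) (u := fun x => L (u x)) (v := u)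
    (R := fun _ f g => ContDiff ℝ ∞ g ∧ f = fun x => L (g x)) ?_ ⟨hu, rfl⟩ α).2
  rintro - f g j ⟨hg, rfl⟩
  refine ⟨contDiff_pderivDir hg j, funext fun x => ?_⟩
  have hL : HasFDerivAt (fun x => L (g x)) (L.comp (fderiv ℝ g x)) x :=
    L.hasFDerivAt.comp x (hg.differentiable (by simp) x).hasFDerivAt
  simp only [pderivDir, hL.fderiv, ContinuousLinearMap.comp_apply]

theorem mderiv_zero (α : Fin n → ℕ) : mderiv α (fun _ : Dom n => (0 : V)) = fun _ => 0 := by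
  simpa using mderiv_clm_comp (n := n) (0 : V →L[ℝ] V) (u := fun _ => 0) contDiff_const α

theorem mderiv_const_smul (c : ℝ) {u : Dom n → V} (hu : ContDiff ℝ ∞ u) (α : Fin n → ℕ) :
    mderiv α (fun x => c • u x) = fun x => c • mderiv α u x := by
  simpa using mderiv_clm_comp (c • ContinuousLinearMap.id ℝ V) hu α

theorem mderiv_add {u v : Dom n → V} (hu : ContDiff ℝ ∞ u) (hv : ContDiff ℝ ∞ v)
    (α : Fin n → ℕ) : mderiv α (fun x => u x + v x) = fun x => mderiv α u x + mderiv α v x := by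
  have huv : ContDiff ℝ ∞ fun x => (u x, v x) := hu.prodMk hv
  have hsum := mderiv_clm_comp (ContinuousLinearMap.fst ℝ V V + ContinuousLinearMap.snd ℝ V V) huv α
  have hfst := mderiv_clm_comp (.fst ℝ V V) huv α
  have hsnd := mderiv_clm_comp (.snd ℝ V V) huv α
  simp only [add_apply, ContinuousLinearMap.coe_fst', ContinuousLinearMap.coe_snd']
    at hsum hfst hsnd
  rw [hsum, hfst, hsnd]

theorem mderiv_finsetSum {ι : Type*} (s : Finset ι) {u : ι → Dom n → V}
    (hu : ∀ i ∈ s, ContDiff ℝ ∞ (u i)) (α : Fin n → ℕ) :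
    mderiv α (fun x => ∑ i ∈ s, u i x) = fun x => ∑ i ∈ s, mderiv α (u i) x := by
  classical
  induction s using Finset.induction_on with
  | empty => simpa using mderiv_zero α
  | insert i s hi ih =>
    have hs : ∀ j ∈ s, ContDiff ℝ ∞ (u j) := fun j hj => hu j (Finset.mem_insert_of_mem hj)
    simp only [Finset.sum_insert hi]
    rw [mderiv_add (hu i (Finset.mem_insert_self i s)) (ContDiff.sum hs), ih hs]

theorem mderiv_comp_smul_add {u : Dom n → V} (hu : ContDiff ℝ ∞ u) (c : ℝ) (b : Dom n)
    (α : Fin n → ℕ) :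
    mderiv α (fun x => u (c • x + b)) = fun x => c ^ (∑ i, α i) • mderiv α u (c • x + b) := by
  have key := mderiv_induction (p := fun _ => c) (c := 1) (u := fun x => u (c • x + b)) (v := u)
    (R := fun a f g => ContDiff ℝ ∞ g ∧ f = fun x => a • g (c • x + b)) ?_ ⟨hu, by simp⟩ α
  · rw [key.2, Finset.prod_pow_eq_pow_sum, one_mul]
  rintro a - g j ⟨hg, rfl⟩
  refine ⟨contDiff_pderivDir hg j, funext fun x => ?_⟩
  have hinner : HasFDerivAt (fun x : Dom n => c • x + b) (c • .id ℝ (Dom n)) x :=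
    ((hasFDerivAt_id x).const_smul c).add_const b
  have houter : HasFDerivAt (fun x => a • g (c • x + b))
      (a • (fderiv ℝ g (c • x + b)).comp (c • .id ℝ (Dom n))) x :=
    ((hg.differentiable (by simp) (c • x + b)).hasFDerivAt.comp x hinner).const_smul a
  simp [pderivDir, houter.fderiv, mul_smul]

theorem mderiv_eventuallyEq {u v : Dom n → V} {x : Dom n} (h : u =ᶠ[𝓝 x] v) (α : Fin n → ℕ) :
    mderiv α u =ᶠ[𝓝 x] mderiv α v := by
  refine mderiv_induction (M := ℕ) (p := 1) (c := 1) (R := fun _ f g => f =ᶠ[𝓝 x] g) ?_ h α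
  intro _ f g j hfg
  filter_upwards [hfg.fderiv (𝕜 := ℝ)] with y hy
  simp [pderivDir, hy]

end MultiIndexDerivatives

section Operators

variable {n : ℕ} {U V W : Type*} [NormedAddCommGroup U] [NormedSpace ℝ U]
  [NormedAddCommGroup V] [NormedSpace ℝ V] [NormedAddCommGroup W] [NormedSpace ℝ W]

theorem sum_eq_of_mem_degSet {k : ℕ} {α : Fin n → ℕ} (h : α ∈ degSet n k) : ∑ i, α i = k :=
  (Finset.mem_filter.1 h).2

section Apply

variable (B : (Fin n → ℕ) → (U →L[ℝ] V)) (l : ℕ)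

theorem contDiff_opApply {u : Dom n → U} (hu : ContDiff ℝ ∞ u) : ContDiff ℝ ∞ (opApply B l u) :=
  ContDiff.sum fun α _ => (B α).contDiff.comp (contDiff_mderiv hu α)

theorem opApply_eventuallyEq {u v : Dom n → U} {x : Dom n} (h : u =ᶠ[𝓝 x] v) :
    opApply B l u =ᶠ[𝓝 x] opApply B l v := by
  have hderiv : ∀ᶠ y in 𝓝 x, ∀ α ∈ degSet n l, mderiv α u y = mderiv α v y :=
    (Filter.eventually_all_finset _).2 fun α _ => mderiv_eventuallyEq h α
  filter_upwards [hderiv] with y hy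
  exact Finset.sum_congr rfl fun α hα => by rw [hy α hα]

theorem opApply_zero : opApply B l (fun _ => (0 : U)) = fun _ => 0 := by
  funext x
  simp [opApply, mderiv_zero]

theorem opApply_eq_zero_of_notMem_tsupport {u : Dom n → U} {x : Dom n} (h : x ∉ tsupport u) :
    opApply B l u x = 0 := by
  rw [(opApply_eventuallyEq B l (notMem_tsupport_iff_eventuallyEq.1 h)).self_of_nhds]
  exact congrFun (opApply_zero B l) x

theorem tsupport_opApply_subset (u : Dom n → U) : tsupport (opApply B l u) ⊆ tsupport u :=
  closure_minimal (fun _ hx => not_imp_comm.1 (opApply_eq_zero_of_notMem_tsupport B l) hx)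
    (isClosed_tsupport u)

theorem opApply_finsetSum {ι : Type*} (s : Finset ι) {u : ι → Dom n → U}
    (hu : ∀ i ∈ s, ContDiff ℝ ∞ (u i)) (x : Dom n) :
    opApply B l (fun x => ∑ i ∈ s, u i x) x = ∑ i ∈ s, opApply B l (u i) x := by
  simp only [opApply, mderiv_finsetSum s hu, map_sum]
  exact Finset.sum_comm

theorem opApply_add {u v : Dom n → U} (hu : ContDiff ℝ ∞ u) (hv : ContDiff ℝ ∞ v)
    (x : Dom n) :
    opApply B l (fun x => u x + v x) x = opApply B l u x + opApply B l v x := by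
  simp only [opApply, mderiv_add hu hv, map_add, Finset.sum_add_distrib]

theorem opApply_const_smul (c : ℝ) {u : Dom n → U} (hu : ContDiff ℝ ∞ u) (x : Dom n) :
    opApply B l (fun x => c • u x) x = c • opApply B l u x := by
  simp only [opApply, mderiv_const_smul c hu, map_smul, Finset.smul_sum]

theorem opApply_comp_smul_add {u : Dom n → U} (hu : ContDiff ℝ ∞ u) {c : ℝ} (hc : c ≠ 0)
    (b x : Dom n) :
    opApply B l (fun x => (c ^ l)⁻¹ • u (c • x + b)) x = opApply B l u (c • x + b) := by
  have hscaled : ContDiff ℝ ∞ fun x => u (c • x + b) :=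
    hu.comp ((contDiff_const_smul c).add contDiff_const)
  rw [opApply_const_smul B l _ hscaled, opApply, opApply, Finset.smul_sum]
  refine Finset.sum_congr rfl fun α hα => ?_
  rw [mderiv_comp_smul_add hu, sum_eq_of_mem_degSet hα, map_smul,
    inv_smul_smul₀ (pow_ne_zero l hc)]

theorem opApply_comp_add_right {u : Dom n → U} (hu : ContDiff ℝ ∞ u) (b x : Dom n) :
    opApply B l (fun x => u (x + b)) x = opApply B l u (x + b) := by
  simpa using opApply_comp_smul_add B l hu one_ne_zero b x

end Apply

variable {A : (Fin n → ℕ) → (V →L[ℝ] W)} {B : (Fin n → ℕ) → (U →L[ℝ] V)} {k l : ℕ}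

theorem opApply_opApply_eq_sum {u : Dom n → U} (hu : ContDiff ℝ ∞ u) (x : Dom n) :
    opApply A k (opApply B l u) x =
      ∑ p ∈ degSet n k ×ˢ degSet n l, A p.1 (B p.2 (mderiv (p.1 + p.2) u x)) := by
  rw [Finset.sum_product]
  refine Finset.sum_congr rfl fun α _ => ?_
  change A α (mderiv α (fun y => ∑ β ∈ degSet n l, B β (mderiv β u y)) x) = _
  rw [mderiv_finsetSum (u := fun β y => B β (mderiv β u y)) _
    fun β _ => (B β).contDiff.comp (contDiff_mderiv hu β), map_sum]
  refine Finset.sum_congr rfl fun β _ => ?_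
  rw [mderiv_clm_comp _ (contDiff_mderiv hu β), mderiv_mderiv hu]

theorem opSymbol_opSymbol_eq_sum (ξ : Dom n) (y : U) :
    opSymbol A k ξ (opSymbol B l ξ y) =
      ∑ p ∈ degSet n k ×ˢ degSet n l, (∏ i, ξ i ^ (p.1 + p.2) i) • A p.1 (B p.2 y) := by
  simp only [opSymbol, sum_apply, smul_apply, map_sum, map_smul, Finset.smul_sum, smul_smul,
    Pi.add_apply, pow_add, Finset.prod_mul_distrib, Finset.sum_product]
  rw [Finset.sum_comm]
  simp only [mul_comm]

theorem opSymbol_zero (hk : 0 < k) : opSymbol A k 0 = 0 := by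
  refine Finset.sum_eq_zero fun α hα => ?_
  obtain ⟨i, -, hi⟩ : ∃ i ∈ Finset.univ, α i ≠ 0 :=
    Finset.exists_ne_zero_of_sum_ne_zero (by rw [sum_eq_of_mem_degSet hα]; exact hk.ne')
  rw [Finset.prod_eq_zero (Finset.mem_univ i) (by simp [hi]), zero_smul]

theorem ExactPotential.opSymbol_opSymbol (h : ExactPotential A k B l) (hk : 0 < k) (ξ : Dom n)
    (y : U) : opSymbol A k ξ (opSymbol B l ξ y) = 0 := by
  rcases eq_or_ne ξ 0 with rfl | hξ
  · rw [opSymbol_zero hk, zero_apply]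
  · have hmem : opSymbol B l ξ y ∈ LinearMap.range (opSymbol B l ξ : U →ₗ[ℝ] V) := ⟨y, rfl⟩
    rwa [← h ξ hξ] at hmem

theorem sum_filter_eq_zero_of_forall_sum_prod_pow_smul_eq_zero {ι σ E : Type*} [Fintype σ]
    [AddCommGroup E] [Module ℝ E] {s : Finset ι} {e : ι → σ → ℕ} {c : ι → E}
    (h : ∀ ξ : σ → ℝ, ∑ p ∈ s, (∏ i, ξ i ^ e p i) • c p = 0) (γ : σ → ℕ) :
    ∑ p ∈ s with e p = γ, c p = 0 := by
  classical
  rw [← Module.forall_dual_apply_eq_zero_iff ℝ]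
  intro φ
  set P : MvPolynomial σ ℝ :=
    ∑ p ∈ s, MvPolynomial.monomial (Finsupp.equivFunOnFinite.symm (e p)) (φ (c p)) with hP
  have hPzero : P = 0 := MvPolynomial.funext fun ξ => by
    have hφ := congrArg φ (h ξ)
    simp only [map_sum, map_smul, smul_eq_mul, map_zero] at hφ
    simp only [hP, map_sum, MvPolynomial.eval_monomial, map_zero, ← hφ]
    refine Finset.sum_congr rfl fun p _ => ?_
    rw [Finsupp.prod_fintype _ _ (by simp), mul_comm]
    simp
  have hcoeff := congrArg (MvPolynomial.coeff (Finsupp.equivFunOnFinite.symm γ)) hPzero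
  simpa [hP, MvPolynomial.coeff_sum, MvPolynomial.coeff_monomial, Finset.sum_filter, apply_ite φ]
    using hcoeff

theorem ExactPotential.opApply_opApply (h : ExactPotential A k B l) (hk : 0 < k)
    {u : Dom n → U} (hu : ContDiff ℝ ∞ u) (x : Dom n) : opApply A k (opApply B l u) x = 0 := by
  rw [opApply_opApply_eq_sum hu,
    ← Finset.sum_fiberwise_of_maps_to fun p hp => Finset.mem_image_of_mem (fun p => p.1 + p.2) hp]
  refine Finset.sum_eq_zero fun γ _ => ?_
  have hγ := sum_filter_eq_zero_of_forall_sum_prod_pow_smul_eq_zero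
    (fun ξ => (opSymbol_opSymbol_eq_sum ξ (mderiv γ u x)).symm.trans (h.opSymbol_opSymbol hk ξ _))
    γ
  rw [← hγ]
  exact Finset.sum_congr rfl fun p hp => by rw [(Finset.mem_filter.1 hp).2]

end Operators

section Cubes

variable {n : ℕ} {E : Type*} [NormedAddCommGroup E] [NormedSpace ℝ E]

theorem measurableSet_unitCube : MeasurableSet (unitCube n) :=
  MeasurableSet.univ_pi fun _ => measurableSet_Ioo

theorem isOpen_unitCube : IsOpen (unitCube n) :=
  isOpen_set_pi Set.finite_univ fun _ _ => isOpen_Ioo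

theorem unitCube_subset_closedUnitCube : unitCube n ⊆ closedUnitCube n :=
  Set.pi_mono fun _ _ => Set.Ioo_subset_Icc_self

theorem isCompact_closedUnitCube : IsCompact (closedUnitCube n) :=
  isCompact_univ_pi fun _ => isCompact_Icc

theorem norm_le_one_of_mem_unitCube {x : Dom n} (hx : x ∈ unitCube n) : ‖x‖ ≤ 1 := by
  rw [pi_norm_le_iff_of_nonneg zero_le_one]
  intro j
  obtain ⟨hlower, hupper⟩ := hx j (Set.mem_univ j)
  rw [Real.norm_eq_abs, abs_le]
  constructor <;> linarith

theorem volume_unitCube : volume (unitCube n) = 1 := by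
  rw [unitCube, volume_pi_pi]
  norm_num

instance isProbabilityMeasure_restrict_unitCube :
    IsProbabilityMeasure (volume.restrict (unitCube n)) :=
  ⟨by rw [Measure.restrict_apply_univ, volume_unitCube]⟩

theorem integrableOn_unitCube_of_continuous {E : Type*} [NormedAddCommGroup E] {F : Dom n → E}
    (h : Continuous F) : IntegrableOn F (unitCube n) :=
  (h.continuousOn.integrableOn_compact isCompact_closedUnitCube).mono_set
    unitCube_subset_closedUnitCube

/-- The half-open unit cube `∏ [aᵢ, aᵢ + 1)`; unlike open cubes, these tile `ℝⁿ` exactly. -/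
def halfOpenCube (a : Dom n) : Set (Dom n) := Set.univ.pi fun i => Set.Ico (a i) (a i + 1)

/-- The lower corner `(-1/2, …, -1/2)` of `unitCube n`. -/
def lowerCorner (n : ℕ) : Dom n := fun _ => -(1 / 2)

theorem measurableSet_halfOpenCube (a : Dom n) : MeasurableSet (halfOpenCube a) :=
  MeasurableSet.univ_pi fun _ => measurableSet_Ico

theorem unitCube_ae_eq_halfOpenCube :
    (unitCube n : Set (Dom n)) =ᵐ[volume] halfOpenCube (lowerCorner n) := by
  have hIoo := Measure.univ_pi_Ioo_ae_eq_Icc (μ := fun _ : Fin n => (volume : Measure ℝ))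
    (f := lowerCorner n) (g := fun i => lowerCorner n i + 1)
  have hIco := Measure.univ_pi_Ico_ae_eq_Icc (μ := fun _ : Fin n => (volume : Measure ℝ))
    (f := lowerCorner n) (g := fun i => lowerCorner n i + 1)
  have hcube : unitCube n =
      Set.univ.pi fun i => Set.Ioo (lowerCorner n i) (lowerCorner n i + 1) := by
    norm_num [unitCube, lowerCorner]
  rw [hcube]
  exact hIoo.trans hIco.symm

section Grid

variable {N : ℕ}

/-- The centre of the `i`-th cell in the subdivision of the unit cube into `N ^ n` equal cubes. -/
def gridCenter (i : Fin n → Fin N) : Dom n := fun j => ((i j : ℝ) + 1 / 2) / N - 1 / 2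

/-- The `i`-th (half-open) cell in the subdivision of the unit cube into `N ^ n` equal cubes. -/
def gridCell (i : Fin n → Fin N) : Set (Dom n) :=
  {x | (N : ℝ) • (x - gridCenter i) ∈ halfOpenCube (lowerCorner n)}

theorem card_grid (n N : ℕ) : (Fintype.card (Fin n → Fin N) : ℝ) = (N : ℝ) ^ n := by
  simp

theorem fin_eq_of_lt_add_one {i i' : Fin N} (h : (i : ℝ) < i' + 1) (h' : (i' : ℝ) < i + 1) :
    i = i' := by
  have hlt : (i : ℕ) < i' + 1 := by exact_mod_cast h
  have hlt' : (i' : ℕ) < i + 1 := by exact_mod_cast h'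
  exact Fin.ext (by omega)

theorem mem_gridCell (hN : 0 < N) (i : Fin n → Fin N) (x : Dom n) :
    x ∈ gridCell i ↔ ∀ j, (N : ℝ) * (x j + 1 / 2) ∈ Set.Ico (i j : ℝ) (i j + 1) := by
  have hN' : (N : ℝ) ≠ 0 := by positivity
  simp only [gridCell, halfOpenCube, lowerCorner, gridCenter, Set.mem_ofPred_eq, Set.mem_univ_pi,
    Set.mem_Ico, Pi.smul_apply, Pi.sub_apply, smul_eq_mul]
  refine forall_congr' fun j => ?_
  have hscale : (N : ℝ) * (x j - (((i j : ℝ) + 1 / 2) / N - 1 / 2)) =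
      N * (x j + 1 / 2) - i j - 1 / 2 := by
    field_simp
    ring
  rw [hscale]
  constructor <;> rintro ⟨_, _⟩ <;> constructor <;> linarith

theorem measurableSet_gridCell (i : Fin n → Fin N) : MeasurableSet (gridCell i) :=
  (by fun_prop : Measurable fun x : Dom n => (N : ℝ) • (x - gridCenter i))
    (measurableSet_halfOpenCube _)

theorem pairwise_disjoint_gridCell (hN : 0 < N) :
    Pairwise (Function.onFun Disjoint (gridCell : (Fin n → Fin N) → Set (Dom n))) := by
  intro i i' hne
  refine Set.disjoint_left.2 fun x hx hx' => hne (funext fun j => ?_)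
  rw [mem_gridCell hN] at hx hx'
  exact fin_eq_of_lt_add_one (by linarith [(hx j).1, (hx' j).2])
    (by linarith [(hx j).2, (hx' j).1])

theorem exists_mem_Ico_fin_iff (hN : 0 < N) (t : ℝ) :
    (∃ i : Fin N, (N : ℝ) * t ∈ Set.Ico (i : ℝ) (i + 1)) ↔ t ∈ Set.Ico (0 : ℝ) 1 := by
  have hNr : (0 : ℝ) < N := by positivity
  constructor
  · rintro ⟨i, hi⟩
    have hile : (i : ℝ) + 1 ≤ N := by exact_mod_cast i.2
    refine ⟨nonneg_of_mul_nonneg_right ((Nat.cast_nonneg _).trans hi.1) hNr, ?_⟩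
    have : (N : ℝ) * t < N * 1 := by linarith [hi.2]
    exact lt_of_mul_lt_mul_left this hNr.le
  · rintro ⟨h0, h1⟩
    have hnonneg : 0 ≤ (N : ℝ) * t := mul_nonneg hNr.le h0
    refine ⟨⟨⌊(N : ℝ) * t⌋₊, (Nat.floor_lt hnonneg).2 ?_⟩, Nat.floor_le hnonneg,
      Nat.lt_floor_add_one _⟩
    simpa using mul_lt_mul_of_pos_left h1 hNr

theorem iUnion_gridCell (hN : 0 < N) :
    ⋃ i : Fin n → Fin N, gridCell i = halfOpenCube (lowerCorner n) := by
  ext x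
  simp only [Set.mem_iUnion, mem_gridCell hN, halfOpenCube, lowerCorner, Set.mem_univ_pi]
  rw [← Classical.skolem (p := fun j (i : Fin N) =>
    (N : ℝ) * (x j + 1 / 2) ∈ Set.Ico (i : ℝ) (i + 1))]
  refine forall_congr' fun j => (exists_mem_Ico_fin_iff hN _).trans ?_
  constructor <;> rintro ⟨_, _⟩ <;> constructor <;> linarith

theorem setIntegral_smul_sub_mem {c : ℝ} (hc : 0 < c) (F : Dom n → E) {s : Set (Dom n)}
    (hs : MeasurableSet s) (b : Dom n) :
    ∫ x in {x | c • (x - b) ∈ s}, F x = (c ^ n)⁻¹ • ∫ y in s, F (b + c⁻¹ • y) := by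
  have hm : MeasurableSet {x : Dom n | c • (x - b) ∈ s} :=
    (by fun_prop : Measurable fun x : Dom n => c • (x - b)) hs
  let G : Dom n → E := s.indicator fun y => F (b + c⁻¹ • y)
  have hG : Set.indicator {x | c • (x - b) ∈ s} F = fun x => G (c • (x - b)) := by
    funext x
    by_cases hx : c • (x - b) ∈ s
    · simp [G, hx, smul_smul, inv_mul_cancel₀ hc.ne']
    · simp [G, hx]
  rw [← integral_indicator hm, ← integral_indicator hs, hG,
    integral_sub_right_eq_self (μ := volume) (fun w => G (c • w)) b,
    Measure.integral_comp_smul_of_nonneg _ _ _ (hR := hc.le)]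
  simp [G]

theorem setIntegral_unitCube_eq_sum_grid (hN : 0 < N) {F : Dom n → E}
    (hF : IntegrableOn F (unitCube n)) :
    ∫ x in unitCube n, F x =
      ∑ i : Fin n → Fin N,
        ((N : ℝ) ^ n)⁻¹ • ∫ y in unitCube n, F (gridCenter i + (N : ℝ)⁻¹ • y) := by
  rw [setIntegral_congr_set unitCube_ae_eq_halfOpenCube, ← iUnion_gridCell hN,
    integral_iUnion_fintype measurableSet_gridCell (pairwise_disjoint_gridCell hN)]
  · refine Finset.sum_congr rfl fun i _ => ?_
    rw [gridCell, setIntegral_smul_sub_mem (by positivity) _ (measurableSet_halfOpenCube _),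
      setIntegral_congr_set unitCube_ae_eq_halfOpenCube]
  · rw [IntegrableOn, Measure.restrict_congr_set unitCube_ae_eq_halfOpenCube,
      ← iUnion_gridCell hN] at hF
    exact fun i => IntegrableOn.mono_set hF (Set.subset_iUnion _ i)

end Grid

section Periodic

/-- The lattice `ℤⁿ ⊆ ℝⁿ`. -/
def integerLattice (n : ℕ) : AddSubgroup (Dom n) :=
  ((Int.castAddHom ℝ).compLeft (Fin n)).range

instance : Countable (integerLattice n) :=
  (Set.countable_range ((Int.castAddHom ℝ).compLeft (Fin n))).to_subtype

theorem isAddFundamentalDomain_halfOpenCube (a : Dom n) :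
    IsAddFundamentalDomain (integerLattice n) (halfOpenCube a) volume := by
  refine IsAddFundamentalDomain.mk' (measurableSet_halfOpenCube a).nullMeasurableSet fun x => ?_
  have hx : ∀ i, ∃! m : ℤ, (m : ℝ) + x i ∈ Set.Ico (a i) (a i + 1) := fun i => by
    simpa [add_comm] using existsUnique_add_zsmul_mem_Ico one_pos (x i) (a i)
  choose m hm hunique using hx
  refine ⟨⟨fun i => (m i : ℝ), ⟨m, rfl⟩⟩, fun i _ => hm i, ?_⟩
  rintro ⟨_, ⟨m', rfl⟩⟩ hm'
  have : m' = m := funext fun i => hunique i (m' i) (hm' i (Set.mem_univ i))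
  subst this
  rfl

theorem setIntegral_halfOpenCube_comp_add_right (g : Dom n → E) (a b : Dom n) :
    ∫ x in halfOpenCube a, g (x + b) = ∫ x in halfOpenCube (a + b), g x := by
  have hpre : (· + b) ⁻¹' halfOpenCube (a + b) = halfOpenCube a := by
    ext x
    simp only [halfOpenCube, Set.mem_preimage, Set.mem_univ_pi, Set.mem_Ico, Pi.add_apply]
    refine forall_congr' fun j => ?_
    constructor <;> rintro ⟨_, _⟩ <;> constructor <;> linarith
  rw [← hpre]
  exact (measurePreserving_add_right volume b).setIntegral_preimage_emb
    (measurableEmbedding_addRight b) g _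

namespace ZPeriodic

theorem setIntegral_comp_add_right {g : Dom n → E} (hg : ZPeriodic g) (b : Dom n) :
    ∫ x in unitCube n, g (x + b) = ∫ x in unitCube n, g x := by
  simp only [setIntegral_congr_set unitCube_ae_eq_halfOpenCube,
    setIntegral_halfOpenCube_comp_add_right]
  refine (isAddFundamentalDomain_halfOpenCube _).setIntegral_eq
    (isAddFundamentalDomain_halfOpenCube _) ?_
  rintro ⟨_, ⟨m, rfl⟩⟩ x
  exact (congrArg g (add_comm _ _)).trans (hg x m)

theorem exists_norm_le {E : Type*} [NormedAddCommGroup E] {g : Dom n → E} (hg : ZPeriodic g)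
    (hc : Continuous g) : ∃ C : ℝ, 0 ≤ C ∧ ∀ x, ‖g x‖ ≤ C := by
  obtain ⟨C, hC⟩ := isCompact_closedUnitCube.exists_bound_of_continuousOn hc.continuousOn
    (s := closedUnitCube n)
  refine ⟨max C 0, le_max_right _ _, fun x => ?_⟩
  rw [← hg x fun i => -round (x i)]
  refine (hC _ fun i _ => ?_).trans (le_max_left _ _)
  have hround := abs_le.1 (abs_sub_round (x i))
  simp only [Pi.add_apply, Set.mem_Icc, Int.cast_neg]
  constructor <;> linarith [hround.1, hround.2]

protected theorem pderivDir {g : Dom n → E} (hg : ZPeriodic g) (j : Fin n) :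
    ZPeriodic (pderivDir j g) := by
  intro x m
  have hshift : (fun y => g (y + fun i => (m i : ℝ))) = g := funext fun y => hg y m
  rw [_root_.pderivDir, ← fderiv_comp_add_right, hshift, _root_.pderivDir]

end ZPeriodic

theorem hasDerivAt_comp_add_smul_single {g : Dom n → E} (hg : ContDiff ℝ ∞ g) (j : Fin n)
    (x : Dom n) (t : ℝ) :
    HasDerivAt (fun t : ℝ => g (x + t • Pi.single j 1))
      (pderivDir j g (x + t • Pi.single j 1)) t := by
  have hline : HasDerivAt (fun t : ℝ => x + t • (Pi.single j 1 : Dom n)) (Pi.single j 1) t := by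
    simpa using ((hasDerivAt_id t).smul_const (Pi.single j 1 : Dom n)).const_add x
  exact (hg.differentiable (by simp) _).hasFDerivAt.comp_hasDerivAt t hline

-- The integrals of the translates of `g` are constant; differentiate them.
theorem ZPeriodic.setIntegral_pderivDir {g : Dom n → E} (hg : ZPeriodic g)
    (hs : ContDiff ℝ ∞ g) (j : Fin n) : ∫ x in unitCube n, pderivDir j g x = 0 := by
  have hsj : Continuous (pderivDir j g) := (contDiff_pderivDir hs j).continuous
  obtain ⟨C, -, hC⟩ := (hg.pderivDir j).exists_norm_le hsj
  have hderiv := (hasDerivAt_integral_of_dominated_loc_of_deriv_le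
    (μ := volume.restrict (unitCube n)) (F := fun t x => g (x + t • Pi.single j 1))
    (x₀ := (0 : ℝ)) (s := Set.univ) (F' := fun t x => pderivDir j g (x + t • Pi.single j 1))
    (bound := fun _ => C) Filter.univ_mem
    (Eventually.of_forall fun t => (hs.continuous.comp (by fun_prop)).aestronglyMeasurable)
    (integrableOn_unitCube_of_continuous (hs.continuous.comp (by fun_prop)))
    (hsj.comp (by fun_prop)).aestronglyMeasurable
    (Eventually.of_forall fun x t _ => hC _) (integrable_const C)
    (Eventually.of_forall fun x t _ => hasDerivAt_comp_add_smul_single hs j x t)).2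
  simp only [hg.setIntegral_comp_add_right, zero_smul, add_zero] at hderiv
  exact hderiv.unique (hasDerivAt_const _ _)

end Periodic

section CompactSupport

theorem integral_pderivDir_of_hasCompactSupport {u : Dom n → E} (hs : ContDiff ℝ ∞ u)
    (hc : HasCompactSupport u) (j : Fin n) : ∫ x, pderivDir j u x = 0 := by
  have hint : Integrable (fun x => fderiv ℝ u x (Pi.single j 1)) volume :=
    (contDiff_pderivDir hs j).continuous.integrable_of_hasCompactSupport
      (hc.fderiv_apply (𝕜 := ℝ) (Pi.single j 1))
  have hparts := integral_smul_fderiv_eq_neg_fderiv_smul_of_integrable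
    (μ := (volume : Measure (Dom n))) (f := fun _ => (1 : ℝ)) (g := u) (v := Pi.single j 1)
    (by simp) (by simpa using hint)
    (by simpa using hs.continuous.integrable_of_hasCompactSupport hc)
    (fun _ _ => differentiableAt_const _) (fun x _ => hs.differentiable (by simp) x)
  simpa [pderivDir] using hparts

theorem hasCompactSupport_mderiv {u : Dom n → E} (hc : HasCompactSupport u) (α : Fin n → ℕ) :
    HasCompactSupport (mderiv α u) :=
  mderiv_induction (M := ℕ) (p := 1) (c := 1) (v := u)
    (R := fun _ (f : Dom n → E) (_ : Dom n → E) => HasCompactSupport f)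
    (fun _ _ _ j hf => hf.fderiv_apply (𝕜 := ℝ) (Pi.single j 1)) hc α

theorem integral_mderiv_of_hasCompactSupport {u : Dom n → E} (hs : ContDiff ℝ ∞ u)
    (hc : HasCompactSupport u) {α : Fin n → ℕ} (hα : α ≠ 0) : ∫ x, mderiv α u x = 0 := by
  have key := mderiv_induction (p := fun _ => Multiplicative.ofAdd 1) (c := 1) (u := u) (v := u)
    (R := fun (c : Multiplicative ℕ) (f _ : Dom n → E) =>
      ContDiff ℝ ∞ f ∧ HasCompactSupport f ∧ (c ≠ 1 → ∫ x, f x = 0))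
    (fun _ _ _ j hf => ⟨contDiff_pderivDir hf.1 j, hf.2.1.fderiv_apply (𝕜 := ℝ) (Pi.single j 1),
      fun _ => integral_pderivDir_of_hasCompactSupport hf.1 hf.2.1 j⟩)
    ⟨hs, hc, fun h => absurd rfl h⟩ α
  refine key.2.2 fun hdeg => hα (funext fun i => ?_)
  rw [Finset.prod_pow_eq_pow_sum, one_mul, ← ofAdd_nsmul, ofAdd_eq_one] at hdeg
  simpa using (Finset.sum_eq_zero_iff.1 (by simpa using hdeg)) i (Finset.mem_univ i)

theorem CcSmooth.setIntegral_opApply {U V : Type*} [NormedAddCommGroup U] [NormedSpace ℝ U]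
    [NormedAddCommGroup V] [NormedSpace ℝ V] (B : (Fin n → ℕ) → (U →L[ℝ] V)) {l : ℕ}
    (hl : 0 < l) {Ω : Set (Dom n)} {u : Dom n → U} (hu : CcSmooth Ω u) :
    ∫ x in Ω, opApply B l u x = 0 := by
  obtain ⟨hs, hc, hΩ⟩ := hu
  rw [setIntegral_eq_integral_of_forall_compl_eq_zero fun x hx =>
    opApply_eq_zero_of_notMem_tsupport B l fun h => hx (hΩ h)]
  have hBs : ∀ α, ContDiff ℝ ∞ fun x => B α (u x) := fun α => (B α).contDiff.comp hs
  have hBc : ∀ α, HasCompactSupport fun x => B α (u x) := fun α => hc.comp_left (map_zero _)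
  have hop : ∀ x, opApply B l u x = ∑ α ∈ degSet n l, mderiv α (fun x => B α (u x)) x :=
    fun x => Finset.sum_congr rfl fun α _ => by rw [mderiv_clm_comp _ hs]
  simp only [hop]
  rw [integral_finsetSum _ fun α _ => (contDiff_mderiv (hBs α) α).continuous
    |>.integrable_of_hasCompactSupport (hasCompactSupport_mderiv (hBc α) α)]
  refine Finset.sum_eq_zero fun α hα => integral_mderiv_of_hasCompactSupport (hBs α) (hBc α) ?_
  rintro rfl
  have := sum_eq_of_mem_degSet hα
  simp only [Pi.zero_apply, Finset.sum_const_zero] at this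
  omega

end CompactSupport

end Cubes

section Gluing

variable {n : ℕ} {V U : Type*} [NormedAddCommGroup V] [NormedSpace ℝ V]
  [NormedAddCommGroup U] [NormedSpace ℝ U] {N l : ℕ}

/-- The copy `N^{-l} u(N (x - c))` of `u` shrunk by the factor `N` and centred at `c`. An operator
of order `l` takes the same values on it as on `u`. -/
def shrink (N l : ℕ) (c : Dom n) (u : Dom n → U) : Dom n → U :=
  fun x => ((N : ℝ) ^ l)⁻¹ • u ((N : ℝ) • x + -((N : ℝ) • c))

/-- The sum of shrunken copies of the functions `u i`, one in each cell of the grid. -/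
def glue (N l : ℕ) (u : (Fin n → Fin N) → Dom n → U) : Dom n → U :=
  fun x => ∑ i, shrink N l (gridCenter i) (u i) x

theorem contDiff_shrink {c : Dom n} {u : Dom n → U} (h : ContDiff ℝ ∞ u) :
    ContDiff ℝ ∞ (shrink N l c u) :=
  ContDiff.const_smul _ (h.comp ((contDiff_const_smul _).add contDiff_const))

theorem support_shrink_subset (hN : 0 < N) (c : Dom n) (u : Dom n → U) :
    Function.support (shrink N l c u) ⊆ (fun y => c + (N : ℝ)⁻¹ • y) '' tsupport u := by
  have hNr : (N : ℝ) ≠ 0 := by positivity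
  refine fun x hx => ⟨(N : ℝ) • x + -((N : ℝ) • c), subset_tsupport _ fun hu => hx ?_, ?_⟩
  · simp [shrink, hu]
  · simp [smul_smul, hNr]

theorem gridCenter_add_smul_mem_unitCube (hN : 0 < N) (i : Fin n → Fin N) {y : Dom n}
    (hy : y ∈ unitCube n) : gridCenter i + (N : ℝ)⁻¹ • y ∈ unitCube n := by
  have hNr : (0 : ℝ) < N := by positivity
  intro j _
  obtain ⟨hlower, hupper⟩ := hy j (Set.mem_univ j)
  have hile : (i j : ℝ) + 1 ≤ N := by exact_mod_cast (i j).2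
  have hcoord : (gridCenter i + (N : ℝ)⁻¹ • y) j = ((i j : ℝ) + 1 / 2 + y j) / N - 1 / 2 := by
    simp only [gridCenter, Pi.add_apply, Pi.smul_apply, smul_eq_mul]
    field_simp
    ring
  have hpos : 0 < ((i j : ℝ) + 1 / 2 + y j) / N :=
    div_pos (by linarith [(i j : ℕ).cast_nonneg (α := ℝ)]) hNr
  have hlt : ((i j : ℝ) + 1 / 2 + y j) / N < 1 := by rw [div_lt_one hNr]; linarith
  rw [hcoord]
  constructor <;> linarith

theorem CcSmooth.shrink (hN : 0 < N) (i : Fin n → Fin N) {u : Dom n → U}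
    (h : CcSmooth (unitCube n) u) : CcSmooth (unitCube n) (shrink N l (gridCenter i) u) := by
  have hK : IsCompact ((fun y => gridCenter i + (N : ℝ)⁻¹ • y) '' tsupport u) :=
    h.2.1.isCompact.image (by fun_prop)
  refine ⟨contDiff_shrink h.1,
    HasCompactSupport.of_support_subset_isCompact hK (support_shrink_subset hN _ u),
    (closure_minimal (support_shrink_subset hN _ u) hK.isClosed).trans ?_⟩
  rintro _ ⟨y, hy, rfl⟩
  exact gridCenter_add_smul_mem_unitCube hN i (h.2.2 hy)

theorem ccSmooth_zero (Ω : Set (Dom n)) : CcSmooth Ω (fun _ => 0 : Dom n → U) :=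
  ⟨contDiff_const, HasCompactSupport.zero, by simp [tsupport]⟩

theorem CcSmooth.add {Ω : Set (Dom n)} {u v : Dom n → U} (hu : CcSmooth Ω u) (hv : CcSmooth Ω v) :
    CcSmooth Ω fun x => u x + v x :=
  ⟨hu.1.add hv.1, hu.2.1.add hv.2.1, (tsupport_add u v).trans (Set.union_subset hu.2.2 hv.2.2)⟩

theorem ccSmooth_finsetSum {ι : Type*} {Ω : Set (Dom n)} {u : ι → Dom n → U} (s : Finset ι)
    (hu : ∀ i ∈ s, CcSmooth Ω (u i)) : CcSmooth Ω fun x => ∑ i ∈ s, u i x := by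
  classical
  induction s using Finset.induction_on with
  | empty => simpa using ccSmooth_zero Ω
  | insert a s ha ih =>
    simp only [Finset.sum_insert ha]
    exact (hu a (Finset.mem_insert_self a s)).add
      (ih fun i hi => hu i (Finset.mem_insert_of_mem hi))

theorem ccSmooth_glue (hN : 0 < N) {u : (Fin n → Fin N) → Dom n → U}
    (h : ∀ i, CcSmooth (unitCube n) (u i)) : CcSmooth (unitCube n) (glue N l u) :=
  ccSmooth_finsetSum _ fun i _ => (h i).shrink hN i

theorem opApply_shrink (B : (Fin n → ℕ) → (U →L[ℝ] V)) (hN : 0 < N) (i i' : Fin n → Fin N)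
    {u : Dom n → U} (hu : ContDiff ℝ ∞ u) (y : Dom n) :
    opApply B l (shrink N l (gridCenter i') u) (gridCenter i + (N : ℝ)⁻¹ • y) =
      opApply B l u (fun j => y j + (i j : ℝ) - (i' j : ℝ)) := by
  have hNr : (N : ℝ) ≠ 0 := by positivity
  unfold shrink
  rw [opApply_comp_smul_add B l hu hNr]
  congr 1
  funext j
  simp only [gridCenter, Pi.add_apply, Pi.smul_apply, Pi.neg_apply, smul_eq_mul]
  field_simp
  ring

theorem opApply_glue (B : (Fin n → ℕ) → (U →L[ℝ] V)) (hN : 0 < N)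
    {u : (Fin n → Fin N) → Dom n → U} (h : ∀ i, CcSmooth (unitCube n) (u i))
    (i : Fin n → Fin N) {y : Dom n} (hy : y ∈ unitCube n) :
    opApply B l (glue N l u) (gridCenter i + (N : ℝ)⁻¹ • y) = opApply B l (u i) y := by
  unfold glue
  rw [opApply_finsetSum B l _ fun i _ => contDiff_shrink (h i).1, Finset.sum_eq_single i]
  · rw [opApply_shrink B hN i i (h i).1]
    simp
  · intro i' _ hne
    rw [opApply_shrink B hN i i' (h i').1]
    refine opApply_eq_zero_of_notMem_tsupport B l fun hmem => hne (funext fun j => ?_)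
    obtain ⟨hshift, hshift'⟩ := (h i').2.2 hmem j (Set.mem_univ j)
    obtain ⟨hyj, hyj'⟩ := hy j (Set.mem_univ j)
    exact fin_eq_of_lt_add_one (by linarith) (by linarith)
  · simp

theorem setIntegral_opApply_glue (B : (Fin n → ℕ) → (U →L[ℝ] V)) (hN : 0 < N)
    {u : (Fin n → Fin N) → Dom n → U} (h : ∀ i, CcSmooth (unitCube n) (u i))
    {H : Dom n → V → ℝ} (hH : Continuous fun p : Dom n × V => H p.1 p.2) :
    ∫ x in unitCube n, H x (opApply B l (glue N l u) x) =
      ∑ i, ((N : ℝ) ^ n)⁻¹ *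
        ∫ y in unitCube n, H (gridCenter i + (N : ℝ)⁻¹ • y) (opApply B l (u i) y) := by
  have hc : Continuous fun x => H x (opApply B l (glue N l u) x) :=
    hH.comp (continuous_id.prodMk (contDiff_opApply B l (ccSmooth_glue hN h).1).continuous)
  rw [setIntegral_unitCube_eq_sum_grid hN (integrableOn_unitCube_of_continuous hc)]
  refine Finset.sum_congr rfl fun i _ => ?_
  rw [smul_eq_mul]
  congr 1
  refine setIntegral_congr_fun measurableSet_unitCube fun y hy => ?_
  rw [opApply_glue B hN h i hy]

section Sobolev

theorem sobNorm_nonneg (l : ℕ) (u : Dom n → U) : 0 ≤ sobNorm l u :=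
  Finset.sum_nonneg fun _ _ => integral_nonneg fun _ => norm_nonneg _

theorem CcSmooth.integrable_iteratedFDeriv {Ω : Set (Dom n)} {u : Dom n → U} (h : CcSmooth Ω u)
    (j : ℕ) : Integrable (iteratedFDeriv ℝ j u) :=
  (h.1.continuous_iteratedFDeriv (by exact_mod_cast le_top)).integrable_of_hasCompactSupport
    (h.2.1.iteratedFDeriv j)

theorem norm_iteratedFDeriv_shrink (j : ℕ) {u : Dom n → U} (h : ContDiff ℝ ∞ u) (c x : Dom n) :
    ‖iteratedFDeriv ℝ j (shrink N l c u) x‖ =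
      ((N : ℝ) ^ l)⁻¹ * (N : ℝ) ^ j * ‖iteratedFDeriv ℝ j u ((N : ℝ) • (x + -c))‖ := by
  have hu : ContDiff ℝ j u := h.of_le (by exact_mod_cast le_top)
  have hscaled : ContDiff ℝ j fun w => u ((N : ℝ) • w) := hu.comp (contDiff_const_smul _)
  have hmoved : ContDiff ℝ j fun y => (fun w => u ((N : ℝ) • w)) (y + -c) :=
    hscaled.comp (contDiff_id.add contDiff_const)
  have hshrink : shrink N l c u =
      fun x => ((N : ℝ) ^ l)⁻¹ • (fun y => (fun w => u ((N : ℝ) • w)) (y + -c)) x := by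
    funext x
    simp [shrink]
  rw [hshrink, iteratedFDeriv_const_smul_apply' hmoved.contDiffAt,
    iteratedFDeriv_comp_add_right (f := fun w => u ((N : ℝ) • w)),
    iteratedFDeriv_comp_const_smul _ hu, norm_smul, norm_smul, norm_inv, norm_pow, norm_pow,
    Real.norm_natCast, mul_assoc]

theorem integral_norm_iteratedFDeriv_shrink (j : ℕ) {u : Dom n → U} (h : ContDiff ℝ ∞ u)
    (c : Dom n) :
    ∫ x, ‖iteratedFDeriv ℝ j (shrink N l c u) x‖ =
      ((N : ℝ) ^ l)⁻¹ * (N : ℝ) ^ j * (((N : ℝ) ^ n)⁻¹ * ∫ x, ‖iteratedFDeriv ℝ j u x‖) := by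
  simp only [norm_iteratedFDeriv_shrink j h]
  rw [integral_const_mul, integral_add_right_eq_self (μ := volume)
    (fun y => ‖iteratedFDeriv ℝ j u ((N : ℝ) • y)‖) (-c),
    Measure.integral_comp_smul_of_nonneg volume (fun w => ‖iteratedFDeriv ℝ j u w‖) _
      (hR := N.cast_nonneg)]
  simp

theorem integral_norm_iteratedFDeriv_glue_le (hN : 0 < N) (j : ℕ) {u : Dom n → U}
    (h : CcSmooth (unitCube n) u) :
    ∫ x, ‖iteratedFDeriv ℝ j (glue N l fun _ : Fin n → Fin N => u) x‖ ≤
      ((N : ℝ) ^ l)⁻¹ * (N : ℝ) ^ j * ∫ x, ‖iteratedFDeriv ℝ j u x‖ := by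
  have hint (i : Fin n → Fin N) :
      Integrable fun x => ‖iteratedFDeriv ℝ j (shrink N l (gridCenter i) u) x‖ :=
    ((h.shrink hN i).integrable_iteratedFDeriv j).norm
  calc ∫ x, ‖iteratedFDeriv ℝ j (glue N l fun _ : Fin n → Fin N => u) x‖
      ≤ ∫ x, ∑ i : Fin n → Fin N, ‖iteratedFDeriv ℝ j (shrink N l (gridCenter i) u) x‖ := by
        refine integral_mono_of_nonneg (Eventually.of_forall fun _ => norm_nonneg _)
          (integrable_finsetSum _ fun i _ => hint i) (Eventually.of_forall fun x => ?_)
        unfold glue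
        beta_reduce
        rw [iteratedFDeriv_fun_sum_apply fun _ _ =>
          ((contDiff_shrink h.1).of_le (by exact_mod_cast le_top)).contDiffAt]
        exact norm_sum_le _ _
    _ = ∑ _i : Fin n → Fin N, ((N : ℝ) ^ l)⁻¹ * (N : ℝ) ^ j *
          (((N : ℝ) ^ n)⁻¹ * ∫ x, ‖iteratedFDeriv ℝ j u x‖) := by
        rw [integral_finsetSum _ fun i _ => hint i]
        exact Finset.sum_congr rfl fun i _ => integral_norm_iteratedFDeriv_shrink j h.1 _
    _ = ((N : ℝ) ^ l)⁻¹ * (N : ℝ) ^ j * ∫ x, ‖iteratedFDeriv ℝ j u x‖ := by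
        have hNn : (N : ℝ) ^ n ≠ 0 := by positivity
        rw [Finset.sum_const, nsmul_eq_mul, Finset.card_univ, card_grid]
        field_simp

theorem sobNorm_glue_le (hN : 0 < N) {u : Dom n → U} (h : CcSmooth (unitCube n) u) :
    sobNorm l (glue N l fun _ : Fin n → Fin N => u) ≤ (N : ℝ)⁻¹ * sobNorm l u := by
  have hNr : (0 : ℝ) < N := by positivity
  unfold sobNorm
  rw [Finset.mul_sum]
  refine Finset.sum_le_sum fun j hj => (integral_norm_iteratedFDeriv_glue_le hN j h).trans ?_
  refine mul_le_mul_of_nonneg_right ?_ (integral_nonneg fun _ => norm_nonneg _)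
  rw [inv_mul_le_iff₀ (by positivity), ← div_eq_mul_inv, le_div_iff₀ hNr, ← pow_succ]
  exact pow_le_pow_right₀ (by exact_mod_cast hN) (Finset.mem_range.1 hj)

end Sobolev

end Gluing

section UnitCubeEstimates

variable {n : ℕ} {V : Type*} [NormedAddCommGroup V]

theorem setIntegral_unitCube_le_add {F G : Dom n → ℝ} (hF : Continuous F) (hG : Continuous G)
    {c : ℝ} (h : ∀ x ∈ unitCube n, F x ≤ G x + c) :
    ∫ x in unitCube n, F x ≤ (∫ x in unitCube n, G x) + c := by
  have hsum : ∫ x in unitCube n, (G x + c) = (∫ x in unitCube n, G x) + c := by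
    rw [integral_add (integrableOn_unitCube_of_continuous hG) (integrable_const c)]
    simp
  rw [← hsum]
  exact setIntegral_mono_on (integrableOn_unitCube_of_continuous hF)
    (integrableOn_unitCube_of_continuous (hG.add continuous_const)) measurableSet_unitCube h

theorem exists_grid_norm_sub_le {g : Dom n → V} (hg : UniformContinuous g) {ε : ℝ} (hε : 0 < ε) :
    ∃ N : ℕ, 0 < N ∧ ∀ i : Fin n → Fin N, ∀ x ∈ unitCube n,
      ‖g (gridCenter i + (N : ℝ)⁻¹ • x) - g (gridCenter i)‖ ≤ ε := by
  obtain ⟨δ, hδ, hgδ⟩ := Metric.uniformContinuous_iff.1 hg ε hε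
  obtain ⟨N, hN⟩ := exists_nat_gt (1 / δ)
  have hNr : (0 : ℝ) < N := lt_trans (by positivity) hN
  refine ⟨N, by exact_mod_cast hNr, fun i x hx => ?_⟩
  rw [← dist_eq_norm]
  refine (hgδ ?_).le
  rw [dist_eq_norm, add_sub_cancel_left, norm_smul, norm_inv, Real.norm_natCast]
  calc (N : ℝ)⁻¹ * ‖x‖ ≤ (N : ℝ)⁻¹ * 1 := by
        gcongr
        exact norm_le_one_of_mem_unitCube hx
    _ < δ := by rwa [mul_one, inv_lt_comm₀ hNr hδ, ← one_div]

theorem le_setIntegral_add {Φ : V → ℝ} {L : NNReal} (h : LipschitzWith L Φ) {g : Dom n → V}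
    (hg : Continuous g) {w y : V} {ε : ℝ} (hclose : ∀ x ∈ unitCube n, ‖g x - w‖ ≤ ε) :
    Φ (y + w) ≤ (∫ x in unitCube n, Φ (y + g x)) + L * ε := by
  have hΦ := h.continuous
  have hconst : ∫ _ in unitCube n, Φ (y + w) = Φ (y + w) := by simp
  rw [← hconst]
  refine setIntegral_unitCube_le_add (by fun_prop) (by fun_prop) fun x hx => ?_
  refine (h.le_add_mul _ (y + g x)).trans ?_
  rw [dist_add_left, dist_comm, dist_eq_norm]
  gcongr
  exact hclose x hx

end UnitCubeEstimates

section QuasiconvexEnvelope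

variable {n : ℕ} {V U : Type*} [NormedAddCommGroup V] [NormedSpace ℝ V]
  [NormedAddCommGroup U] [NormedSpace ℝ U]

/-- The energy `∫ Φ(y + ℬu)` over the unit cube. -/
def cubeIntegral (B : (Fin n → ℕ) → (U →L[ℝ] V)) (l : ℕ) (Φ : V → ℝ) (y : V) (u : Dom n → U) : ℝ :=
  ∫ x in unitCube n, Φ (y + opApply B l u x)

/-- The quasiconvex envelope of `Φ` with respect to test functions `ℬu`, `u ∈ C_c^∞`. It is
meaningful only under `CubeIntegralsBddBelow`, because `⨅` is `0` on unbounded families. -/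
def qcEnvelope (B : (Fin n → ℕ) → (U →L[ℝ] V)) (l : ℕ) (Φ : V → ℝ) (y : V) : ℝ :=
  ⨅ u : {u : Dom n → U // CcSmooth (unitCube n) u}, cubeIntegral B l Φ y u.1

/-- At every base point the energies of compactly supported test functions are bounded below. -/
def CubeIntegralsBddBelow (B : (Fin n → ℕ) → (U →L[ℝ] V)) (l : ℕ) (Φ : V → ℝ) : Prop :=
  ∀ y, BddBelow (Set.range fun u : {u : Dom n → U // CcSmooth (unitCube n) u} =>
    cubeIntegral B l Φ y u.1)

instance nonempty_ccSmooth : Nonempty {u : Dom n → U // CcSmooth (unitCube n) u} :=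
  ⟨⟨_, ccSmooth_zero _⟩⟩

variable {B : (Fin n → ℕ) → (U →L[ℝ] V)} {l : ℕ} {Φ : V → ℝ} {L : NNReal}

theorem hasCompactSupport_opApply {u : Dom n → U} (hu : HasCompactSupport u) :
    HasCompactSupport (opApply B l u) :=
  hu.mono' ((subset_tsupport _).trans (tsupport_opApply_subset B l u))

theorem CcSmooth.uniformContinuous_opApply {Ω : Set (Dom n)} {u : Dom n → U} (hu : CcSmooth Ω u) :
    UniformContinuous (opApply B l u) :=
  (contDiff_opApply B l hu.1).continuous.uniformContinuous_of_tendsto_cocompact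
    (hasCompactSupport_opApply hu.2.1).is_zero_at_infty

theorem cubeIntegral_le_add_mul_norm (h : LipschitzWith L Φ) (a b : V) {u : Dom n → U}
    (hu : ContDiff ℝ ∞ u) : cubeIntegral B l Φ a u ≤ cubeIntegral B l Φ b u + L * ‖a - b‖ := by
  have hBu := (contDiff_opApply B l hu).continuous
  have hΦ := h.continuous
  refine setIntegral_unitCube_le_add (by fun_prop) (by fun_prop) fun x _ => ?_
  simpa [dist_eq_norm] using h.le_add_mul (a + opApply B l u x) (b + opApply B l u x)

theorem cubeIntegralsBddBelow_of_forall_le (h : LipschitzWith L Φ) {z : V} {s : ℝ}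
    (hs : ∀ u, CcSmooth (unitCube n) u → s ≤ cubeIntegral B l Φ z u) :
    CubeIntegralsBddBelow B l Φ := by
  refine fun y => ⟨s - L * ‖z - y‖, ?_⟩
  rintro _ ⟨u, rfl⟩
  linarith [hs u.1 u.2, cubeIntegral_le_add_mul_norm (B := B) (l := l) h z y u.2.1]

theorem le_qcEnvelope {z : V} {s : ℝ}
    (hs : ∀ u, CcSmooth (unitCube n) u → s ≤ cubeIntegral B l Φ z u) : s ≤ qcEnvelope B l Φ z :=
  le_ciInf fun u => hs u.1 u.2

theorem exists_cubeIntegral_lt_qcEnvelope_add (B : (Fin n → ℕ) → (U →L[ℝ] V)) (l : ℕ)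
    (Φ : V → ℝ) (y : V) {ε : ℝ} (hε : 0 < ε) :
    ∃ u : Dom n → U, CcSmooth (unitCube n) u ∧
      cubeIntegral B l Φ y u < qcEnvelope B l Φ y + ε := by
  obtain ⟨u, hu⟩ := exists_lt_of_ciInf_lt (lt_add_of_pos_right (qcEnvelope B l Φ y) hε)
  exact ⟨u.1, u.2, hu⟩

namespace CubeIntegralsBddBelow

theorem qcEnvelope_le_cubeIntegral (hb : CubeIntegralsBddBelow B l Φ) (y : V) {u : Dom n → U}
    (hu : CcSmooth (unitCube n) u) : qcEnvelope B l Φ y ≤ cubeIntegral B l Φ y u :=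
  ciInf_le (hb y) ⟨u, hu⟩

theorem qcEnvelope_le_self (hb : CubeIntegralsBddBelow B l Φ) (y : V) :
    qcEnvelope B l Φ y ≤ Φ y := by
  refine (hb.qcEnvelope_le_cubeIntegral y (ccSmooth_zero _)).trans_eq ?_
  simp [cubeIntegral, opApply_zero]

theorem lipschitzWith_qcEnvelope (hb : CubeIntegralsBddBelow B l Φ) (h : LipschitzWith L Φ) :
    LipschitzWith L (qcEnvelope B l Φ) := by
  refine LipschitzWith.of_le_add_mul _ fun a b => le_of_forall_pos_le_add fun ε hε => ?_
  obtain ⟨u, hu, hlt⟩ := exists_cubeIntegral_lt_qcEnvelope_add B l Φ b hε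
  rw [dist_eq_norm]
  linarith [hb.qcEnvelope_le_cubeIntegral a hu,
    cubeIntegral_le_add_mul_norm (B := B) (l := l) h a b hu.1]

end CubeIntegralsBddBelow

theorem cubeIntegral_add_glue (hΦ : Continuous Φ) (y : V) {N : ℕ} (hN : 0 < N) {u : Dom n → U}
    (hu : CcSmooth (unitCube n) u) {v : (Fin n → Fin N) → Dom n → U}
    (hv : ∀ i, CcSmooth (unitCube n) (v i)) :
    cubeIntegral B l Φ y (fun x => u x + glue N l v x) =
      ∑ i, ((N : ℝ) ^ n)⁻¹ * ∫ x in unitCube n,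
        Φ (y + opApply B l u (gridCenter i + (N : ℝ)⁻¹ • x) + opApply B l (v i) x) := by
  have hBu := (contDiff_opApply B l hu.1).continuous
  rw [← setIntegral_opApply_glue B hN hv (H := fun x w => Φ (y + opApply B l u x + w))
    (by fun_prop)]
  refine integral_congr_ae (Eventually.of_forall fun x => ?_)
  beta_reduce
  rw [opApply_add B l hu.1 (ccSmooth_glue hN hv).1, add_assoc]

theorem setIntegral_add_opApply_le (h : LipschitzWith L Φ) {v : Dom n → U}
    (hv : ContDiff ℝ ∞ v) {g : Dom n → V} (hg : Continuous g) {w y : V} {ε : ℝ}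
    (hclose : ∀ x ∈ unitCube n, ‖g x - w‖ ≤ ε) :
    ∫ x in unitCube n, Φ (y + g x + opApply B l v x) ≤ cubeIntegral B l Φ (y + w) v + L * ε := by
  have hΦ := h.continuous
  have hBv := (contDiff_opApply B l hv).continuous
  refine setIntegral_unitCube_le_add (by fun_prop) (by fun_prop) fun x hx => ?_
  refine (h.le_add_mul _ (y + w + opApply B l v x)).trans ?_
  rw [dist_add_right, dist_add_left, dist_eq_norm]
  gcongr
  exact hclose x hx

/- On a grid so fine that `ℬu` is nearly constant on each cell, correct `u` in every cell by a
near-minimizer at the corresponding value of `y + ℬu`. -/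
theorem CubeIntegralsBddBelow.qcEnvelope_le_cubeIntegral_qcEnvelope_add
    (hb : CubeIntegralsBddBelow B l Φ) (h : LipschitzWith L Φ) (y : V) {u : Dom n → U}
    (hu : CcSmooth (unitCube n) u) {ε : ℝ} (hε : 0 < ε) :
    qcEnvelope B l Φ y ≤ cubeIntegral B l (qcEnvelope B l Φ) y u + (1 + 2 * L) * ε := by
  set Q := qcEnvelope B l Φ
  set g := opApply B l u
  have hQL : LipschitzWith L Q := hb.lipschitzWith_qcEnvelope h
  have hQc := hQL.continuous
  have hgc : Continuous g := (contDiff_opApply B l hu.1).continuous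
  obtain ⟨N, hN, hclose⟩ := exists_grid_norm_sub_le
    (hu.uniformContinuous_opApply (B := B) (l := l)) hε
  choose v hv hvlt using fun i : Fin n → Fin N =>
    exists_cubeIntegral_lt_qcEnvelope_add B l Φ (y + g (gridCenter i)) hε
  have hcell (i : Fin n → Fin N) :
      ∫ x in unitCube n, Φ (y + g (gridCenter i + (N : ℝ)⁻¹ • x) + opApply B l (v i) x) ≤
        (∫ x in unitCube n, Q (y + g (gridCenter i + (N : ℝ)⁻¹ • x))) + (1 + 2 * L) * ε := by
    have hΦcell := setIntegral_add_opApply_le (B := B) (l := l) (y := y) h (hv i).1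
      (g := fun x => g (gridCenter i + (N : ℝ)⁻¹ • x)) (by fun_prop) (hclose i)
    have hQcell := le_setIntegral_add (y := y) hQL
      (g := fun x => g (gridCenter i + (N : ℝ)⁻¹ • x)) (by fun_prop) (hclose i)
    linarith [hvlt i]
  have hQint : IntegrableOn (fun x => Q (y + g x)) (unitCube n) :=
    integrableOn_unitCube_of_continuous (by fun_prop)
  have hcard : ∑ _i : Fin n → Fin N, ((N : ℝ) ^ n)⁻¹ * ((1 + 2 * L) * ε) = (1 + 2 * L) * ε := by
    have hNn : (N : ℝ) ^ n ≠ 0 := by positivity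
    rw [Finset.sum_const, Finset.card_univ, nsmul_eq_mul, card_grid]
    field_simp
  refine (hb.qcEnvelope_le_cubeIntegral y (hu.add (ccSmooth_glue (l := l) hN hv))).trans ?_
  rw [cubeIntegral_add_glue h.continuous y hN hu hv, cubeIntegral,
    setIntegral_unitCube_eq_sum_grid hN hQint, ← hcard, ← Finset.sum_add_distrib]
  refine Finset.sum_le_sum fun i _ => ?_
  rw [smul_eq_mul, ← mul_add]
  exact mul_le_mul_of_nonneg_left (hcell i) (by positivity)

theorem CubeIntegralsBddBelow.qcEnvelope_le_cubeIntegral_qcEnvelope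
    (hb : CubeIntegralsBddBelow B l Φ) (h : LipschitzWith L Φ) (y : V) {u : Dom n → U}
    (hu : CcSmooth (unitCube n) u) :
    qcEnvelope B l Φ y ≤ cubeIntegral B l (qcEnvelope B l Φ) y u := by
  refine le_of_forall_pos_le_add fun ε hε => ?_
  have hpos : (0 : ℝ) < 1 + 2 * L := by positivity
  have hle := hb.qcEnvelope_le_cubeIntegral_qcEnvelope_add h y hu (div_pos hε hpos)
  rwa [mul_div_cancel₀ _ hpos.ne'] at hle

end QuasiconvexEnvelope

section CutoffOscillation

variable {n : ℕ} {V U : Type*} [NormedAddCommGroup V] [NormedSpace ℝ V]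
  [NormedAddCommGroup U] [NormedSpace ℝ U]

theorem exists_ccSmooth_one_on_compact {K : Set (Dom n)} (hK : IsClosed K)
    (hKs : K ⊆ unitCube n) :
    ∃ η : Dom n → ℝ, CcSmooth (unitCube n) η ∧ (∀ x, 0 ≤ η x ∧ η x ≤ 1) ∧ ∀ x ∈ K, η x = 1 := by
  obtain ⟨η, hη0, hη1, hη⟩ := exists_contMDiffMap_zero_one_nhds_of_isClosed
    (n := ⊤) (modelWithCornersSelf ℝ (Dom n)) (s := (unitCube n)ᶜ) (t := K)
    isOpen_unitCube.isClosed_compl hK (Set.disjoint_compl_left_iff_subset.2 hKs)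
  have hsupp : tsupport η ⊆ unitCube n := by
    intro x hx
    by_contra hxc
    exact notMem_tsupport_iff_eventuallyEq.2 (eventually_nhdsSet_iff_forall.1 hη0 x hxc) hx
  exact ⟨η, ⟨contMDiff_iff_contDiff.1 η.contMDiff, isCompact_closedUnitCube.of_isClosed_subset
    (isClosed_tsupport _) (hsupp.trans unitCube_subset_closedUnitCube), hsupp⟩, hη,
    hη1.self_of_nhdsSet⟩

theorem exists_cutoff {ε : ℝ} (hε : 0 < ε) :
    ∃ η : Dom n → ℝ, CcSmooth (unitCube n) η ∧ (∀ x, 0 ≤ η x ∧ η x ≤ 1) ∧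
      ∫ x in unitCube n, (1 - η x) ≤ ε := by
  have hvol : ENNReal.ofReal (1 - ε) < volume (unitCube n) := by
    rw [volume_unitCube, ENNReal.ofReal_lt_one]
    linarith
  obtain ⟨K, hKs, hK, hlt⟩ := isOpen_unitCube.exists_lt_isCompact hvol
  obtain ⟨η, hη, hη01, hη1⟩ := exists_ccSmooth_one_on_compact hK.isClosed hKs
  have hηint : IntegrableOn η (unitCube n) := integrableOn_unitCube_of_continuous hη.1.continuous
  refine ⟨η, hη, hη01, ?_⟩
  have hKη : 1 - ε ≤ ∫ x in unitCube n, η x :=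
    calc 1 - ε ≤ volume.real K :=
          (ENNReal.ofReal_le_iff_le_toReal hK.measure_lt_top.ne).1 hlt.le
      _ = ∫ _ in K, (1 : ℝ) := by simp
      _ = ∫ x in K, η x := setIntegral_congr_fun hK.measurableSet fun x hx => (hη1 x hx).symm
      _ ≤ ∫ x in unitCube n, η x := setIntegral_mono_set hηint
          (Eventually.of_forall fun x => (hη01 x).1) (LE.le.eventuallyLE hKs)
  have hone : ∫ _ in unitCube n, (1 : ℝ) = 1 := by simp
  rw [integral_sub (integrable_const _) hηint, hone]
  linarith

theorem mderiv_family_induction {ι : Type*} {R : (ι → Dom n → V) → Prop}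
    (step : ∀ F j, R F → R fun i => pderivDir j (F i)) {F : ι → Dom n → V} (base : R F)
    (α : Fin n → ℕ) : R fun i => mderiv α (F i) := by
  have hiter (j : Fin n) (m : ℕ) (G : ι → Dom n → V) (hG : R G) :
      R fun i => (pderivDir j)^[m] (G i) := by
    induction m with
    | zero => exact hG
    | succ m ih => simpa only [Function.iterate_succ_apply'] using step _ j ih
  have hlist (L : List (Fin n)) : R fun i => mderivList L α (F i) := by
    induction L with
    | nil => exact base
    | cons j L ih => exact hiter j (α j) _ ih
  exact hlist (List.finRange n)

theorem contDiff_mderiv_param {P : Type*} [NormedAddCommGroup P] [NormedSpace ℝ P]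
    {F : P → Dom n → V} (hF : ContDiff ℝ ∞ fun p : P × Dom n => F p.1 p.2) (α : Fin n → ℕ) :
    ContDiff ℝ ∞ fun p : P × Dom n => mderiv α (F p.1) p.2 := by
  refine mderiv_family_induction
    (R := fun F : P → Dom n → V => ContDiff ℝ ∞ fun p : P × Dom n => F p.1 p.2) ?_ hF α
  intro F j hF
  refine ContDiff.clm_apply (ContDiff.fderiv (f := fun (p : P × Dom n) y => F p.1 y)
    (g := fun p => p.2) (m := ∞) ?_ contDiff_snd (by simp)) contDiff_const
  exact hF.comp ((contDiff_fst.comp contDiff_fst).prodMk contDiff_snd)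

variable {B : (Fin n → ℕ) → (U →L[ℝ] V)} {l : ℕ}

theorem continuous_opApply_param {P : Type*} [NormedAddCommGroup P] [NormedSpace ℝ P]
    {F : P → Dom n → U} (hF : ContDiff ℝ ∞ fun p : P × Dom n => F p.1 p.2) :
    Continuous fun p : P × Dom n => opApply B l (F p.1) p.2 :=
  continuous_finsetSum _ fun α _ => (B α).continuous.comp (contDiff_mderiv_param hF α).continuous

protected theorem ZPeriodic.opApply {w : Dom n → U} (hw : ZPeriodic w) (hs : ContDiff ℝ ∞ w) :
    ZPeriodic (opApply B l w) := by
  intro x m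
  rw [← opApply_comp_add_right B l hs]
  congr 1
  exact funext fun y => hw y m

theorem exists_int_norm_sub_le_one (x : Dom n) :
    ∃ m : Fin n → ℤ, ‖x - fun i => (m i : ℝ)‖ ≤ 1 := by
  refine ⟨fun i => ⌊x i⌋, (pi_norm_le_iff_of_nonneg zero_le_one).2 fun i => ?_⟩
  rw [Pi.sub_apply, Real.norm_eq_abs, Int.self_sub_floor, abs_of_nonneg (Int.fract_nonneg _)]
  exact (Int.fract_lt_one _).le

/-- The rapidly oscillating field `x ↦ c^{-l} w(c x)` cut off by `η`. The scaling is the one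
for which `ℬ` of the field without cutoff is `(ℬw)(c x)`. -/
def cutoffOscillation (η : Dom n → ℝ) (l : ℕ) (c : ℝ) (w : Dom n → U) (x : Dom n) : U :=
  (c ^ l)⁻¹ • (η x • w (c • x))

/-- The profile `w` multiplied by the rescaled cutoff `y ↦ η(s y + b)`, where `p = (s, b)`. This is
what `cutoffOscillation` looks like near a point in the fast variable, with `s = c⁻¹`. -/
def rescaledCutoff (η : Dom n → ℝ) (w : Dom n → U) (p : ℝ × Dom n) (y : Dom n) : U :=
  η (p.1 • y + p.2) • w y

variable {η : Dom n → ℝ} {w : Dom n → U}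

theorem contDiff_rescaledCutoff_param (hη : ContDiff ℝ ∞ η) (hs : ContDiff ℝ ∞ w) :
    ContDiff ℝ ∞ fun p : (ℝ × Dom n) × Dom n => rescaledCutoff η w p.1 p.2 :=
  (hη.comp (((contDiff_fst.comp contDiff_fst).smul contDiff_snd).add
    (contDiff_snd.comp contDiff_fst))).smul (hs.comp contDiff_snd)

theorem contDiff_rescaledCutoff (hη : ContDiff ℝ ∞ η) (hs : ContDiff ℝ ∞ w) (p : ℝ × Dom n) :
    ContDiff ℝ ∞ (rescaledCutoff η w p) :=
  (contDiff_rescaledCutoff_param hη hs).comp (contDiff_const.prodMk contDiff_id)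

theorem exists_norm_opApply_rescaledCutoff_sub_le (hη : ContDiff ℝ ∞ η) (hs : ContDiff ℝ ∞ w)
    {ε : ℝ} (hε : 0 < ε) :
    ∃ δ > 0, ∀ (s : ℝ) (b x y : Dom n), ‖s‖ < δ → ‖b - x‖ < δ → ‖x‖ ≤ 1 → ‖y‖ ≤ 1 →
      ‖opApply B l (rescaledCutoff η w (s, b)) y - opApply B l (rescaledCutoff η w (0, x)) y‖ ≤
        ε := by
  have hcompact : IsCompact (Metric.closedBall (0 : ℝ × Dom n) 2 ×ˢ
      Metric.closedBall (0 : Dom n) 1) := (isCompact_closedBall _ _).prod (isCompact_closedBall _ _)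
  obtain ⟨δ, hδ, hclose⟩ := Metric.uniformContinuousOn_iff.1
    (hcompact.uniformContinuousOn_of_continuous (continuous_opApply_param (B := B) (l := l)
      (contDiff_rescaledCutoff_param hη hs)).continuousOn) ε hε
  refine ⟨min δ 1, lt_min hδ one_pos, fun s b x y hs hb hx hy => ?_⟩
  obtain ⟨hsδ, hs1⟩ := lt_min_iff.1 hs
  obtain ⟨hbδ, hb1⟩ := lt_min_iff.1 hb
  have hb2 : ‖b‖ ≤ 2 := by
    have htri := norm_add_le (b - x) x
    rw [sub_add_cancel] at htri
    linarith
  have hy' : y ∈ Metric.closedBall (0 : Dom n) 1 := mem_closedBall_zero_iff.2 hy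
  rw [← dist_eq_norm]
  refine (hclose ((s, b), y) ⟨mem_closedBall_zero_iff.2 ?_, hy'⟩
    ((0, x), y) ⟨mem_closedBall_zero_iff.2 ?_, hy'⟩ ?_).le
  · exact max_le (hs1.le.trans one_le_two) hb2
  · exact max_le (by simp) (hx.trans one_le_two)
  · rw [Prod.dist_eq, Prod.dist_eq, dist_self, dist_zero_right, dist_eq_norm b]
    exact max_lt (max_lt hsδ hbδ) hδ

theorem opApply_cutoffOscillation (hη : ContDiff ℝ ∞ η) (hw : ZPeriodic w) (hs : ContDiff ℝ ∞ w)
    {c : ℝ} (hc : c ≠ 0) (m : Fin n → ℤ) (x : Dom n) :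
    opApply B l (cutoffOscillation η l c w) x =
      opApply B l (rescaledCutoff η w (c⁻¹, c⁻¹ • fun i => (m i : ℝ)))
        (c • x - fun i => (m i : ℝ)) := by
  set m' : Dom n := fun i => (m i : ℝ) with hm'
  rw [sub_eq_add_neg, ← opApply_comp_smul_add B l (contDiff_rescaledCutoff hη hs _) hc]
  congr 1
  funext t
  have harg : c⁻¹ • (c • t + -m') + c⁻¹ • m' = t := by
    rw [← smul_add, neg_add_cancel_right, inv_smul_smul₀ hc]
  have hshift : w (c • t + -m') = w (c • t) := by
    rw [← hw (c • t + -m') m, ← hm', neg_add_cancel_right]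
  simp only [cutoffOscillation, rescaledCutoff, harg, hshift]

theorem smul_opApply_eq_opApply_rescaledCutoff (hw : ZPeriodic w) (hs : ContDiff ℝ ∞ w)
    (m : Fin n → ℤ) (x y : Dom n) :
    η x • opApply B l w y =
      opApply B l (rescaledCutoff η w (0, x)) (y - fun i => (m i : ℝ)) := by
  have hconst : rescaledCutoff η w (0, x) = fun t => η x • w t := by
    funext t
    simp [rescaledCutoff]
  rw [hconst, opApply_const_smul B l _ hs, ← hw.opApply hs (y - _) m, sub_add_cancel]

theorem eventually_norm_opApply_cutoffOscillation_sub_le (hη : ContDiff ℝ ∞ η)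
    (hw : ZPeriodic w) (hs : ContDiff ℝ ∞ w) {ε : ℝ} (hε : 0 < ε) :
    ∀ᶠ c : ℝ in atTop, ∀ x : Dom n, ‖x‖ ≤ 1 →
      ‖opApply B l (cutoffOscillation η l c w) x - η x • opApply B l w (c • x)‖ ≤ ε := by
  obtain ⟨δ, hδ, hclose⟩ :=
    exists_norm_opApply_rescaledCutoff_sub_le (B := B) (l := l) hη hs hε
  filter_upwards [eventually_gt_atTop 0, tendsto_inv_atTop_zero.eventually_lt_const hδ]
    with c hc hcδ x hx
  obtain ⟨m, hm⟩ := exists_int_norm_sub_le_one (c • x)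
  rw [opApply_cutoffOscillation hη hw hs hc.ne' m,
    smul_opApply_eq_opApply_rescaledCutoff hw hs m]
  have hcnorm : ‖c⁻¹‖ < δ := by rwa [Real.norm_of_nonneg (inv_nonneg.2 hc.le)]
  refine hclose _ _ _ _ hcnorm ?_ hx hm
  have hfactor : (c⁻¹ • (fun i => (m i : ℝ)) - x : Dom n) =
      c⁻¹ • -(c • x - fun i => (m i : ℝ)) := by
    rw [neg_sub, smul_sub, inv_smul_smul₀ hc.ne']
  rw [hfactor, norm_smul, norm_neg]
  exact (mul_le_of_le_one_right (norm_nonneg _) hm).trans_lt hcnorm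

theorem CcSmooth.cutoffOscillation {Ω : Set (Dom n)} (hη : CcSmooth Ω η) (hs : ContDiff ℝ ∞ w)
    (l : ℕ) (c : ℝ) : CcSmooth Ω (cutoffOscillation η l c w) := by
  have hsupp : Function.support (_root_.cutoffOscillation η l c w) ⊆ tsupport η := by
    refine Function.support_subset_iff'.2 fun x hx => ?_
    simp [_root_.cutoffOscillation, image_eq_zero_of_notMem_tsupport hx]
  exact ⟨contDiff_const.smul (hη.1.smul (hs.comp (contDiff_const_smul c))), hη.2.1.mono' hsupp,
    (closure_minimal hsupp (isClosed_tsupport η)).trans hη.2.2⟩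

theorem ZPeriodic.setIntegral_comp_odd_smul {E : Type*} [NormedAddCommGroup E] [NormedSpace ℝ E]
    {g : Dom n → E} (hg : ZPeriodic g) (hc : Continuous g) (M : ℕ) :
    ∫ x in unitCube n, g (((2 * M + 1 : ℕ) : ℝ) • x) = ∫ x in unitCube n, g x := by
  set N : ℕ := 2 * M + 1 with hNM
  have hN : 0 < N := by omega
  have hNr : (N : ℝ) ≠ 0 := by positivity
  have hcell (i : Fin n → Fin N) (y : Dom n) :
      g ((N : ℝ) • (gridCenter i + (N : ℝ)⁻¹ • y)) = g y := by
    rw [smul_add, smul_inv_smul₀ hNr, add_comm, ← hg y fun j => (i j : ℤ) - M]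
    congr 2
    funext j
    simp only [gridCenter, Pi.smul_apply, smul_eq_mul]
    field_simp
    push_cast [hNM]
    ring
  have hint : IntegrableOn (fun x => g ((N : ℝ) • x)) (unitCube n) :=
    integrableOn_unitCube_of_continuous (by fun_prop)
  rw [setIntegral_unitCube_eq_sum_grid hN hint]
  simp only [hcell]
  rw [Finset.sum_const, Finset.card_univ, ← Nat.cast_smul_eq_nsmul ℝ, card_grid, smul_smul,
    mul_inv_cancel₀ (by positivity), one_smul]

theorem norm_sub_le_of_norm_sub_smul_le {a b : V} {t ε C : ℝ} (hab : ‖a - t • b‖ ≤ ε)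
    (hb : ‖b‖ ≤ C) (ht : t ≤ 1) : ‖a - b‖ ≤ ε + (1 - t) * C := by
  have hsplit : a - b = (a - t • b) - (1 - t) • b := by module
  rw [hsplit]
  refine (norm_sub_le _ _).trans (add_le_add hab ?_)
  rw [norm_smul, Real.norm_of_nonneg (sub_nonneg.2 ht)]
  exact mul_le_mul_of_nonneg_left hb (sub_nonneg.2 ht)

theorem le_setIntegral_opApply_add_of_forall_le_cubeIntegral {f : V → ℝ} {L : NNReal}
    (hf : LipschitzWith L f)
    (hcc : ∀ (y : V) (u : Dom n → U), CcSmooth (unitCube n) u → f y ≤ cubeIntegral B l f y u)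
    (z : V) (hw : ZPeriodic w) (hs : ContDiff ℝ ∞ w) {C : ℝ} (hC0 : 0 ≤ C)
    (hC : ∀ x, ‖opApply B l w x‖ ≤ C) {ε : ℝ} (hε : 0 < ε) :
    f z ≤ (∫ x in unitCube n, f (z + opApply B l w x)) + L * (C + 1) * ε := by
  have hfc := hf.continuous
  set g := opApply B l w 
  have hgp : ZPeriodic g := hw.opApply hs
  have hgc : Continuous g := (contDiff_opApply B l hs).continuous
  obtain ⟨η, hη, hη01, hηint⟩ := exists_cutoff (n := n) hε
  have hodd : Tendsto (fun M : ℕ => ((2 * M + 1 : ℕ) : ℝ)) atTop atTop :=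
    tendsto_natCast_atTop_atTop.comp
      (tendsto_atTop_mono (fun M => by simp only [id]; omega) tendsto_id)
  obtain ⟨M, hM⟩ := (hodd.eventually
    (eventually_norm_opApply_cutoffOscillation_sub_le (B := B) (l := l) hη.1 hw hs hε)).exists
  set N : ℝ := ((2 * M + 1 : ℕ) : ℝ)
  have hu := hη.cutoffOscillation hs l N
  set u := cutoffOscillation η l N w
  have huc : Continuous (opApply B l u) := (contDiff_opApply B l hu.1).continuous
  have hηc := hη.1.continuous
  have hle : cubeIntegral B l f z u ≤
      (∫ x in unitCube n, (f (z + g (N • x)) + L * C * (1 - η x))) + L * ε := by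
    refine setIntegral_unitCube_le_add (by fun_prop) (by fun_prop) fun x hx => ?_
    refine (hf.le_add_mul _ (z + g (N • x))).trans ?_
    rw [dist_add_left, dist_eq_norm]
    have herr := norm_sub_le_of_norm_sub_smul_le (hM x (norm_le_one_of_mem_unitCube hx))
      (hC (N • x)) (hη01 x).2
    linarith [mul_le_mul_of_nonneg_left herr L.coe_nonneg]
  rw [integral_add (integrableOn_unitCube_of_continuous (by fun_prop))
    (integrableOn_unitCube_of_continuous (by fun_prop)), integral_const_mul,
    ZPeriodic.setIntegral_comp_odd_smul (g := fun x => f (z + g x))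
      (fun x m => by simp only [hgp x m]) (by fun_prop)] at hle
  linarith [hcc z u hu, mul_le_mul_of_nonneg_left hηint (mul_nonneg L.coe_nonneg hC0)]

theorem le_setIntegral_opApply_of_forall_le_cubeIntegral {f : V → ℝ} {L : NNReal}
    (hf : LipschitzWith L f)
    (hcc : ∀ (y : V) (u : Dom n → U), CcSmooth (unitCube n) u → f y ≤ cubeIntegral B l f y u)
    (z : V) (hw : ZPeriodic w) (hs : ContDiff ℝ ∞ w) :
    f z ≤ ∫ x in unitCube n, f (z + opApply B l w x) := by
  obtain ⟨C, hC0, hC⟩ :=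
    (hw.opApply (B := B) (l := l) hs).exists_norm_le (contDiff_opApply B l hs).continuous
  refine le_of_forall_pos_le_add fun ε hε => ?_
  have hpos : 0 < (L + 1) * (C + 1) := by positivity
  refine (le_setIntegral_opApply_add_of_forall_le_cubeIntegral hf hcc z hw hs hC0 hC
    (div_pos hε hpos)).trans ?_
  gcongr
  rw [mul_div_assoc', div_le_iff₀ hpos]
  nlinarith

end CutoffOscillation

section TrigonometricPolynomials

variable {n : ℕ} {V U W : Type*} [NormedAddCommGroup V] [NormedSpace ℝ V]
  [NormedAddCommGroup U] [NormedSpace ℝ U] [NormedAddCommGroup W] [NormedSpace ℝ W]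

/-- The real plane wave `cos(2π m·x + θ)`. Differentiation shifts the phase `θ` by `π/2`. -/
def cosWave (m : Fin n → ℤ) (θ : ℝ) (x : Dom n) : ℝ :=
  Real.cos (2 * Real.pi * (∑ i, (m i : ℝ) * x i) + θ)

theorem contDiff_cosWave (m : Fin n → ℤ) (θ : ℝ) : ContDiff ℝ ∞ (cosWave m θ) :=
  Real.contDiff_cos.comp ((contDiff_const.mul
    (ContDiff.sum fun i _ => contDiff_const.mul (contDiff_apply ℝ ℝ i))).add contDiff_const)

theorem zPeriodic_cosWave (m : Fin n → ℤ) (θ : ℝ) : ZPeriodic (cosWave m θ) := by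
  intro x p
  have hphase : 2 * Real.pi * (∑ i, (m i : ℝ) * (x + fun i => (p i : ℝ)) i) + θ =
      2 * Real.pi * (∑ i, (m i : ℝ) * x i) + θ + ((∑ i, m i * p i : ℤ) : ℝ) * (2 * Real.pi) := by
    simp only [Pi.add_apply, mul_add, Finset.sum_add_distrib]
    push_cast
    ring
  rw [cosWave, hphase, Real.cos_add_int_mul_two_pi, cosWave]

theorem hasFDerivAt_cosWave (m : Fin n → ℤ) (θ : ℝ) (x : Dom n) :
    HasFDerivAt (cosWave m θ) ((2 * Real.pi * cosWave m (θ + Real.pi / 2) x) •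
      ∑ i, (m i : ℝ) • ContinuousLinearMap.proj (R := ℝ) (φ := fun _ : Fin n => ℝ) i) x := by
  have hphase : HasFDerivAt (fun x : Dom n => 2 * Real.pi * (∑ i, (m i : ℝ) * x i) + θ)
      ((2 * Real.pi) •
        ∑ i, (m i : ℝ) • ContinuousLinearMap.proj (R := ℝ) (φ := fun _ : Fin n => ℝ) i) x :=
    ((HasFDerivAt.fun_sum fun i _ => (hasFDerivAt_apply i x).const_mul _).const_mul _).add_const θ
  refine hphase.cos.congr_fderiv ?_
  rw [smul_smul, cosWave, ← add_assoc, Real.cos_add_pi_div_two]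
  congr 1
  ring

theorem pderivDir_cosWave_smul (m : Fin n → ℤ) (θ : ℝ) (j : Fin n) {f : Dom n → V}
    (hf : ContDiff ℝ ∞ f) :
    pderivDir j (fun x => cosWave m θ x • f x) = fun x => cosWave m θ x • pderivDir j f x +
      (2 * Real.pi * m j * cosWave m (θ + Real.pi / 2) x) • f x := by
  funext x
  have hderiv := (hasFDerivAt_cosWave m θ x).fun_smul
    (hf.differentiable (by simp) x).hasFDerivAt
  have hproj : ∑ i, (m i : ℝ) * (Pi.single j 1 : Dom n) i = m j := by
    simp [Pi.single_apply]
  rw [pderivDir, hderiv.fderiv]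
  simp only [_root_.add_apply, _root_.smul_apply, ContinuousLinearMap.smulRight_apply,
    _root_.sum_apply, ContinuousLinearMap.proj_apply, smul_eq_mul, hproj, pderivDir]
  congr 2
  ring

theorem one_mul_prod_pair_pow (c : Fin n → ℝ) (α : Fin n → ℕ) :
    (1 : ℝ × Multiplicative ℕ) * ∏ j, (c j, Multiplicative.ofAdd 1) ^ α j =
      (∏ j, c j ^ α j, Multiplicative.ofAdd (∑ j, α j)) := by
  rw [one_mul]
  refine Prod.ext (by simp [Prod.fst_prod]) (Multiplicative.toAdd.injective ?_)
  simp [Prod.snd_prod, toAdd_prod]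

theorem phase_add_succ (θ : ℝ) (q : ℕ) :
    θ + q * (Real.pi / 2) + Real.pi / 2 = θ + ((q + 1 : ℕ) : ℝ) * (Real.pi / 2) := by
  push_cast
  ring

/- The induction tracks the scalar factor together with the number of derivatives taken, which is
why the coefficients live in `ℝ × Multiplicative ℕ`. -/
theorem mderiv_cosWave_smul (m : Fin n → ℤ) (θ : ℝ) (p : V) (α : Fin n → ℕ) :
    mderiv α (fun x => cosWave m θ x • p) = fun x => (∏ j, (2 * Real.pi * m j) ^ α j) •
      (cosWave m (θ + (∑ j, α j : ℕ) * (Real.pi / 2)) x • p) := by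
  have key := mderiv_induction (M := ℝ × Multiplicative ℕ)
    (p := fun j => (2 * Real.pi * m j, Multiplicative.ofAdd 1))
    (c := (1 : ℝ × Multiplicative ℕ)) (u := fun x => cosWave m θ x • p)
    (v := fun x => cosWave m θ x • p)
    (R := fun c f _ => f = fun x =>
      c.1 • (cosWave m (θ + (c.2.toAdd : ℝ) * (Real.pi / 2)) x • p)) ?_ (by simp) α
  · rwa [one_mul_prod_pair_pow] at key
  rintro ⟨c, q⟩ f _ j rfl
  have hcomm (x : Dom n) (t : ℝ) : c • (cosWave m t x • p) = cosWave m t x • c • p :=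
    smul_comm _ _ _
  simp only [hcomm, pderivDir_cosWave_smul m _ j (f := fun _ => c • p) contDiff_const]
  funext x
  simp only [pderivDir, fderiv_fun_const, Pi.zero_apply, _root_.zero_apply, smul_zero, zero_add,
    Prod.mk_mul_mk, toAdd_mul, toAdd_ofAdd, phase_add_succ, smul_smul]
  congr 1
  ring

theorem prod_const_mul_pow (m : Fin n → ℝ) (c : ℝ) (α : Fin n → ℕ) :
    ∏ j, (c * m j) ^ α j = c ^ (∑ j, α j) * ∏ j, m j ^ α j := by
  simp only [mul_pow]
  rw [Finset.prod_mul_distrib, Finset.prod_pow_eq_pow_sum]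

theorem opApply_cosWave_smul (B : (Fin n → ℕ) → (U →L[ℝ] V)) (l : ℕ) (m : Fin n → ℤ) (θ : ℝ)
    (p : U) (x : Dom n) :
    opApply B l (fun x => cosWave m θ x • p) x =
      ((2 * Real.pi) ^ l * cosWave m (θ + l * (Real.pi / 2)) x) •
        opSymbol B l (fun i => (m i : ℝ)) p := by
  rw [opApply, opSymbol, _root_.sum_apply, Finset.smul_sum]
  refine Finset.sum_congr rfl fun α hα => ?_
  rw [mderiv_cosWave_smul, prod_const_mul_pow, sum_eq_of_mem_degSet hα]
  simp only [map_smul, _root_.smul_apply, smul_smul]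
  congr 1
  ring

theorem ZPeriodic.setIntegral_cosWave_smul_pderivDir {v : Dom n → V} (hp : ZPeriodic v)
    (hv : ContDiff ℝ ∞ v) (m : Fin n → ℤ) (θ : ℝ) (j : Fin n) :
    ∫ x in unitCube n, cosWave m θ x • pderivDir j v x =
      (-(2 * Real.pi) * m j) • ∫ x in unitCube n, cosWave m (θ + Real.pi / 2) x • v x := by
  have hper : ZPeriodic fun x => cosWave m θ x • v x := fun x q => by
    simp only [zPeriodic_cosWave m θ x q, hp x q]
  have hparts := hper.setIntegral_pderivDir ((contDiff_cosWave m θ).smul hv) j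
  have hc (t : ℝ) := (contDiff_cosWave m t).continuous
  have hvc := hv.continuous
  have hvjc := (contDiff_pderivDir hv j).continuous
  rw [pderivDir_cosWave_smul m θ j hv, integral_add
    (integrableOn_unitCube_of_continuous (by fun_prop))
    (integrableOn_unitCube_of_continuous (by fun_prop))] at hparts
  simp only [mul_smul _ (cosWave m _ _), integral_smul] at hparts
  rw [eq_neg_of_add_eq_zero_left hparts, ← neg_smul]
  congr 1
  ring

theorem ZPeriodic.setIntegral_cosWave_smul_mderiv {v : Dom n → V} (hp : ZPeriodic v)
    (hv : ContDiff ℝ ∞ v) (m : Fin n → ℤ) (α : Fin n → ℕ) (θ : ℝ) :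
    ∫ x in unitCube n, cosWave m θ x • mderiv α v x =
      (∏ j, (-(2 * Real.pi) * m j) ^ α j) •
        ∫ x in unitCube n, cosWave m (θ + (∑ j, α j : ℕ) * (Real.pi / 2)) x • v x := by
  have key := mderiv_induction (M := ℝ × Multiplicative ℕ)
    (p := fun j => (-(2 * Real.pi) * m j, Multiplicative.ofAdd 1))
    (c := (1 : ℝ × Multiplicative ℕ)) (u := v) (v := v)
    (R := fun c f _ => ContDiff ℝ ∞ f ∧ ZPeriodic f ∧
      ∀ θ, ∫ x in unitCube n, cosWave m θ x • f x =
        c.1 • ∫ x in unitCube n, cosWave m (θ + (c.2.toAdd : ℝ) * (Real.pi / 2)) x • v x)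
    ?_ ⟨hv, hp, fun θ => by simp⟩ α
  · rw [one_mul_prod_pair_pow] at key
    exact key.2.2 θ
  rintro ⟨c, q⟩ f _ j ⟨hf, hfp, hint⟩
  refine ⟨contDiff_pderivDir hf j, hfp.pderivDir j, fun θ => ?_⟩
  rw [hfp.setIntegral_cosWave_smul_pderivDir hf, hint, smul_smul]
  simp only [Prod.mk_mul_mk, toAdd_mul, toAdd_ofAdd, ← phase_add_succ]
  rw [mul_comm c, add_right_comm]

theorem ZPeriodic.setIntegral_cosWave_smul_opApply [CompleteSpace V] [CompleteSpace W]
    (A : (Fin n → ℕ) → (V →L[ℝ] W)) (k : ℕ) {v : Dom n → V} (hp : ZPeriodic v)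
    (hv : ContDiff ℝ ∞ v) (m : Fin n → ℤ) (θ : ℝ) :
    ∫ x in unitCube n, cosWave m θ x • opApply A k v x = (-(2 * Real.pi)) ^ k •
      opSymbol A k (fun i => (m i : ℝ))
        (∫ x in unitCube n, cosWave m (θ + k * (Real.pi / 2)) x • v x) := by
  have hc := (contDiff_cosWave m θ).continuous
  have hvc (α : Fin n → ℕ) := (contDiff_mderiv hv α).continuous
  simp only [opApply, opSymbol, Finset.smul_sum, ← map_smul (A _), _root_.sum_apply]
  rw [integral_finsetSum _ fun α _ =>
    integrableOn_unitCube_of_continuous (by have := hvc α; fun_prop)]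
  refine Finset.sum_congr rfl fun α hα => ?_
  rw [ContinuousLinearMap.integral_comp_comm _
      (integrableOn_unitCube_of_continuous (by have := hvc α; fun_prop)),
    hp.setIntegral_cosWave_smul_mderiv hv, prod_const_mul_pow, sum_eq_of_mem_degSet hα]
  simp only [map_smul, _root_.smul_apply, smul_smul]

theorem ZPeriodic.opSymbol_setIntegral_cosWave_smul [CompleteSpace V]
    {A : (Fin n → ℕ) → (V →L[ℝ] W)} {k : ℕ} {v : Dom n → V} (hp : ZPeriodic v)
    (hv : ContDiff ℝ ∞ v) (hA : ∀ x, opApply A k v x = 0) (m : Fin n → ℤ) (θ : ℝ) :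
    opSymbol A k (fun i => (m i : ℝ)) (∫ x in unitCube n, cosWave m θ x • v x) = 0 := by
  refine SeparatingDual.eq_zero_of_forall_dual_eq_zero (R := ℝ) fun g => ?_
  have hgA (x : Dom n) : opApply (fun α => g ∘L A α) k v x = 0 := by
    simpa [opApply] using congrArg g (hA x)
  have hsymbol (ξ : Dom n) (y : V) :
      opSymbol (fun α => g ∘L A α) k ξ y = g (opSymbol A k ξ y) := by
    simp [opSymbol]
  have key := hp.setIntegral_cosWave_smul_opApply (fun α => g ∘L A α) k hv m
    (θ - k * (Real.pi / 2))
  simp only [hgA, smul_zero, integral_zero, sub_add_cancel, hsymbol] at key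
  exact (smul_eq_zero.1 key.symm).resolve_left
    (pow_ne_zero _ (neg_ne_zero.2 (by positivity)))

/-- Real trigonometric polynomials on the torus that are even, i.e. sums of pure cosines. -/
def evenTrigPolynomials (n : ℕ) : Submodule ℝ (Dom n → ℝ) :=
  Submodule.span ℝ (Set.range fun m => cosWave m 0)

theorem cosWave_mem_evenTrigPolynomials (m : Fin n → ℤ) :
    cosWave m 0 ∈ evenTrigPolynomials n :=
  Submodule.subset_span ⟨m, rfl⟩

theorem one_mem_evenTrigPolynomials : (1 : Dom n → ℝ) ∈ evenTrigPolynomials n := by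
  convert cosWave_mem_evenTrigPolynomials (n := n) 0 using 1
  funext x
  simp [cosWave]

theorem cosWave_mul_cosWave (a b : Fin n → ℤ) :
    cosWave a 0 * cosWave b 0 =
      (1 / 2 : ℝ) • cosWave (a + b) 0 + (1 / 2 : ℝ) • cosWave (a - b) 0 := by
  funext x
  simp only [cosWave, Pi.mul_apply, Pi.add_apply, Pi.smul_apply, smul_eq_mul, add_zero,
    Int.cast_add, Pi.sub_apply, Int.cast_sub, add_mul, sub_mul, Finset.sum_add_distrib, mul_add,
    mul_sub, Finset.sum_sub_distrib, Real.cos_add, Real.cos_sub]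
  ring

theorem mul_mem_evenTrigPolynomials {f g : Dom n → ℝ} (hf : f ∈ evenTrigPolynomials n)
    (hg : g ∈ evenTrigPolynomials n) : f * g ∈ evenTrigPolynomials n := by
  have hle : evenTrigPolynomials n * evenTrigPolynomials n ≤ evenTrigPolynomials n := by
    rw [evenTrigPolynomials, Submodule.span_mul_span, Submodule.span_le]
    rintro _ ⟨_, ⟨a, rfl⟩, _, ⟨b, rfl⟩, rfl⟩
    simp only [cosWave_mul_cosWave]
    exact add_mem (Submodule.smul_mem _ _ (cosWave_mem_evenTrigPolynomials _))
      (Submodule.smul_mem _ _ (cosWave_mem_evenTrigPolynomials _))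
  exact hle (Submodule.mul_mem_mul hf hg)

theorem continuous_of_mem_evenTrigPolynomials {φ : Dom n → ℝ} (h : φ ∈ evenTrigPolynomials n) :
    Continuous φ := by
  refine Submodule.span_induction ?_ continuous_const (fun a b _ _ ha hb => ha.add hb)
    (fun c a _ ha => ha.const_smul c) h
  rintro _ ⟨m, rfl⟩
  exact (contDiff_cosWave m 0).continuous

/-- `g = ℬw` for a smooth periodic potential `w`. -/
def HasPeriodicPotential (B : (Fin n → ℕ) → (U →L[ℝ] V)) (l : ℕ) (g : Dom n → V) : Prop :=
  ∃ w : Dom n → U, ContDiff ℝ ∞ w ∧ ZPeriodic w ∧ opApply B l w = g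

variable {A : (Fin n → ℕ) → (V →L[ℝ] W)} {k : ℕ} {B : (Fin n → ℕ) → (U →L[ℝ] V)} {l : ℕ}
  {g h : Dom n → V}

theorem hasPeriodicPotential_zero : HasPeriodicPotential B l fun _ => 0 :=
  ⟨fun _ => 0, contDiff_const, fun _ _ => rfl, opApply_zero B l⟩

theorem HasPeriodicPotential.add (hg : HasPeriodicPotential B l g)
    (hh : HasPeriodicPotential B l h) : HasPeriodicPotential B l fun x => g x + h x := by
  obtain ⟨w, hw, hwp, rfl⟩ := hg
  obtain ⟨w', hw', hwp', rfl⟩ := hh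
  exact ⟨fun x => w x + w' x, hw.add hw', fun x m => by simp only [hwp x m, hwp' x m],
    funext fun x => opApply_add B l hw hw' x⟩

theorem HasPeriodicPotential.const_smul (c : ℝ) (hg : HasPeriodicPotential B l g) :
    HasPeriodicPotential B l fun x => c • g x := by
  obtain ⟨w, hw, hwp, rfl⟩ := hg
  exact ⟨fun x => c • w x, hw.const_smul c, fun x m => by simp only [hwp x m],
    funext fun x => opApply_const_smul B l c hw x⟩

theorem hasPeriodicPotential_cosWave_smul_opSymbol (m : Fin n → ℤ) (θ : ℝ) (p : U) :
    HasPeriodicPotential B l fun x =>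
      cosWave m θ x • opSymbol B l (fun i => (m i : ℝ)) p := by
  refine ⟨fun x => cosWave m (θ - l * (Real.pi / 2)) x • (((2 * Real.pi) ^ l)⁻¹ • p),
    (contDiff_cosWave m _).smul contDiff_const,
    fun x t => by simp only [zPeriodic_cosWave m _ x t], funext fun x => ?_⟩
  have hpi : (2 * Real.pi) ^ l ≠ 0 := by positivity
  rw [opApply_cosWave_smul, sub_add_cancel, map_smul, smul_smul]
  congr 1
  field_simp

theorem ExactPotential.hasPeriodicPotential_cosWave_smul [CompleteSpace V]
    (hAB : ExactPotential A k B l) {v : Dom n → V} (hv : ContDiff ℝ ∞ v) (hp : ZPeriodic v)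
    (hA : ∀ x, opApply A k v x = 0) {m : Fin n → ℤ} (hm : m ≠ 0) (θ : ℝ) :
    HasPeriodicPotential B l fun x =>
      cosWave m θ x • ∫ y in unitCube n, cosWave m θ y • v y := by
  have hm' : (fun i => (m i : ℝ)) ≠ (0 : Dom n) := fun h =>
    hm (funext fun i => by simpa using congrFun h i)
  have hker : (∫ y in unitCube n, cosWave m θ y • v y) ∈
      LinearMap.ker (opSymbol A k (fun i => (m i : ℝ)) : V →ₗ[ℝ] W) :=
    hp.opSymbol_setIntegral_cosWave_smul hv hA m θ
  rw [hAB _ hm'] at hker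
  obtain ⟨p, hp⟩ := hker
  rw [← hp]
  exact hasPeriodicPotential_cosWave_smul_opSymbol m θ p

/-- Periodic convolution of `φ` and `v`. -/
def cubeConv (φ : Dom n → ℝ) (v : Dom n → V) (x : Dom n) : V :=
  ∫ y in unitCube n, φ (x - y) • v y

theorem cubeConv_cosWave (m : Fin n → ℤ) {v : Dom n → V} (hv : Continuous v) (x : Dom n) :
    cubeConv (cosWave m 0) v x = cosWave m 0 x • (∫ y in unitCube n, cosWave m 0 y • v y) +
      cosWave m (-(Real.pi / 2)) x • ∫ y in unitCube n, cosWave m (-(Real.pi / 2)) y • v y := by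
  have hc (t : ℝ) := (contDiff_cosWave m t).continuous
  rw [cubeConv, ← integral_smul, ← integral_smul,
    ← integral_add (integrableOn_unitCube_of_continuous (by fun_prop))
      (integrableOn_unitCube_of_continuous (by fun_prop))]
  congr 1
  funext y
  rw [smul_smul, smul_smul, ← add_smul]
  congr 1
  simp only [cosWave, ← sub_eq_add_neg, Real.cos_sub_pi_div_two, add_zero, Pi.sub_apply, mul_sub,
    Finset.sum_sub_distrib]
  rw [Real.cos_sub]

theorem ExactPotential.hasPeriodicPotential_cubeConv [CompleteSpace V]
    (hAB : ExactPotential A k B l) {v : Dom n → V} (hv : ContDiff ℝ ∞ v) (hp : ZPeriodic v)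
    (h0 : ∫ x in unitCube n, v x = 0) (hA : ∀ x, opApply A k v x = 0) {φ : Dom n → ℝ}
    (hφ : φ ∈ evenTrigPolynomials n) : HasPeriodicPotential B l (cubeConv φ v) := by
  have hvc := hv.continuous
  refine Submodule.span_induction (p := fun φ _ => HasPeriodicPotential B l (cubeConv φ v))
    ?wave ?zero ?add ?smul hφ
  case wave =>
    rintro _ ⟨m, rfl⟩
    by_cases hm : m = 0
    · convert hasPeriodicPotential_zero (B := B) (l := l) using 2
      simp [cubeConv, hm, cosWave, h0]
    · rw [funext (cubeConv_cosWave m hvc)]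
      exact (hAB.hasPeriodicPotential_cosWave_smul hv hp hA hm _).add
        (hAB.hasPeriodicPotential_cosWave_smul hv hp hA hm _)
  case zero =>
    convert hasPeriodicPotential_zero (B := B) (l := l) using 2
    simp [cubeConv]
  case add =>
    intro a b ha hb hga hgb
    have hac := continuous_of_mem_evenTrigPolynomials ha
    have hbc := continuous_of_mem_evenTrigPolynomials hb
    convert hga.add hgb using 2
    rw [cubeConv, cubeConv, cubeConv,
      ← integral_add (integrableOn_unitCube_of_continuous (by fun_prop))
        (integrableOn_unitCube_of_continuous (by fun_prop))]
    simp only [Pi.add_apply, add_smul]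
  case smul =>
    intro c a _ hga
    convert hga.const_smul c using 2
    simp only [cubeConv, Pi.smul_apply, smul_assoc, integral_smul]

end TrigonometricPolynomials

section CosineKernel

variable {n : ℕ}

/-- A nonnegative even trigonometric polynomial whose maximum `1` over the closed unit cube is
attained only at the origin, so that its normalized powers form an approximate identity. -/
def cosKernel (n : ℕ) (x : Dom n) : ℝ := ∏ i, (1 + Real.cos (2 * Real.pi * x i)) / 2

theorem half_one_add_cos_mem_Icc (t : ℝ) : (1 + Real.cos t) / 2 ∈ Set.Icc (0 : ℝ) 1 :=
  ⟨by linarith [Real.neg_one_le_cos t], by linarith [Real.cos_le_one t]⟩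

theorem cosKernel_mem_evenTrigPolynomials : cosKernel n ∈ evenTrigPolynomials n := by
  have hprod : cosKernel n = ∏ i, fun x : Dom n => (1 + Real.cos (2 * Real.pi * x i)) / 2 := by
    funext x
    simp [cosKernel]
  rw [hprod]
  refine Finset.prod_induction _ (· ∈ evenTrigPolynomials n)
    (fun _ _ => mul_mem_evenTrigPolynomials) one_mem_evenTrigPolynomials fun i _ => ?_
  have hfactor : (fun x : Dom n => (1 + Real.cos (2 * Real.pi * x i)) / 2) =
      (1 / 2 : ℝ) • (1 : Dom n → ℝ) + (1 / 2 : ℝ) • cosWave (Pi.single i 1) 0 := by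
    funext x
    have hsum : ∑ j, ((Pi.single i 1 : Fin n → ℤ) j : ℝ) * x j = x i := by
      simp [Pi.single_apply]
    simp only [cosWave, Pi.add_apply, Pi.smul_apply, smul_eq_mul, hsum, Pi.one_apply, add_zero]
    ring
  rw [hfactor]
  exact add_mem (Submodule.smul_mem _ _ one_mem_evenTrigPolynomials)
    (Submodule.smul_mem _ _ (cosWave_mem_evenTrigPolynomials _))

theorem cosKernel_pow_mem_evenTrigPolynomials (N : ℕ) :
    cosKernel n ^ N ∈ evenTrigPolynomials n := by
  induction N with
  | zero => exact one_mem_evenTrigPolynomials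
  | succ N ih => exact mul_mem_evenTrigPolynomials ih cosKernel_mem_evenTrigPolynomials

theorem continuous_cosKernel : Continuous (cosKernel n) := by
  unfold cosKernel
  fun_prop

theorem zPeriodic_cosKernel : ZPeriodic (cosKernel n) := by
  intro x m
  refine Finset.prod_congr rfl fun i _ => ?_
  rw [Pi.add_apply, mul_add, mul_comm (2 * Real.pi) (m i : ℝ), Real.cos_add_int_mul_two_pi]

theorem cosKernel_neg (x : Dom n) : cosKernel n (-x) = cosKernel n x := by
  simp [cosKernel]

theorem cosKernel_nonneg (x : Dom n) : 0 ≤ cosKernel n x :=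
  Finset.prod_nonneg fun _ _ => (half_one_add_cos_mem_Icc _).1

theorem cosKernel_zero : cosKernel n 0 = 1 := by simp [cosKernel]

theorem half_one_add_cos_two_pi_mul_lt_one {t : ℝ} (ht : t ∈ Set.Icc (-(1 / 2) : ℝ) (1 / 2))
    (h0 : t ≠ 0) : (1 + Real.cos (2 * Real.pi * t)) / 2 < 1 := by
  have hpi := Real.pi_pos
  have hne : Real.cos (2 * Real.pi * t) ≠ 1 := fun h => h0 <| by
    simpa [hpi.ne'] using (Real.cos_eq_one_iff_of_lt_of_lt
      (by nlinarith [ht.1]) (by nlinarith [ht.2])).1 h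
  linarith [lt_of_le_of_ne (Real.cos_le_one _) hne]

theorem cosKernel_lt_cosKernel_zero {x : Dom n} (hx : x ∈ closedUnitCube n) (h0 : x ≠ 0) :
    cosKernel n x < cosKernel n 0 := by
  obtain ⟨i, hi⟩ := Function.ne_iff.1 h0
  rw [cosKernel_zero, cosKernel, ← Finset.mul_prod_erase _ _ (Finset.mem_univ i)]
  exact mul_lt_one_of_nonneg_of_lt_one_left (half_one_add_cos_mem_Icc _).1
    (half_one_add_cos_two_pi_mul_lt_one (hx i (Set.mem_univ i)) hi)
    (Finset.prod_le_one (fun j _ => (half_one_add_cos_mem_Icc _).1)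
      fun j _ => (half_one_add_cos_mem_Icc _).2)

end CosineKernel

section Mollification

theorem linearGrowth_of_lipschitzWith {V : Type*} [NormedAddCommGroup V] {f : V → ℝ} {L : NNReal}
    (hf : LipschitzWith L f) : LinearGrowth f := by
  refine ⟨‖f 0‖ + L, fun z => ?_⟩
  rw [← Real.norm_eq_abs]
  calc ‖f z‖ ≤ ‖f 0‖ + ‖f z - f 0‖ := norm_le_norm_add_norm_sub' _ _
    _ ≤ ‖f 0‖ + L * ‖z‖ := by
      gcongr
      simpa [dist_eq_norm] using hf.dist_le_mul z 0
    _ ≤ (‖f 0‖ + L) * (1 + ‖z‖) := by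
      nlinarith [mul_nonneg (norm_nonneg (f 0)) (norm_nonneg z), L.coe_nonneg]

theorem tendsto_setIntegral_comp_of_norm_le {n : ℕ} {V : Type*} [NormedAddCommGroup V]
    {f : V → ℝ} {L : NNReal} (hf : LipschitzWith L f) (z : V) {C : ℝ} {v : Dom n → V}
    {w : ℕ → Dom n → V} (hw : ∀ N, Continuous (w N)) (hC : ∀ N x, ‖w N x‖ ≤ C)
    (hlim : ∀ x, Tendsto (fun N => w N x) atTop (𝓝 (v x))) :
    Tendsto (fun N => ∫ x in unitCube n, f (z + w N x)) atTop
      (𝓝 (∫ x in unitCube n, f (z + v x))) := by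
  have hfc := hf.continuous
  refine tendsto_integral_of_dominated_convergence (fun _ => ‖f z‖ + L * C) (fun N => ?_)
    (integrable_const _) (fun N => Eventually.of_forall fun x => ?_)
    (Eventually.of_forall fun x => (hfc.tendsto _).comp ((hlim x).const_add z))
  · have := hw N
    exact (by fun_prop : Continuous fun x => f (z + w N x)).aestronglyMeasurable
  · calc ‖f (z + w N x)‖ ≤ ‖f z‖ + ‖f (z + w N x) - f z‖ := norm_le_norm_add_norm_sub' _ _
      _ ≤ ‖f z‖ + L * ‖w N x‖ := by
        gcongr
        simpa [dist_eq_norm] using hf.dist_le_mul (z + w N x) z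
      _ ≤ ‖f z‖ + L * C := by gcongr; exact hC N x

variable {n : ℕ} {V U W : Type*} [NormedAddCommGroup V] [NormedSpace ℝ V]
  [NormedAddCommGroup U] [NormedSpace ℝ U] [NormedAddCommGroup W] [NormedSpace ℝ W]
  {v : Dom n → V}

theorem zero_mem_unitCube : (0 : Dom n) ∈ unitCube n := by
  simp [unitCube]

theorem closedUnitCube_ae_eq_unitCube : (closedUnitCube n : Set (Dom n)) =ᵐ[volume] unitCube n := by
  have hIcc := (Measure.univ_pi_Ioo_ae_eq_Icc (μ := fun _ : Fin n => (volume : Measure ℝ))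
    (f := fun _ => -(1 / 2)) (g := fun _ => 1 / 2)).symm
  rwa [← Set.pi_univ_Icc] at hIcc

theorem ZPeriodic.cubeConv_cosKernel_pow (hp : ZPeriodic v) (N : ℕ) (x : Dom n) :
    cubeConv (cosKernel n ^ N) v x = ∫ y in unitCube n, cosKernel n y ^ N • v (y + x) := by
  have hper : ZPeriodic fun y => cosKernel n (y - x) ^ N • v y := fun y m => by
    simp only [add_sub_right_comm, zPeriodic_cosKernel (y - x) m, hp y m]
  have hshift := hper.setIntegral_comp_add_right x
  simp only [add_sub_cancel_right] at hshift
  rw [hshift, cubeConv]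
  simp only [Pi.pow_apply, ← cosKernel_neg (x - _), neg_sub]

/-- The average of `v` against the normalized `N`-th power of `cosKernel`. -/
def cosMollify (N : ℕ) (v : Dom n → V) (x : Dom n) : V :=
  (∫ y in unitCube n, cosKernel n y ^ N)⁻¹ • cubeConv (cosKernel n ^ N) v x

theorem ZPeriodic.norm_cosMollify_le (hp : ZPeriodic v) {C : ℝ} (hC : ∀ x, ‖v x‖ ≤ C) (N : ℕ)
    (x : Dom n) : ‖cosMollify N v x‖ ≤ C := by
  have hpow (y : Dom n) : 0 ≤ cosKernel n y ^ N := pow_nonneg (cosKernel_nonneg y) N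
  have hmass : 0 ≤ ∫ y in unitCube n, cosKernel n y ^ N := integral_nonneg hpow
  have hconv : ‖∫ y in unitCube n, cosKernel n y ^ N • v (y + x)‖ ≤
      (∫ y in unitCube n, cosKernel n y ^ N) * C := by
    rw [← integral_mul_const]
    refine norm_integral_le_of_norm_le (integrableOn_unitCube_of_continuous
      ((continuous_cosKernel.pow N).mul_const C)) (Eventually.of_forall fun y => ?_)
    rw [norm_smul, Real.norm_of_nonneg (hpow y)]
    exact mul_le_mul_of_nonneg_left (hC _) (hpow y)
  rw [cosMollify, norm_smul, norm_inv, Real.norm_of_nonneg hmass, hp.cubeConv_cosKernel_pow,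
    inv_mul_eq_div]
  exact div_le_of_le_mul₀ hmass ((norm_nonneg _).trans (hC 0)) (hconv.trans_eq (mul_comm _ _))

theorem ZPeriodic.tendsto_cosMollify [CompleteSpace V] (hp : ZPeriodic v) (hv : Continuous v)
    (x : Dom n) : Tendsto (fun N => cosMollify N v x) atTop (𝓝 (v x)) := by
  have hlim := tendsto_setIntegral_pow_smul_of_unique_maximum_of_isCompact_of_continuousOn
    (μ := (volume : Measure (Dom n))) (x₀ := (0 : Dom n)) (g := fun y => v (y + x))
    (isCompact_closedUnitCube (n := n)) (c := cosKernel n) continuous_cosKernel.continuousOn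
    (fun y hy hy0 => cosKernel_lt_cosKernel_zero hy hy0) (fun y _ => cosKernel_nonneg y)
    (by rw [cosKernel_zero]; exact one_pos)
    (subset_closure (interior_maximal unitCube_subset_closedUnitCube isOpen_unitCube
      zero_mem_unitCube)) (by fun_prop)
  simpa only [zero_add, setIntegral_congr_set closedUnitCube_ae_eq_unitCube, cosMollify,
    hp.cubeConv_cosKernel_pow] using hlim

variable {A : (Fin n → ℕ) → (V →L[ℝ] W)} {k : ℕ} {B : (Fin n → ℕ) → (U →L[ℝ] V)} {l : ℕ}

theorem ExactPotential.aQuasiconvex_of_forall_le_cubeIntegral [CompleteSpace V]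
    (hAB : ExactPotential A k B l) {f : V → ℝ} {L : NNReal} (hf : LipschitzWith L f)
    (hcc : ∀ y u, CcSmooth (unitCube n) u → f y ≤ cubeIntegral B l f y u) :
    AQuasiconvex A k f := by
  refine ⟨hf.continuous, fun z v hv hp h0 hA => ?_⟩
  obtain ⟨C, -, hC⟩ := hp.exists_norm_le hv.continuous
  have hpot (N : ℕ) : HasPeriodicPotential B l (cosMollify N v) :=
    (hAB.hasPeriodicPotential_cubeConv hv hp h0 hA
      (cosKernel_pow_mem_evenTrigPolynomials N)).const_smul _
  choose w hw hwp hwB using hpot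
  refine ge_of_tendsto' (tendsto_setIntegral_comp_of_norm_le hf z (fun N => ?_)
    (hp.norm_cosMollify_le hC) (hp.tendsto_cosMollify hv.continuous)) fun N => ?_
  · rw [← hwB]
    exact (contDiff_opApply B l (hw N)).continuous
  · rw [← hwB]
    exact le_setIntegral_opApply_of_forall_le_cubeIntegral hf hcc z (hwp N) (hw N)

theorem ExactPotential.aQuasiconvex_qcEnvelope [CompleteSpace V] (hAB : ExactPotential A k B l)
    {Φ : V → ℝ} {L : NNReal} (h : LipschitzWith L Φ) (hb : CubeIntegralsBddBelow B l Φ) :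
    AQuasiconvex A k (qcEnvelope B l Φ) :=
  hAB.aQuasiconvex_of_forall_le_cubeIntegral (hb.lipschitzWith_qcEnvelope h)
    fun y _ hu => hb.qcEnvelope_le_cubeIntegral_qcEnvelope h y hu

end Mollification

section Periodization

variable {n : ℕ} {V W : Type*}

/-- The integer point nearest to `x`, up to sign: `x + cubeShift x` lies in the closed unit
cube. -/
def cubeShift (x : Dom n) : Fin n → ℤ := fun i => -round (x i)

/-- The `ℤⁿ`-periodic extension of the restriction of `v` to the unit cube. -/
def periodize (v : Dom n → V) (x : Dom n) : V := v (x + fun i => (cubeShift x i : ℝ))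

variable {v : Dom n → V}

theorem zPeriodic_periodize : ZPeriodic (periodize v) := by
  intro x m
  refine congrArg v (funext fun i => ?_)
  simp only [cubeShift, Pi.add_apply, round_add_intCast]
  push_cast
  ring

theorem periodize_of_mem_unitCube {x : Dom n} (hx : x ∈ unitCube n) : periodize v x = v x := by
  refine congrArg v (funext fun i => ?_)
  have hi := hx i (Set.mem_univ i)
  have hround : round (x i) = 0 := round_eq_zero_iff.2 ⟨by linarith [hi.1], by linarith [hi.2]⟩
  simp [cubeShift, hround]

theorem isClosed_integerLattice : IsClosed (integerLattice n : Set (Dom n)) := by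
  have hpi : (integerLattice n : Set (Dom n)) = Set.univ.pi fun _ => Set.range ((↑) : ℤ → ℝ) := by
    ext x
    refine ⟨?_, fun hx => ?_⟩
    · rintro ⟨m, rfl⟩ i -
      exact ⟨m i, rfl⟩
    · choose m hm using fun i => hx i (Set.mem_univ i)
      exact ⟨m, funext hm⟩
  rw [hpi]
  exact isClosed_set_pi fun _ _ => Int.isClosedEmbedding_coe_real.isClosed_range

variable [NormedAddCommGroup V]

open scoped Pointwise in
theorem periodize_eventuallyEq_comp_add (hv : tsupport v ⊆ unitCube n) (x : Dom n) :
    ∃ b : Dom n, periodize v =ᶠ[𝓝 x] fun y => v (y + b) := by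
  have hcompact : IsCompact (tsupport v) := isCompact_closedUnitCube.of_isClosed_subset
    (isClosed_tsupport _) (hv.trans unitCube_subset_closedUnitCube)
  have hclosed : IsClosed (tsupport v + (integerLattice n : Set (Dom n))) :=
    isClosed_integerLattice.add_left_of_isCompact hcompact
  by_cases hx : x ∈ tsupport v + (integerLattice n : Set (Dom n))
  · obtain ⟨t, ht, _, ⟨m, rfl⟩, rfl⟩ := hx
    refine ⟨fun i => ((-m i : ℤ) : ℝ), ?_⟩
    have hcube : ∀ᶠ y in 𝓝 (t + fun i => (m i : ℝ)),
        (y + fun i => ((-m i : ℤ) : ℝ)) ∈ unitCube n := by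
      refine (continuous_id.add continuous_const).continuousAt.eventually_mem
        (isOpen_unitCube.mem_nhds (hv ?_))
      convert ht using 1
      funext i
      simp
    filter_upwards [hcube] with y hy
    rw [← periodize_of_mem_unitCube (v := v) hy, zPeriodic_periodize]
  · refine ⟨0, ?_⟩
    filter_upwards [hclosed.isOpen_compl.mem_nhds hx] with y hy
    have hvanish (m : Fin n → ℤ) : v (y + fun i => (m i : ℝ)) = 0 := by
      refine image_eq_zero_of_notMem_tsupport fun hmem => hy ⟨_, hmem, _, ⟨-m, rfl⟩, ?_⟩
      funext i
      simp
    rw [periodize, hvanish, ← hvanish 0]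
    simp [← Pi.zero_def]

variable [NormedSpace ℝ V] [NormedAddCommGroup W] [NormedSpace ℝ W]

theorem AQuasiconvex.le_setIntegral_of_tsupport_subset {A : (Fin n → ℕ) → (V →L[ℝ] W)} {k : ℕ}
    {f : V → ℝ} (hf : AQuasiconvex A k f) (z : V) (hv : ContDiff ℝ ∞ v)
    (hsupp : tsupport v ⊆ unitCube n) (h0 : ∫ x in unitCube n, v x = 0)
    (hA : ∀ x, opApply A k v x = 0) : f z ≤ ∫ x in unitCube n, f (z + v x) := by
  have hsmooth : ContDiff ℝ ∞ (periodize v) := contDiff_iff_contDiffAt.2 fun x => by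
    obtain ⟨b, hb⟩ := periodize_eventuallyEq_comp_add hsupp x
    exact (hv.comp (contDiff_id.add contDiff_const)).contDiffAt.congr_of_eventuallyEq hb
  have hker (x : Dom n) : opApply A k (periodize v) x = 0 := by
    obtain ⟨b, hb⟩ := periodize_eventuallyEq_comp_add hsupp x
    rw [(opApply_eventuallyEq A k hb).self_of_nhds, opApply_comp_add_right A k hv, hA]
  have h0' : ∫ x in unitCube n, periodize v x = 0 :=
    (setIntegral_congr_fun measurableSet_unitCube fun _ => periodize_of_mem_unitCube).trans h0
  refine (hf.2 z _ hsmooth zPeriodic_periodize h0' hker).trans_eq ?_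
  exact setIntegral_congr_fun measurableSet_unitCube fun x hx => by
    simp only [periodize_of_mem_unitCube hx]

end Periodization

section BallCompactification

variable {V : Type*} [NormedAddCommGroup V] [NormedSpace ℝ V] {G : V → ℝ}

/-- The identification `v ↦ v / (1 + ‖v‖)` of `V` with its open unit ball; the unit sphere becomes
the sphere at infinity. -/
def toBall (v : V) : V := (1 + ‖v‖)⁻¹ • v

/-- The function `G` on the unit ball, made positively one-homogeneous in the pair `(s, z)`.
At `s = 1` it is the integrand on `V` represented by `G`, at `s = 0` the recession function of
that integrand. -/
def homogenize (G : V → ℝ) (s : ℝ) (z : V) : ℝ := (s + ‖z‖) * G ((s + ‖z‖)⁻¹ • z)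

/-- The integrand on `V` represented by the function `G` on the closed unit ball. -/
def ballLift (G : V → ℝ) (v : V) : ℝ := homogenize G 1 v

theorem ballLift_eq (G : V → ℝ) (v : V) : ballLift G v = (1 + ‖v‖) * G (toBall v) := rfl

theorem one_add_norm_pos {E : Type*} [SeminormedAddGroup E] (v : E) : 0 < 1 + ‖v‖ := by
  positivity

theorem norm_toBall_lt_one (v : V) : ‖toBall v‖ < 1 := by
  have hpos := one_add_norm_pos v
  rw [toBall, norm_smul, norm_inv, Real.norm_of_nonneg hpos.le, inv_mul_lt_iff₀ hpos]
  linarith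

theorem toBall_mem_closedBall (v : V) : toBall v ∈ Metric.closedBall (0 : V) 1 := by
  simpa using (norm_toBall_lt_one v).le

theorem smul_toBall (v : V) : (1 + ‖v‖) • toBall v = v := by
  rw [toBall, smul_smul, mul_inv_cancel₀ (one_add_norm_pos v).ne', one_smul]

theorem one_sub_norm_toBall (v : V) : 1 - ‖toBall v‖ = (1 + ‖v‖)⁻¹ := by
  have hpos := one_add_norm_pos v
  rw [toBall, norm_smul, norm_inv, Real.norm_of_nonneg hpos.le]
  field_simp
  ring

theorem toBall_inv_one_sub_norm_smul {y : V} (hy : ‖y‖ < 1) :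
    toBall ((1 - ‖y‖)⁻¹ • y) = y := by
  have hpos : 0 < 1 - ‖y‖ := by linarith
  have hscale : (1 + (1 - ‖y‖)⁻¹ * ‖y‖)⁻¹ * (1 - ‖y‖)⁻¹ = 1 := by
    rw [← mul_inv]
    field_simp
    ring
  rw [toBall, norm_smul, norm_inv, Real.norm_of_nonneg hpos.le, smul_smul, hscale, one_smul]

theorem continuous_toBall : Continuous (toBall : V → V) :=
  (Continuous.inv₀ (by fun_prop) fun v => (one_add_norm_pos v).ne').smul continuous_id

theorem one_add_norm_mul_norm_toBall_sub_le (a b : V) :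
    (1 + ‖a‖) * ‖toBall a - toBall b‖ ≤ 2 * ‖a - b‖ := by
  have hsplit : (1 + ‖a‖) • (toBall a - toBall b) = (a - b) + (‖b‖ - ‖a‖) • toBall b := by
    rw [smul_sub, smul_toBall]
    nth_rw 2 [← smul_toBall b]
    module
  calc (1 + ‖a‖) * ‖toBall a - toBall b‖ = ‖(a - b) + (‖b‖ - ‖a‖) • toBall b‖ := by
        rw [← hsplit, norm_smul, Real.norm_of_nonneg (one_add_norm_pos a).le]
    _ ≤ ‖a - b‖ + |‖b‖ - ‖a‖| * ‖toBall b‖ :=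
      (norm_add_le _ _).trans_eq (by rw [norm_smul, Real.norm_eq_abs])
    _ ≤ ‖a - b‖ + ‖b - a‖ * 1 := by
      gcongr
      · exact abs_norm_sub_norm_le b a
      · exact (norm_toBall_lt_one b).le
    _ = 2 * ‖a - b‖ := by rw [norm_sub_rev b a]; ring

theorem continuous_ballLift (hG : ContinuousOn G (Metric.closedBall 0 1)) :
    Continuous (ballLift G) :=
  (by fun_prop : Continuous fun v : V => 1 + ‖v‖).mul
    (hG.comp_continuous continuous_toBall toBall_mem_closedBall)

theorem homogenize_zero_of_norm_eq_one (G : V → ℝ) {w : V} (hw : ‖w‖ = 1) :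
    homogenize G 0 w = G w := by
  simp [homogenize, hw]

theorem abs_homogenize_le {C : ℝ} (hC : ∀ y ∈ Metric.closedBall (0 : V) 1, |G y| ≤ C) {s : ℝ}
    (hs : 0 ≤ s) (z : V) : |homogenize G s z| ≤ C * (s + ‖z‖) := by
  have hmem : (s + ‖z‖)⁻¹ • z ∈ Metric.closedBall (0 : V) 1 := by
    rw [mem_closedBall_zero_iff, norm_smul, norm_inv, Real.norm_of_nonneg (by positivity)]
    exact inv_mul_le_one_of_le₀ (by linarith) (by positivity)
  rw [homogenize, abs_mul, abs_of_nonneg (by positivity), mul_comm]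
  exact mul_le_mul_of_nonneg_right (hC _ hmem) (by positivity)

theorem tendsto_homogenize [ProperSpace V] (hG : Continuous G) (x : V) :
    Tendsto (fun p : ℝ × V => homogenize G p.1 p.2) (𝓝[≥] 0 ×ˢ 𝓝 x)
      (𝓝 (homogenize G 0 x)) := by
  have hle : 𝓝[≥] (0 : ℝ) ×ˢ 𝓝 x ≤ 𝓝 (0, x) := by
    rw [nhds_prod_eq]
    exact Filter.prod_mono nhdsWithin_le_nhds le_rfl
  rcases eq_or_ne x 0 with rfl | hx
  · obtain ⟨C, hC⟩ :=
      (isCompact_closedBall (0 : V) 1).exists_bound_of_continuousOn hG.continuousOn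
    have hlim : Tendsto (fun p : ℝ × V => C * (p.1 + ‖p.2‖)) (𝓝 (0, 0)) (𝓝 0) :=
      (by fun_prop : Continuous fun p : ℝ × V => C * (p.1 + ‖p.2‖)).tendsto' _ _ (by simp)
    have hzero : homogenize G 0 (0 : V) = 0 := by simp [homogenize]
    rw [hzero]
    refine squeeze_zero_norm' ?_ (hlim.mono_left hle)
    filter_upwards [Eventually.prod_inl self_mem_nhdsWithin (𝓝 (0 : V))] with p hp
    exact abs_homogenize_le hC hp _
  · have hcont : ContinuousAt (fun p : ℝ × V => homogenize G p.1 p.2) (0, x) :=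
      ContinuousAt.mul (by fun_prop) (hG.continuousAt.comp (ContinuousAt.smul
        (ContinuousAt.inv₀ (by fun_prop) (by simpa using hx)) (by fun_prop)))
    exact hcont.tendsto.mono_left hle

theorem ballLift_smul_div (G : V → ℝ) {t : ℝ} (ht : 0 < t) (z : V) :
    ballLift G (t • z) / t = homogenize G t⁻¹ z := by
  have hnorm : 1 + ‖t • z‖ = t * (t⁻¹ + ‖z‖) := by
    rw [norm_smul, Real.norm_of_nonneg ht.le, mul_add, mul_inv_cancel₀ ht.ne']
  have hinv : (t * (t⁻¹ + ‖z‖))⁻¹ * t = (t⁻¹ + ‖z‖)⁻¹ := by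
    rw [mul_inv, mul_right_comm, inv_mul_cancel₀ ht.ne', one_mul]
  rw [ballLift, homogenize, homogenize, hnorm, smul_smul, hinv, mul_assoc,
    mul_div_cancel_left₀ _ ht.ne']

theorem tendsto_ballLift_smul_div [ProperSpace V] (hG : Continuous G) (x : V) :
    Tendsto (fun p : ℝ × V => ballLift G (p.1 • p.2) / p.1) (atTop ×ˢ 𝓝 x)
      (𝓝 (homogenize G 0 x)) := by
  have hinv : Tendsto (fun t : ℝ => t⁻¹) atTop (𝓝[≥] 0) :=
    tendsto_inv_atTop_nhdsGT_zero.mono_right (nhdsWithin_mono _ Set.Ioi_subset_Ici_self)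
  refine ((tendsto_homogenize hG x).comp (hinv.prodMap (tendsto_id (x := 𝓝 x)))).congr' ?_
  filter_upwards [(eventually_gt_atTop (0 : ℝ)).prod_inl (𝓝 x)] with p hp
  simp [ballLift_smul_div G hp]

theorem hasRec_ballLift [ProperSpace V] (hG : Continuous G) :
    HasRec (ballLift G) (homogenize G 0) := by
  have hcont : Continuous (homogenize G 0) := continuous_iff_continuousAt.2 fun x =>
    (tendsto_homogenize hG x).comp
      ((tendsto_nhdsWithin_iff.2 ⟨tendsto_const_nhds, by simp⟩).prodMk tendsto_id)
  refine tendstoLocallyUniformly_iff_forall_tendsto.2 fun x => ?_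
  have hfst : Tendsto (fun p : ℝ × V => homogenize G 0 p.2) (atTop ×ˢ 𝓝 x)
      (𝓝 (homogenize G 0 x)) := (hcont.tendsto x).comp tendsto_snd
  exact (hfst.prodMk_nhds (tendsto_ballLift_smul_div hG x)).mono_right (nhds_le_uniformity _)

theorem memH_ballLift [ProperSpace V] (hG : Continuous G) : MemH (ballLift G) := by
  obtain ⟨C, hC⟩ :=
    (isCompact_closedBall (0 : V) 1).exists_bound_of_continuousOn hG.continuousOn
  exact ⟨continuous_ballLift hG.continuousOn, ⟨C, fun v => abs_homogenize_le hC zero_le_one v⟩, _,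
    hasRec_ballLift hG⟩

theorem HasRec.rrec_eq {Φ g : V → ℝ} (h : HasRec Φ g) (w : V) : rrec Φ w = g w :=
  ((tendstoLocallyUniformlyOn_univ.2 h).tendsto_at (Set.mem_univ w)).limsup_eq

theorem rrec_ballLift [ProperSpace V] (hG : Continuous G) {w : V} (hw : ‖w‖ = 1) :
    rrec (ballLift G) w = G w := by
  rw [(hasRec_ballLift hG).rrec_eq, homogenize_zero_of_norm_eq_one G hw]

theorem lipschitzWith_ballLift {L C : NNReal} (hG : LipschitzOnWith L G (Metric.closedBall 0 1))
    (hC : ∀ y ∈ Metric.closedBall (0 : V) 1, |G y| ≤ C) :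
    LipschitzWith (C + 2 * L) (ballLift G) := by
  refine LipschitzWith.of_le_add_mul _ fun a b => ?_
  have hball : G (toBall a) ≤ G (toBall b) + L * ‖toBall a - toBall b‖ := by
    have hdist := hG.dist_le_mul _ (toBall_mem_closedBall a) _ (toBall_mem_closedBall b)
    rw [Real.dist_eq, dist_eq_norm] at hdist
    linarith [le_abs_self (G (toBall a) - G (toBall b))]
  have hnorm : (‖a‖ - ‖b‖) * G (toBall b) ≤ ‖a - b‖ * C := by
    refine (le_abs_self _).trans ?_
    rw [abs_mul]
    gcongr
    · exact abs_norm_sub_norm_le a b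
    · exact hC _ (toBall_mem_closedBall b)
  have hfactor := mul_le_mul_of_nonneg_left hball (one_add_norm_pos a).le
  have hL := mul_le_mul_of_nonneg_left (one_add_norm_mul_norm_toBall_sub_le a b) L.coe_nonneg
  rw [ballLift_eq, ballLift_eq, dist_eq_norm]
  push_cast
  linarith

theorem exists_lipschitzWith_ballLift [ProperSpace V] (hG : ContDiff ℝ 1 G) :
    ∃ L, LipschitzWith L (ballLift G) := by
  obtain ⟨C, hC⟩ := (isCompact_closedBall (0 : V) 1).exists_bound_of_continuousOn
    hG.continuous.continuousOn
  obtain ⟨K, hK⟩ := hG.contDiffOn.exists_lipschitzOnWith one_ne_zero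
    (convex_closedBall (0 : V) 1) (isCompact_closedBall (0 : V) 1)
  exact ⟨_, lipschitzWith_ballLift hK fun y hy => (hC y hy).trans (Real.le_coe_toNNReal C)⟩

/-- The function on the open unit ball representing the integrand `f`, inverse to `ballLift`. -/
def ballRep (f : V → ℝ) (y : V) : ℝ := (1 - ‖y‖) * f ((1 - ‖y‖)⁻¹ • y)

theorem ballRep_toBall (f : V → ℝ) (v : V) : ballRep f (toBall v) = f v / (1 + ‖v‖) := by
  rw [ballRep, one_sub_norm_toBall, inv_inv, smul_toBall, inv_mul_eq_div]

theorem continuousAt_ballRep {f : V → ℝ} (hf : Continuous f) {y : V} (hy : ‖y‖ < 1) :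
    ContinuousAt (ballRep f) y :=
  ContinuousAt.mul (by fun_prop) (hf.continuousAt.comp (ContinuousAt.smul
    (ContinuousAt.inv₀ (by fun_prop) (sub_pos.2 hy).ne') continuousAt_id))

end BallCompactification

section LinearGrowthBound

variable {E : Type*} [NormedAddCommGroup E] {f : E → ℝ} {c : ℝ}

theorem abs_div_one_add_norm_le (hc : ∀ z, |f z| ≤ c * (1 + ‖z‖)) (v : E) :
    |f v / (1 + ‖v‖)| ≤ c := by
  rw [abs_div, abs_of_pos (one_add_norm_pos v), div_le_iff₀ (one_add_norm_pos v)]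
  exact hc v

theorem integrable_of_abs_le_mul_one_add_norm [MeasurableSpace E] [OpensMeasurableSpace E]
    {μ : Measure E} [IsFiniteMeasure μ] (hc : ∀ z, |f z| ≤ c * (1 + ‖z‖))
    (hmom : Integrable (fun v : E => ‖v‖) μ) (hf : Continuous f) : Integrable f μ :=
  Integrable.mono' (((integrable_const (1 : ℝ)).add hmom).const_mul c) hf.aestronglyMeasurable
    (Eventually.of_forall hc)

end LinearGrowthBound

section SupConvolution

variable {V : Type*} [NormedAddCommGroup V] [NormedSpace ℝ V]

/-- The `m`-Lipschitz sup-convolution over the closed unit ball of the representative of `f`.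
For `f` of linear growth these decrease to `f` in the interior and to `f^∞` on the sphere. -/
def ballSupConv (f : V → ℝ) (m : NNReal) (y : V) : ℝ :=
  ⨆ v : V, (f v / (1 + ‖v‖) - m * ‖toBall v - y‖)

variable {f : V → ℝ} {c : ℝ}

theorem sub_mul_norm_toBall_sub_le (hc : ∀ z, |f z| ≤ c * (1 + ‖z‖)) (m : NNReal) (v y : V) :
    f v / (1 + ‖v‖) - m * ‖toBall v - y‖ ≤ c := by
  have hnonneg : 0 ≤ (m : ℝ) * ‖toBall v - y‖ := by positivity
  linarith [(abs_le.1 (abs_div_one_add_norm_le hc v)).2]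

theorem bddAbove_range_sub_mul_norm_toBall_sub (hc : ∀ z, |f z| ≤ c * (1 + ‖z‖)) (m : NNReal)
    (y : V) : BddAbove (Set.range fun v : V => f v / (1 + ‖v‖) - m * ‖toBall v - y‖) :=
  ⟨c, Set.forall_mem_range.2 fun v => sub_mul_norm_toBall_sub_le hc m v y⟩

theorem lipschitzWith_ballSupConv (hc : ∀ z, |f z| ≤ c * (1 + ‖z‖)) (m : NNReal) :
    LipschitzWith m (ballSupConv f m) := by
  refine LipschitzWith.of_le_add_mul m fun y y' => ciSup_le fun v => ?_
  have hsup := le_ciSup (bddAbove_range_sub_mul_norm_toBall_sub hc m y') v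
  have htri := mul_le_mul_of_nonneg_left
    (norm_sub_le_norm_sub_add_norm_sub (toBall v) y y') m.coe_nonneg
  rw [dist_eq_norm]
  change _ ≤ ballSupConv f m y' at hsup
  linarith

theorem div_one_add_norm_le_ballSupConv (hc : ∀ z, |f z| ≤ c * (1 + ‖z‖)) (m : NNReal) (v : V) :
    f v / (1 + ‖v‖) ≤ ballSupConv f m (toBall v) := by
  simpa [ballSupConv] using le_ciSup (bddAbove_range_sub_mul_norm_toBall_sub hc m (toBall v)) v

theorem le_ballLift_ballSupConv (hc : ∀ z, |f z| ≤ c * (1 + ‖z‖)) (m : NNReal) (v : V) :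
    f v ≤ ballLift (ballSupConv f m) v := by
  rw [ballLift_eq, ← div_le_iff₀' (one_add_norm_pos v)]
  exact div_one_add_norm_le_ballSupConv hc m v

theorem abs_ballSupConv_le (hc : ∀ z, |f z| ≤ c * (1 + ‖z‖)) (m : NNReal) {y : V}
    (hy : y ∈ Metric.closedBall (0 : V) 1) : |ballSupConv f m y| ≤ c := by
  have hclosed : IsClosed {y | -c ≤ ballSupConv f m y} :=
    isClosed_le continuous_const (lipschitzWith_ballSupConv hc m).continuous
  have hball : Metric.ball (0 : V) 1 ⊆ {y | -c ≤ ballSupConv f m y} := fun y hy => by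
    have hsup := div_one_add_norm_le_ballSupConv hc m ((1 - ‖y‖)⁻¹ • y)
    rw [toBall_inv_one_sub_norm_smul (mem_ball_zero_iff.1 hy)] at hsup
    exact (abs_le.1 (abs_div_one_add_norm_le hc _)).1.trans hsup
  have hclosure := closure_minimal hball hclosed
  rw [closure_ball (0 : V) one_ne_zero] at hclosure
  exact abs_le.2 ⟨hclosure hy, ciSup_le fun v => sub_mul_norm_toBall_sub_le hc m v y⟩

theorem eventually_ballSupConv_le (hc : ∀ z, |f z| ≤ c * (1 + ‖z‖)) {y : V} {a δ : ℝ} (hδ : 0 < δ)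
    (h : ∀ v, ‖toBall v - y‖ < δ → f v / (1 + ‖v‖) ≤ a) :
    ∀ᶠ m : ℕ in atTop, ballSupConv f m y ≤ a := by
  filter_upwards [tendsto_natCast_atTop_atTop.eventually_ge_atTop ((c - a) / δ)] with m hm
  rw [div_le_iff₀ hδ] at hm
  refine ciSup_le fun v => ?_
  rw [NNReal.coe_natCast]
  by_cases hv : ‖toBall v - y‖ < δ
  · have hnonneg : 0 ≤ (m : ℝ) * ‖toBall v - y‖ := by positivity
    linarith [h v hv]
  · have hfar : (m : ℝ) * δ ≤ m * ‖toBall v - y‖ :=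
      mul_le_mul_of_nonneg_left (not_lt.1 hv) m.cast_nonneg
    linarith [(abs_le.1 (abs_div_one_add_norm_le hc v)).2]

theorem tendsto_ballLift_ballSupConv (hc : ∀ z, |f z| ≤ c * (1 + ‖z‖)) (hf : Continuous f) (v : V) :
    Tendsto (fun m : ℕ => ballLift (ballSupConv f m) v) atTop (𝓝 (f v)) := by
  suffices hball : Tendsto (fun m : ℕ => ballSupConv f m (toBall v)) atTop
      (𝓝 (f v / (1 + ‖v‖))) by
    have hlift := hball.const_mul (1 + ‖v‖)
    rwa [mul_div_cancel₀ _ (one_add_norm_pos v).ne'] at hlift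
  refine tendsto_order.2 ⟨fun a ha => Eventually.of_forall fun m =>
    ha.trans_le (div_one_add_norm_le_ballSupConv hc m v), fun a ha => ?_⟩
  obtain ⟨b, hb, hba⟩ := exists_between ha
  rw [← ballRep_toBall] at hb
  obtain ⟨δ, hδ, hnear⟩ := Metric.eventually_nhds_iff.1
    ((continuousAt_ballRep hf (norm_toBall_lt_one v)).eventually_lt continuousAt_const hb)
  filter_upwards [eventually_ballSupConv_le hc (y := toBall v) (a := b) hδ fun v' hv' => by
    rw [← ballRep_toBall]
    exact (hnear (by rwa [dist_eq_norm])).le] with m hm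
  exact hm.trans_lt hba

theorem eventually_neg_le_smul_div (hc : ∀ z, |f z| ≤ c * (1 + ‖z‖)) (w : V) :
    ∀ᶠ p : ℝ × V in atTop ×ˢ 𝓝 w, -(c * (2 + ‖w‖)) ≤ f (p.1 • p.2) / p.1 := by
  have hc0 : 0 ≤ c := by simpa using (abs_nonneg _).trans (hc 0)
  have hnear : ∀ᶠ z in 𝓝 w, ‖z‖ < ‖w‖ + 1 :=
    continuous_norm.continuousAt.eventually_lt continuousAt_const (by simp)
  filter_upwards [(eventually_ge_atTop (1 : ℝ)).prod_inl (𝓝 w), hnear.prod_inr atTop]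
    with ⟨t, z⟩ ht hz
  have ht0 : 0 < t := zero_lt_one.trans_le ht
  have hscale : 1 + t * ‖z‖ ≤ t * (2 + ‖w‖) := by nlinarith
  have hgrowth := (abs_le.1 (hc (t • z))).1
  rw [norm_smul, Real.norm_of_nonneg ht0.le] at hgrowth
  rw [le_div_iff₀ ht0]
  linarith [mul_le_mul_of_nonneg_left hscale hc0]

theorem urec_le_of_le_ballLift [ProperSpace V] (hc : ∀ z, |f z| ≤ c * (1 + ‖z‖)) {G : V → ℝ}
    (hG : Continuous G) (hle : ∀ v, f v ≤ ballLift G v) {w : V} (hw : ‖w‖ = 1) :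
    urec f w ≤ G w := by
  have hlim := tendsto_ballLift_smul_div hG w
  rw [← homogenize_zero_of_norm_eq_one G hw, urec, ← hlim.limsup_eq]
  refine limsup_le_limsup ?_
    (isCoboundedUnder_le_of_eventually_le _ (eventually_neg_le_smul_div hc w))
    hlim.isBoundedUnder_le
  filter_upwards [(eventually_gt_atTop (0 : ℝ)).prod_inl (𝓝 w)] with p hp
  exact div_le_div_of_nonneg_right (hle _) hp.le

theorem isBoundedUnder_smul_div [ProperSpace V] (hc : ∀ z, |f z| ≤ c * (1 + ‖z‖)) (w : V) :
    IsBoundedUnder (· ≤ ·) (atTop ×ˢ 𝓝 w) fun p : ℝ × V => f (p.1 • p.2) / p.1 := by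
  refine (tendsto_ballLift_smul_div (lipschitzWith_ballSupConv hc 0).continuous
    w).isBoundedUnder_le.mono_le ?_
  filter_upwards [(eventually_gt_atTop (0 : ℝ)).prod_inl (𝓝 w)] with p hp
  exact div_le_div_of_nonneg_right (le_ballLift_ballSupConv hc 0 _) hp.le

theorem exists_forall_norm_toBall_sub_lt_of_urec_lt [ProperSpace V]
    (hc : ∀ z, |f z| ≤ c * (1 + ‖z‖)) {w : V} (hw : ‖w‖ = 1) {b : ℝ} (hb : urec f w < b) :
    ∃ δ > 0, ∀ v, ‖toBall v - w‖ < δ → f v / (1 + ‖v‖) ≤ b := by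
  obtain ⟨_, hlarge, _, hnear, hlt⟩ :=
    eventually_prod_iff.1 (eventually_lt_of_limsup_lt hb (isBoundedUnder_smul_div hc w))
  obtain ⟨T, hT⟩ := eventually_atTop.1 hlarge
  obtain ⟨δ, hδ, hnear⟩ := Metric.eventually_nhds_iff.1 hnear
  have hT1 : 0 < max T 1 := by positivity
  refine ⟨min δ (max T 1)⁻¹, by positivity, fun v hv => ?_⟩
  have hnorm : 1 - ‖toBall v‖ < (max T 1)⁻¹ := by
    refine lt_of_le_of_lt ?_ (hv.trans_le (min_le_right _ _))
    rw [← hw, norm_sub_rev]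
    exact norm_sub_norm_le _ _
  rw [one_sub_norm_toBall, inv_lt_inv₀ (one_add_norm_pos v) hT1] at hnorm
  have hvb := hlt (hT (1 + ‖v‖) ((le_max_left _ _).trans hnorm.le))
    (hnear (y := toBall v) (by rw [dist_eq_norm]; exact hv.trans_le (min_le_left _ _)))
  simp only [smul_toBall] at hvb
  exact hvb.le

theorem tendsto_ballSupConv_urec [ProperSpace V] (hc : ∀ z, |f z| ≤ c * (1 + ‖z‖)) {w : V}
    (hw : ‖w‖ = 1) : Tendsto (fun m : ℕ => ballSupConv f m w) atTop (𝓝 (urec f w)) := by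
  refine tendsto_order.2 ⟨fun a ha => Eventually.of_forall fun m => ha.trans_le
    (urec_le_of_le_ballLift hc (lipschitzWith_ballSupConv hc m).continuous
      (le_ballLift_ballSupConv hc m) hw), fun a ha => ?_⟩
  obtain ⟨b, hb, hba⟩ := exists_between ha
  obtain ⟨δ, hδ, hle⟩ := exists_forall_norm_toBall_sub_lt_of_urec_lt hc hw hb
  filter_upwards [eventually_ballSupConv_le hc hδ hle] with m hm
  exact hm.trans_lt hba

variable [MeasurableSpace V] [BorelSpace V]

theorem tendsto_integral_ballLift_ballSupConv {ν₀ : Measure V} [IsFiniteMeasure ν₀]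
    (hc : ∀ z, |f z| ≤ c * (1 + ‖z‖)) (hmom : Integrable (fun v : V => ‖v‖) ν₀)
    (hf : Continuous f) :
    Tendsto (fun m : ℕ => ∫ v, ballLift (ballSupConv f m) v ∂ν₀) atTop (𝓝 (∫ v, f v ∂ν₀)) :=
  tendsto_integral_of_dominated_convergence (fun v => c * (1 + ‖v‖))
    (fun m => (continuous_ballLift
      (lipschitzWith_ballSupConv hc m).continuous.continuousOn).aestronglyMeasurable)
    (((integrable_const (1 : ℝ)).add hmom).const_mul c)
    (fun m => Eventually.of_forall
      (abs_homogenize_le (fun _ => abs_ballSupConv_le hc m) zero_le_one))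
    (Eventually.of_forall (tendsto_ballLift_ballSupConv hc hf))

variable [ProperSpace V] {νInf : Measure (Metric.sphere (0 : V) 1)} [IsFiniteMeasure νInf]

theorem tendsto_integral_ballSupConv (hc : ∀ z, |f z| ≤ c * (1 + ‖z‖)) :
    Tendsto (fun m : ℕ => ∫ w, ballSupConv f m (w : V) ∂νInf) atTop
      (𝓝 (∫ w, urec f (w : V) ∂νInf)) :=
  tendsto_integral_of_dominated_convergence (fun _ => c)
    (fun m => ((lipschitzWith_ballSupConv hc m).continuous.comp
      continuous_subtype_val).aestronglyMeasurable)
    (integrable_const c)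
    (fun m => Eventually.of_forall fun _ => abs_ballSupConv_le hc m (by simp))
    (Eventually.of_forall fun _ => tendsto_ballSupConv_urec hc (by simp))

theorem integrable_urec (hc : ∀ z, |f z| ≤ c * (1 + ‖z‖)) :
    Integrable (fun w : Metric.sphere (0 : V) 1 => urec f w) νInf := by
  have hlim (w : Metric.sphere (0 : V) 1) :
      Tendsto (fun m : ℕ => ballSupConv f m (w : V)) atTop (𝓝 (urec f w)) :=
    tendsto_ballSupConv_urec hc (by simp)
  have hmeas : AEStronglyMeasurable (fun w : Metric.sphere (0 : V) 1 => urec f w) νInf :=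
    aestronglyMeasurable_of_tendsto_ae atTop
      (fun m : ℕ => ((lipschitzWith_ballSupConv hc m).continuous.comp
        continuous_subtype_val).aestronglyMeasurable) (Eventually.of_forall hlim)
  exact Integrable.mono' (integrable_const c) hmeas (Eventually.of_forall fun w =>
    le_of_tendsto' (hlim w).abs fun m => abs_ballSupConv_le hc m (by simp))

end SupConvolution

section RecessionRepresentative

variable {V : Type*} [NormedAddCommGroup V] [NormedSpace ℝ V] {Φ g : V → ℝ}

theorem HasRec.continuous (h : HasRec Φ g) (hΦ : Continuous Φ) : Continuous g :=
  TendstoLocallyUniformly.continuous h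
    (Eventually.of_forall fun t => by fun_prop : ∀ᶠ _ in atTop, _).frequently

theorem tendsto_inv_one_sub_norm_atTop {E : Type*} [SeminormedAddGroup E] {y : E}
    (hy : ‖y‖ = 1) :
    Tendsto (fun y' : E => (1 - ‖y'‖)⁻¹) (𝓝[Metric.ball 0 1] y) atTop := by
  refine tendsto_inv_nhdsGT_zero.comp (tendsto_nhdsWithin_iff.2 ⟨?_, ?_⟩)
  · have hcont : Continuous fun y' : E => 1 - ‖y'‖ := by fun_prop
    exact (hcont.tendsto' y 0 (by simp [hy])).mono_left nhdsWithin_le_nhds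
  · filter_upwards [self_mem_nhdsWithin] with y' hy'
    exact sub_pos.2 (mem_ball_zero_iff.1 hy')

theorem HasRec.tendsto_ballRep (h : HasRec Φ g) (hΦ : Continuous Φ) {y : V} (hy : ‖y‖ = 1) :
    Tendsto (ballRep Φ) (𝓝[Metric.ball 0 1] y) (𝓝 (g y)) := by
  have hid : Tendsto (fun y' : V => y') (𝓝[Metric.ball 0 1] y) (𝓝 y) :=
    tendsto_id.mono_left nhdsWithin_le_nhds
  have hclose := (tendstoLocallyUniformly_iff_forall_tendsto.1 h y).comp
    ((tendsto_inv_one_sub_norm_atTop hy).prodMk hid)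
  have hg := ((h.continuous hΦ).tendsto y).comp hid
  refine (hg.congr_uniformity hclose).congr fun y' => ?_
  rw [ballRep, div_inv_eq_mul, mul_comm]

/-- The function on the closed unit ball representing an integrand `Φ` with recession function
`g`. -/
def ballExtension (Φ g : V → ℝ) (y : V) : ℝ := if ‖y‖ < 1 then ballRep Φ y else g y

theorem ballExtension_of_norm_eq_one (Φ g : V → ℝ) {w : V} (hw : ‖w‖ = 1) :
    ballExtension Φ g w = g w :=
  if_neg hw.not_lt

theorem ballLift_ballExtension (Φ g : V → ℝ) : ballLift (ballExtension Φ g) = Φ := by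
  ext v
  rw [ballLift_eq, ballExtension, if_pos (norm_toBall_lt_one v), ballRep_toBall,
    mul_div_cancel₀ _ (one_add_norm_pos v).ne']

theorem HasRec.continuousOn_ballExtension (h : HasRec Φ g) (hΦ : Continuous Φ) :
    ContinuousOn (ballExtension Φ g) (Metric.closedBall 0 1) := by
  have hball : Set.EqOn (ballExtension Φ g) (ballRep Φ) (Metric.ball 0 1) := fun y hy =>
    if_pos (mem_ball_zero_iff.1 hy)
  have hsphere : Set.EqOn (ballExtension Φ g) g (Metric.sphere 0 1) := fun y hy =>
    ballExtension_of_norm_eq_one Φ g (mem_sphere_zero_iff_norm.1 hy)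
  intro y hy
  rcases (mem_closedBall_zero_iff.1 hy).lt_or_eq with hlt | heq
  · have hmem : y ∈ Metric.ball (0 : V) 1 := mem_ball_zero_iff.2 hlt
    exact ((continuousAt_ballRep hΦ hlt).congr
      (hball.eventuallyEq_of_mem (Metric.isOpen_ball.mem_nhds hmem)).symm).continuousWithinAt
  · rw [← Metric.ball_union_sphere]
    refine ContinuousWithinAt.union ?_ ?_
    · rw [ContinuousWithinAt, ballExtension_of_norm_eq_one Φ g heq]
      exact (h.tendsto_ballRep hΦ heq).congr' (hball.eventuallyEq_nhdsWithin).symm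
    · exact (h.continuous hΦ).continuousWithinAt.congr hsphere
        (ballExtension_of_norm_eq_one Φ g heq)

theorem MemH.exists_eq_ballLift (h : MemH Φ) :
    ∃ G : V → ℝ, ContinuousOn G (Metric.closedBall 0 1) ∧ ballLift G = Φ ∧
      ∀ w, ‖w‖ = 1 → rrec Φ w = G w := by
  obtain ⟨hΦ, -, g, hg⟩ := h
  exact ⟨ballExtension Φ g, hg.continuousOn_ballExtension hΦ, ballLift_ballExtension Φ g,
    fun w hw => by rw [hg.rrec_eq, ballExtension_of_norm_eq_one Φ g hw]⟩

end RecessionRepresentative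

section Density

variable {V : Type*} [NormedAddCommGroup V] [NormedSpace ℝ V] {K : Set V}

/-- The algebra of restrictions to `K` of continuously differentiable functions, to which the
Stone–Weierstrass theorem is applied. -/
def contDiffSubalgebra (K : Set V) : Subalgebra ℝ C(K, ℝ) where
  carrier := {G | ∃ g : V → ℝ, ContDiff ℝ 1 g ∧ ∀ y, G y = g y}
  mul_mem' := by
    rintro _ _ ⟨g, hg, hG⟩ ⟨g', hg', hG'⟩
    exact ⟨fun y => g y * g' y, hg.mul hg', fun y => by simp [hG, hG']⟩
  add_mem' := by
    rintro _ _ ⟨g, hg, hG⟩ ⟨g', hg', hG'⟩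
    exact ⟨fun y => g y + g' y, hg.add hg', fun y => by simp [hG, hG']⟩
  algebraMap_mem' r := ⟨fun _ => r, contDiff_const, fun y => by simp⟩

theorem separatesPoints_contDiffSubalgebra (K : Set V) :
    (contDiffSubalgebra K).SeparatesPoints := by
  intro x y hxy
  obtain ⟨φ, hφ⟩ := SeparatingDual.exists_separating_of_ne (R := ℝ) (Subtype.coe_injective.ne hxy)
  exact ⟨_, ⟨⟨fun v : K => φ v, by fun_prop⟩, ⟨φ, φ.contDiff, fun _ => rfl⟩, rfl⟩, hφ⟩

theorem dense_contDiffSubalgebra [CompactSpace K] : Dense (contDiffSubalgebra K : Set C(K, ℝ)) := by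
  rw [dense_iff_closure_eq, ← Subalgebra.topologicalClosure_coe,
    ContinuousMap.subalgebra_topologicalClosure_eq_top_of_separatesPoints _
      (separatesPoints_contDiffSubalgebra K)]
  rfl

theorem exists_seq_contDiff_forall_abs_sub_le (hK : IsCompact K) :
    ∃ g : ℕ → V → ℝ, (∀ i, ContDiff ℝ 1 (g i)) ∧
      ∀ G : V → ℝ, ContinuousOn G K → ∀ ε > 0, ∃ i, ∀ y ∈ K, |G y - g i y| ≤ ε := by
  have : CompactSpace K := isCompact_iff_compactSpace.1 hK
  let d : ℕ → contDiffSubalgebra K := TopologicalSpace.denseSeq _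
  have hd : DenseRange fun i => (d i : C(K, ℝ)) :=
    dense_contDiffSubalgebra.denseRange_val.comp (TopologicalSpace.denseRange_denseSeq _)
      continuous_subtype_val
  choose g hg hdg using fun i => (d i).2
  refine ⟨g, hg, fun G hG ε hε => ?_⟩
  obtain ⟨i, hi⟩ := hd.exists_dist_lt ⟨K.domRestrict G, hG.domRestrict⟩ hε
  refine ⟨i, fun y hy => ?_⟩
  have hy' := (ContinuousMap.dist_apply_le_dist (⟨y, hy⟩ : K)).trans hi.le
  rwa [hdg, Real.dist_eq] at hy'

end Density

section YoungPairing

variable {n k : ℕ} {V W : Type*} [NormedAddCommGroup V] [NormedSpace ℝ V] [MeasurableSpace V]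
  [NormedAddCommGroup W] [NormedSpace ℝ W]

/-- The pairing `∫ Φ dν⁰ + ∫ Φ^∞ dν^∞` with the integrand `Φ` represented by the function `G` on
the closed unit ball. -/
def youngPairing (ν₀ : Measure V) (νInf : Measure (Metric.sphere (0 : V) 1)) (G : V → ℝ) : ℝ :=
  (∫ v, ballLift G v ∂ν₀) + ∫ w, G (w : V) ∂νInf

/-- The Jensen-type inequality at `z` for all `𝒜`-quasiconvex integrands of linear growth. -/
def QuasiconvexJensen (A : (Fin n → ℕ) → (V →L[ℝ] W)) (k : ℕ) (z : V) (ν₀ : Measure V)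
    (νInf : Measure (Metric.sphere (0 : V) 1)) : Prop :=
  ∀ f : V → ℝ, AQuasiconvex A k f → LinearGrowth f →
    f z ≤ (∫ v, f v ∂ν₀) + ∫ w, urec f (w : V) ∂νInf

end YoungPairing

section Necessity

variable {n k l : ℕ} {V W U : Type*} [NormedAddCommGroup V]
  [NormedAddCommGroup W] [NormedSpace ℝ W] [NormedAddCommGroup U] [NormedSpace ℝ U]

theorem hasRec_clm [NormedSpace ℝ V] (φ : V →L[ℝ] ℝ) : HasRec φ φ := by
  intro s hs x
  refine ⟨Set.univ, univ_mem, ?_⟩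
  filter_upwards [eventually_gt_atTop (0 : ℝ)] with t ht y _
  rw [map_smul, smul_eq_mul, mul_div_cancel_left₀ _ ht.ne']
  exact refl_mem_uniformity hs

theorem memH_clm [NormedSpace ℝ V] (φ : V →L[ℝ] ℝ) : MemH φ := by
  refine ⟨φ.continuous, ⟨‖φ‖, fun v => (φ.le_opNorm v).trans ?_⟩, _, hasRec_clm φ⟩
  gcongr
  linarith

theorem cubeIntegral_clm [NormedSpace ℝ V] [CompleteSpace V] (B : (Fin n → ℕ) → (U →L[ℝ] V))
    (hl : 0 < l) {u : Dom n → U} (hu : CcSmooth (unitCube n) u) (φ : V →L[ℝ] ℝ) (z : V) :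
    cubeIntegral B l φ z u = φ z := by
  have hBu := integrableOn_unitCube_of_continuous (contDiff_opApply B l hu.1).continuous
  have hz : IntegrableOn (fun _ : Dom n => z) (unitCube n) :=
    integrableOn_unitCube_of_continuous continuous_const
  refine (φ.integral_comp_comm (hz.add hBu)).trans (congrArg φ ?_)
  simp only [Pi.add_apply]
  rw [integral_add hz hBu, hu.setIntegral_opApply B hl]
  simp

theorem ExactPotential.le_cubeIntegral [NormedSpace ℝ V] {A : (Fin n → ℕ) → (V →L[ℝ] W)}
    {B : (Fin n → ℕ) → (U →L[ℝ] V)} (hAB : ExactPotential A k B l) (hk : 0 < k) (hl : 0 < l)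
    {f : V → ℝ} (hf : AQuasiconvex A k f) (z : V) {u : Dom n → U}
    (hu : CcSmooth (unitCube n) u) : f z ≤ cubeIntegral B l f z u :=
  hf.le_setIntegral_of_tsupport_subset z (contDiff_opApply B l hu.1)
    ((tsupport_opApply_subset B l u).trans hu.2.2) (hu.setIntegral_opApply B hl)
    fun x => hAB.opApply_opApply hk hu.1 x

theorem cubeIntegral_mono [NormedSpace ℝ V] (B : (Fin n → ℕ) → (U →L[ℝ] V)) (l : ℕ)
    {Φ Ψ : V → ℝ} (hΦ : Continuous Φ) (hΨ : Continuous Ψ) (hle : ∀ v, Φ v ≤ Ψ v) (z : V)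
    {u : Dom n → U} (hu : ContDiff ℝ ∞ u) :
    cubeIntegral B l Φ z u ≤ cubeIntegral B l Ψ z u := by
  have hBu := (contDiff_opApply B l hu).continuous
  exact setIntegral_mono (integrableOn_unitCube_of_continuous (by fun_prop))
    (integrableOn_unitCube_of_continuous (by fun_prop)) fun _ => hle _

variable [InnerProductSpace ℝ V] [FiniteDimensional ℝ V] [MeasurableSpace V] [BorelSpace V]
  {A : (Fin n → ℕ) → (V →L[ℝ] W)} {B : (Fin n → ℕ) → (U →L[ℝ] V)}
  {z : V} {ν₀ : Measure V} {νInf : Measure (Metric.sphere (0 : V) 1)}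

namespace memY

theorem integral_add_integral_eq [IsFiniteMeasure νInf] (h : memY B l z ν₀ νInf)
    (hl : 0 < l) (hmom : Integrable (fun v : V => ‖v‖) ν₀) :
    (∫ v, v ∂ν₀) + ∫ w, (w : V) ∂νInf = z := by
  obtain ⟨u, hu, -, hlim⟩ := h
  have hν₀ : Integrable (fun v : V => v) ν₀ :=
    (integrable_norm_iff continuous_id.aestronglyMeasurable).1 hmom
  have hνInf : Integrable (fun w : Metric.sphere (0 : V) 1 => (w : V)) νInf :=
    Integrable.mono' (integrable_const (1 : ℝ)) continuous_subtype_val.aestronglyMeasurable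
      (Eventually.of_forall fun w => by simp)
  refine (SeparatingDual.eq_iff_forall_dual_eq (R := ℝ)).2 fun φ => ?_
  have hφ := hlim φ (memH_clm φ)
  simp only [(hasRec_clm φ).rrec_eq] at hφ
  rw [map_add, ← φ.integral_comp_comm hν₀, ← φ.integral_comp_comm hνInf]
  exact tendsto_nhds_unique hφ
    (tendsto_const_nhds.congr fun j => (cubeIntegral_clm B hl (hu j) φ z).symm)

theorem le_youngPairing (h : memY B l z ν₀ νInf) {G : V → ℝ} (hG : Continuous G) {s : ℝ}
    (hs : ∀ u, CcSmooth (unitCube n) u → s ≤ cubeIntegral B l (ballLift G) z u) :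
    s ≤ youngPairing ν₀ νInf G := by
  have : ProperSpace V := FiniteDimensional.proper ℝ V
  obtain ⟨u, hu, -, hlim⟩ := h
  have hpair := hlim _ (memH_ballLift hG)
  simp only [fun w : Metric.sphere (0 : V) 1 =>
    rrec_ballLift hG (mem_sphere_zero_iff_norm.1 w.2)] at hpair
  exact ge_of_tendsto' hpair fun j => hs _ (hu j)

theorem quasiconvexJensen [IsFiniteMeasure ν₀] [IsFiniteMeasure νInf] (h : memY B l z ν₀ νInf)
    (hk : 0 < k) (hl : 0 < l) (hAB : ExactPotential A k B l)
    (hmom : Integrable (fun v : V => ‖v‖) ν₀) : QuasiconvexJensen A k z ν₀ νInf := by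
  have : ProperSpace V := FiniteDimensional.proper ℝ V
  rintro f hf ⟨c, hc⟩
  refine ge_of_tendsto' ((tendsto_integral_ballLift_ballSupConv hc hmom hf.1).add
    (tendsto_integral_ballSupConv hc)) fun m => ?_
  have hcont := (lipschitzWith_ballSupConv hc m).continuous
  exact h.le_youngPairing hcont fun u hu => (hAB.le_cubeIntegral hk hl hf z hu).trans
    (cubeIntegral_mono B l hf.1 (continuous_ballLift hcont.continuousOn)
      (le_ballLift_ballSupConv hc m) z hu.1)

end memY

end Necessity

section MomentSets

variable {n l : ℕ} {V U : Type*} [NormedAddCommGroup V] [NormedSpace ℝ V]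
  [NormedAddCommGroup U] [NormedSpace ℝ U] {B : (Fin n → ℕ) → (U →L[ℝ] V)} {z : V}

theorem cubeIntegral_glue {N : ℕ} (hN : 0 < N) {u : (Fin n → Fin N) → Dom n → U}
    (hu : ∀ i, CcSmooth (unitCube n) (u i)) {Φ : V → ℝ} (hΦ : Continuous Φ) :
    cubeIntegral B l Φ z (glue N l u) = ∑ i, ((N : ℝ) ^ n)⁻¹ * cubeIntegral B l Φ z (u i) :=
  setIntegral_opApply_glue B hN hu (H := fun _ v => Φ (z + v)) (by fun_prop)

theorem cubeIntegral_glue_const {N : ℕ} (hN : 0 < N) {u : Dom n → U}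
    (hu : CcSmooth (unitCube n) u) {Φ : V → ℝ} (hΦ : Continuous Φ) :
    cubeIntegral B l Φ z (glue N l fun _ : Fin n → Fin N => u) = cubeIntegral B l Φ z u := by
  rw [cubeIntegral_glue hN (fun _ => hu) hΦ, Finset.sum_const, Finset.card_univ, nsmul_eq_mul,
    card_grid, mul_inv_cancel_left₀ (by positivity)]

theorem exists_ccSmooth_cubeIntegral_eq_add {N : ℕ} (hN : 0 < N) (S : Finset (Fin n → Fin N))
    {u v : Dom n → U} (hu : CcSmooth (unitCube n) u) (hv : CcSmooth (unitCube n) v) :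
    ∃ w : Dom n → U, CcSmooth (unitCube n) w ∧ ∀ Φ : V → ℝ, Continuous Φ →
      cubeIntegral B l Φ z w = (S.card / (N : ℝ) ^ n) * cubeIntegral B l Φ z u +
        (1 - S.card / (N : ℝ) ^ n) * cubeIntegral B l Φ z v := by
  classical
  have hc (i : Fin n → Fin N) : CcSmooth (unitCube n) (if i ∈ S then u else v) := by
    split_ifs <;> assumption
  refine ⟨glue N l fun i => if i ∈ S then u else v, ccSmooth_glue hN hc, fun Φ hΦ => ?_⟩
  have hsplit (i : Fin n → Fin N) : cubeIntegral B l Φ z (if i ∈ S then u else v) =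
      cubeIntegral B l Φ z v +
        if i ∈ S then cubeIntegral B l Φ z u - cubeIntegral B l Φ z v else 0 := by
    split_ifs <;> ring
  have hNn : (N : ℝ) ^ n ≠ 0 := by positivity
  rw [cubeIntegral_glue hN hc hΦ, ← Finset.mul_sum]
  simp only [hsplit]
  rw [Finset.sum_add_distrib, Finset.sum_const, Finset.card_univ, nsmul_eq_mul, card_grid,
    Finset.sum_ite_mem, Finset.univ_inter, Finset.sum_const, nsmul_eq_mul]
  field_simp
  ring

theorem convex_closure_of_forall_mem {E : Type*} [AddCommGroup E] [Module ℝ E]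
    [TopologicalSpace E] [ContinuousAdd E] [ContinuousConstSMul ℝ E] {M : Set E}
    (h : ∀ a ∈ M, ∀ b ∈ M, ∀ θ : ℝ, 0 ≤ θ → θ ≤ 1 → θ • a + (1 - θ) • b ∈ closure M) :
    Convex ℝ (closure M) := by
  intro a ha b hb s t hs ht hst
  obtain rfl : t = 1 - s := by linarith
  have hmem := map_mem_closure₂ (f := fun a b : E => s • a + (1 - s) • b) (by fun_prop) ha hb
    fun a ha b hb => h a ha b hb s hs (by linarith)
  rwa [closure_closure] at hmem

/-- The set of vectors of energies `(∫ Φ_i(z + ℬu))_i`, as `u` runs through `C_c^∞(𝕏, 𝕌)`. -/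
def momentSet {ι : Type*} (B : (Fin n → ℕ) → (U →L[ℝ] V)) (l : ℕ) (z : V) (Φ : ι → V → ℝ) :
    Set (ι → ℝ) :=
  (fun u i => cubeIntegral B l (Φ i) z u) '' {u | CcSmooth (unitCube n) u}

theorem convex_closure_momentSet {ι : Type*} (hn : 0 < n) {Φ : ι → V → ℝ}
    (hΦ : ∀ i, Continuous (Φ i)) : Convex ℝ (closure (momentSet B l z Φ)) := by
  refine convex_closure_of_forall_mem ?_
  rintro _ ⟨u, hu, rfl⟩ _ ⟨v, hv, rfl⟩ θ h0 h1
  -- A `⌊θ Nⁿ⌋ / Nⁿ` fraction of the cells of the grid carries `u`, the others `v`.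
  have hθ : Tendsto (fun N : ℕ => (⌊θ * (N : ℝ) ^ n⌋₊ : ℝ) / (N : ℝ) ^ n) atTop (𝓝 θ) :=
    (tendsto_nat_floor_mul_div_atTop h0).comp
      ((tendsto_pow_atTop hn.ne').comp tendsto_natCast_atTop_atTop)
  refine mem_closure_of_tendsto ((hθ.smul_const _).add ((hθ.const_sub 1).smul_const _)) ?_
  filter_upwards [eventually_gt_atTop 0] with N hN
  have hcard : ⌊θ * (N : ℝ) ^ n⌋₊ ≤ (Finset.univ : Finset (Fin n → Fin N)).card := by
    rw [Finset.card_univ]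
    refine Nat.floor_le_of_le ?_
    rw [card_grid]
    exact mul_le_of_le_one_left (by positivity) h1
  obtain ⟨S, -, hS⟩ := Finset.exists_subset_card_eq hcard
  obtain ⟨w, hw, hmix⟩ :=
    exists_ccSmooth_cubeIntegral_eq_add (B := B) (l := l) (z := z) hN S hu hv
  refine ⟨w, hw, funext fun i => ?_⟩
  simpa [hS] using hmix _ (hΦ i)

theorem cubeIntegral_finsetSum_mul {ι : Type*} [Fintype ι] (c : ι → ℝ) {Φ : ι → V → ℝ}
    (hΦ : ∀ i, Continuous (Φ i)) {u : Dom n → U} (hu : ContDiff ℝ ∞ u) :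
    cubeIntegral B l (fun v => ∑ i, c i * Φ i v) z u =
      ∑ i, c i * cubeIntegral B l (Φ i) z u := by
  have hBu := (contDiff_opApply B l hu).continuous
  refine (integral_finsetSum _ fun i _ => integrableOn_unitCube_of_continuous ?_).trans
    (Finset.sum_congr rfl fun i _ => integral_const_mul _ _)
  have hΦi := hΦ i
  fun_prop

end MomentSets

section PairingLinearity

theorem integrable_sphere {V : Type*} [NormedAddCommGroup V] [ProperSpace V] [MeasurableSpace V]
    [BorelSpace V] {νInf : Measure (Metric.sphere (0 : V) 1)} [IsFiniteMeasure νInf] {G : V → ℝ}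
    (hG : ContinuousOn G (Metric.closedBall 0 1)) :
    Integrable (fun w : Metric.sphere (0 : V) 1 => G w) νInf := by
  obtain ⟨C, hC⟩ := (isCompact_closedBall (0 : V) 1).exists_bound_of_continuousOn hG
  have hcont : Continuous fun w : Metric.sphere (0 : V) 1 => G w :=
    hG.comp_continuous continuous_subtype_val fun w => by simp
  exact Integrable.mono' (integrable_const C) hcont.aestronglyMeasurable
    (Eventually.of_forall fun w => hC _ (by simp))

variable {V : Type*} [NormedAddCommGroup V] [NormedSpace ℝ V]

theorem ballLift_finsetSum_mul {ι : Type*} [Fintype ι] (c : ι → ℝ) (g : ι → V → ℝ) :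
    ballLift (fun y => ∑ i, c i * g i y) = fun v => ∑ i, c i * ballLift (g i) v := by
  ext v
  simp only [ballLift_eq, Finset.mul_sum, mul_left_comm]

theorem abs_ballLift_sub_le {f g : V → ℝ} {ε : ℝ}
    (h : ∀ y ∈ Metric.closedBall (0 : V) 1, |f y - g y| ≤ ε) (v : V) :
    |ballLift f v - ballLift g v| ≤ ε * ballLift (fun _ => 1) v := by
  rw [ballLift_eq, ballLift_eq, ballLift_eq, ← mul_sub, abs_mul, abs_of_pos (one_add_norm_pos v),
    mul_one, mul_comm]
  exact mul_le_mul_of_nonneg_right (h _ (toBall_mem_closedBall v)) (one_add_norm_pos v).le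

variable [ProperSpace V] [MeasurableSpace V] [BorelSpace V] {ν₀ : Measure V} [IsFiniteMeasure ν₀]
  {νInf : Measure (Metric.sphere (0 : V) 1)} [IsFiniteMeasure νInf]

theorem integrable_ballLift (hmom : Integrable (fun v : V => ‖v‖) ν₀) {G : V → ℝ}
    (hG : ContinuousOn G (Metric.closedBall 0 1)) : Integrable (ballLift G) ν₀ := by
  obtain ⟨C, hC⟩ := (isCompact_closedBall (0 : V) 1).exists_bound_of_continuousOn hG
  exact integrable_of_abs_le_mul_one_add_norm (abs_homogenize_le hC zero_le_one) hmom
    (continuous_ballLift hG)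

theorem youngPairing_finsetSum_mul {ι : Type*} [Fintype ι]
    (hmom : Integrable (fun v : V => ‖v‖) ν₀) (c : ι → ℝ) {g : ι → V → ℝ}
    (hg : ∀ i, ContinuousOn (g i) (Metric.closedBall 0 1)) :
    youngPairing ν₀ νInf (fun y => ∑ i, c i * g i y) = ∑ i, c i * youngPairing ν₀ νInf (g i) := by
  simp only [youngPairing, ballLift_finsetSum_mul, mul_add, Finset.sum_add_distrib]
  rw [integral_finsetSum _ fun i _ => (integrable_ballLift hmom (hg i)).const_mul (c i),
    integral_finsetSum _ fun i _ => (integrable_sphere (hg i)).const_mul (c i)]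
  simp only [integral_const_mul]

end PairingLinearity

section Separation

variable {n k l : ℕ} {V W U : Type*} [NormedAddCommGroup V] [NormedSpace ℝ V] [ProperSpace V]
  [MeasurableSpace V] [BorelSpace V] [NormedAddCommGroup W] [NormedSpace ℝ W]
  [NormedAddCommGroup U] [NormedSpace ℝ U]
  {A : (Fin n → ℕ) → (V →L[ℝ] W)} {B : (Fin n → ℕ) → (U →L[ℝ] V)}
  {z : V} {ν₀ : Measure V} [IsFiniteMeasure ν₀]
  {νInf : Measure (Metric.sphere (0 : V) 1)} [IsFiniteMeasure νInf]

namespace QuasiconvexJensen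

theorem le_youngPairing (hJ : QuasiconvexJensen A k z ν₀ νInf) (hAB : ExactPotential A k B l)
    (hmom : Integrable (fun v : V => ‖v‖) ν₀) {g : V → ℝ} (hg : ContDiff ℝ 1 g) {s : ℝ}
    (hs : ∀ u, CcSmooth (unitCube n) u → s ≤ cubeIntegral B l (ballLift g) z u) :
    s ≤ youngPairing ν₀ νInf g := by
  obtain ⟨L, hL⟩ := exists_lipschitzWith_ballLift hg
  have hb := cubeIntegralsBddBelow_of_forall_le hL hs
  have hQ := hb.lipschitzWith_qcEnvelope hL
  obtain ⟨c, hc⟩ := linearGrowth_of_lipschitzWith hQ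
  have hgc := hg.continuous.continuousOn (s := Metric.closedBall (0 : V) 1)
  calc s ≤ qcEnvelope B l (ballLift g) z := le_qcEnvelope hs
    _ ≤ (∫ v, qcEnvelope B l (ballLift g) v ∂ν₀) +
        ∫ w, urec (qcEnvelope B l (ballLift g)) (w : V) ∂νInf :=
      hJ _ (hAB.aQuasiconvex_qcEnvelope hL hb) ⟨c, hc⟩
    _ ≤ youngPairing ν₀ νInf g := by
      refine add_le_add ?_ ?_
      · exact integral_mono (integrable_of_abs_le_mul_one_add_norm hc hmom hQ.continuous)
          (integrable_ballLift hmom hgc) hb.qcEnvelope_le_self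
      · exact integral_mono (integrable_urec hc) (integrable_sphere hgc) fun w =>
          urec_le_of_le_ballLift hc hg.continuous hb.qcEnvelope_le_self (by simp)

theorem youngPairing_mem_closure_momentSet {ι : Type*} [Finite ι]
    (hJ : QuasiconvexJensen A k z ν₀ νInf) (hn : 0 < n) (hAB : ExactPotential A k B l)
    (hmom : Integrable (fun v : V => ‖v‖) ν₀) {g : ι → V → ℝ} (hg : ∀ i, ContDiff ℝ 1 (g i)) :
    (fun i => youngPairing ν₀ νInf (g i)) ∈
      closure (momentSet B l z fun i => ballLift (g i)) := by
  classical
  have := Fintype.ofFinite ι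
  have hgc (i : ι) := (hg i).continuous.continuousOn (s := Metric.closedBall (0 : V) 1)
  have hlift (i : ι) := continuous_ballLift (hgc i)
  by_contra hmem
  obtain ⟨F, s, hF, hs⟩ := geometric_hahn_banach_point_closed
    (convex_closure_momentSet hn hlift) isClosed_closure hmem
  have hsum (a : ι → ℝ) : F a = ∑ i, F (Pi.single i 1) * a i := by
    conv_lhs => rw [pi_eq_sum_univ' a]
    simp [mul_comm]
  refine hF.not_ge ?_
  rw [hsum, ← youngPairing_finsetSum_mul hmom _ hgc]
  refine hJ.le_youngPairing hAB hmom (ContDiff.sum fun i _ => contDiff_const.mul (hg i))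
    fun u hu => ?_
  rw [ballLift_finsetSum_mul, cubeIntegral_finsetSum_mul _ hlift hu.1, ← hsum]
  exact (hs _ (subset_closure ⟨u, hu, rfl⟩)).le

theorem exists_ccSmooth_sobNorm_lt {ι : Type*} [Finite ι]
    (hJ : QuasiconvexJensen A k z ν₀ νInf) (hn : 0 < n) (hAB : ExactPotential A k B l)
    (hmom : Integrable (fun v : V => ‖v‖) ν₀) {g : ι → V → ℝ} (hg : ∀ i, ContDiff ℝ 1 (g i))
    {ε : ℝ} (hε : 0 < ε) :
    ∃ u : Dom n → U, CcSmooth (unitCube n) u ∧ sobNorm l u < ε ∧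
      ∀ i, |cubeIntegral B l (ballLift (g i)) z u - youngPairing ν₀ νInf (g i)| < ε := by
  have := Fintype.ofFinite ι
  obtain ⟨_, ⟨u, hu, rfl⟩, hclose⟩ := Metric.mem_closure_iff.1
    (hJ.youngPairing_mem_closure_momentSet (B := B) hn hAB hmom hg) ε hε
  have hsob : Tendsto (fun N : ℕ => (N : ℝ)⁻¹ * sobNorm l u) atTop (𝓝 0) := by
    simpa using (tendsto_inv_atTop_nhds_zero_nat (𝕜 := ℝ)).mul_const (sobNorm l u)
  obtain ⟨N, hNε, hN⟩ := ((hsob.eventually_lt_const hε).and (eventually_gt_atTop 0)).exists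
  refine ⟨glue N l fun _ => u, ccSmooth_glue hN fun _ => hu,
    (sobNorm_glue_le hN hu).trans_lt hNε, fun i => ?_⟩
  rw [cubeIntegral_glue_const hN hu (continuous_ballLift (hg i).continuous.continuousOn),
    abs_sub_comm]
  exact (dist_pi_lt_iff hε).1 hclose i

theorem exists_seq_tendsto (hJ : QuasiconvexJensen A k z ν₀ νInf) (hn : 0 < n)
    (hAB : ExactPotential A k B l) (hmom : Integrable (fun v : V => ‖v‖) ν₀) {g : ℕ → V → ℝ}
    (hg : ∀ i, ContDiff ℝ 1 (g i)) :
    ∃ u : ℕ → Dom n → U, (∀ j, CcSmooth (unitCube n) (u j)) ∧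
      Tendsto (fun j => sobNorm l (u j)) atTop (𝓝 0) ∧
      ∀ i, Tendsto (fun j => cubeIntegral B l (ballLift (g i)) z (u j)) atTop
        (𝓝 (youngPairing ν₀ νInf (g i))) := by
  have hzero : Tendsto (fun j : ℕ => 1 / ((j : ℝ) + 1)) atTop (𝓝 0) :=
    tendsto_one_div_add_atTop_nhds_zero_nat
  choose u hu hsob hclose using fun j : ℕ => hJ.exists_ccSmooth_sobNorm_lt (B := B) hn hAB hmom
    (fun i : Fin j => hg i) (Nat.one_div_pos_of_nat (α := ℝ) (n := j))
  refine ⟨u, hu, squeeze_zero (fun _ => sobNorm_nonneg l _) (fun j => (hsob j).le) hzero,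
    fun i => tendsto_iff_dist_tendsto_zero.2 (squeeze_zero' ?_ ?_ hzero)⟩
  · exact Eventually.of_forall fun _ => dist_nonneg
  · filter_upwards [eventually_gt_atTop i] with j hj
    exact (hclose j ⟨i, hj⟩).le

end QuasiconvexJensen

end Separation

section Approximation

theorem tendsto_of_forall_exists_approx {α : Type*} {F : Filter α} {a b : α → ℝ} {x y : ℝ}
    (hb : Tendsto b F (𝓝 y))
    (h : ∀ ε > 0, ∃ (c : α → ℝ) (x' : ℝ), Tendsto c F (𝓝 x') ∧
      (∀ j, |a j - c j| ≤ ε * b j) ∧ |x - x'| ≤ ε * y) :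
    Tendsto a F (𝓝 x) := by
  refine Metric.tendsto_nhds.2 fun η hη => ?_
  obtain ⟨ε, hε, hεη⟩ : ∃ ε > 0, ε * y + 0 + ε * y < η := by
    have hlim : Tendsto (fun ε : ℝ => ε * y + 0 + ε * y) (𝓝[>] 0) (𝓝 0) :=
      tendsto_nhdsWithin_of_tendsto_nhds (Continuous.tendsto' (by fun_prop) _ _ (by simp))
    exact (eventually_mem_nhdsWithin.and (hlim.eventually_lt_const hη)).exists
  obtain ⟨c, x', hc, hac, hxx'⟩ := h ε hε
  have hlim : Tendsto (fun j => ε * b j + |c j - x'| + ε * y) F (𝓝 (ε * y + 0 + ε * y)) :=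
    ((hb.const_mul ε).add (by simpa using (hc.sub_const x').abs)).add_const _
  filter_upwards [hlim.eventually_lt_const hεη] with j hj
  calc dist (a j) x ≤ dist (a j) (c j) + dist (c j) x' + dist x' x := dist_triangle4 ..
    _ ≤ ε * b j + |c j - x'| + ε * y := by
      gcongr
      · exact hac j
      · exact le_of_eq (Real.dist_eq _ _)
      · rwa [dist_comm]
    _ < η := hj

theorem abs_integral_sub_le {α : Type*} [MeasurableSpace α] {μ : Measure α} {f g h : α → ℝ}
    {ε : ℝ} (hf : Integrable f μ) (hg : Integrable g μ) (hh : Integrable h μ)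
    (hle : ∀ x, |f x - g x| ≤ ε * h x) : |(∫ x, f x ∂μ) - ∫ x, g x ∂μ| ≤ ε * ∫ x, h x ∂μ := by
  rw [← integral_sub hf hg, ← integral_const_mul]
  rw [← Real.norm_eq_abs]
  exact norm_integral_le_of_norm_le (hh.const_mul ε) (Eventually.of_forall hle)

theorem abs_cubeIntegral_ballLift_sub_le {n l : ℕ} {V U : Type*} [NormedAddCommGroup V]
    [NormedSpace ℝ V] [ProperSpace V] [NormedAddCommGroup U] [NormedSpace ℝ U]
    (B : (Fin n → ℕ) → (U →L[ℝ] V)) (z : V) {f g : V → ℝ} {ε : ℝ}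
    (hf : ContinuousOn f (Metric.closedBall 0 1)) (hg : ContinuousOn g (Metric.closedBall 0 1))
    (hle : ∀ y ∈ Metric.closedBall (0 : V) 1, |f y - g y| ≤ ε) {u : Dom n → U}
    (hu : ContDiff ℝ ∞ u) :
    |cubeIntegral B l (ballLift f) z u - cubeIntegral B l (ballLift g) z u| ≤
      ε * cubeIntegral B l (ballLift fun _ => 1) z u := by
  have hBu := (contDiff_opApply B l hu).continuous
  have hint {G : V → ℝ} (hG : ContinuousOn G (Metric.closedBall 0 1)) :
      IntegrableOn (fun x => ballLift G (z + opApply B l u x)) (unitCube n) := by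
    have hlift := continuous_ballLift hG
    exact integrableOn_unitCube_of_continuous (by fun_prop)
  exact abs_integral_sub_le (hint hf) (hint hg) (hint continuousOn_const)
    fun x => abs_ballLift_sub_le hle _

theorem abs_youngPairing_sub_le {V : Type*} [NormedAddCommGroup V] [NormedSpace ℝ V]
    [ProperSpace V] [MeasurableSpace V] [BorelSpace V] {ν₀ : Measure V} [IsFiniteMeasure ν₀]
    {νInf : Measure (Metric.sphere (0 : V) 1)} [IsFiniteMeasure νInf]
    (hmom : Integrable (fun v : V => ‖v‖) ν₀) {f g : V → ℝ} {ε : ℝ}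
    (hf : ContinuousOn f (Metric.closedBall 0 1)) (hg : ContinuousOn g (Metric.closedBall 0 1))
    (hle : ∀ y ∈ Metric.closedBall (0 : V) 1, |f y - g y| ≤ ε) :
    |youngPairing ν₀ νInf f - youngPairing ν₀ νInf g| ≤
      ε * youngPairing ν₀ νInf fun _ => 1 := by
  have hone : ContinuousOn (fun _ : V => (1 : ℝ)) (Metric.closedBall 0 1) := continuousOn_const
  rw [youngPairing, youngPairing, youngPairing, add_sub_add_comm, mul_add]
  refine (abs_add_le _ _).trans (add_le_add ?_ ?_)
  · exact abs_integral_sub_le (integrable_ballLift hmom hf) (integrable_ballLift hmom hg)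
      (integrable_ballLift hmom hone) (abs_ballLift_sub_le hle)
  · exact abs_integral_sub_le (integrable_sphere hf) (integrable_sphere hg)
      (integrable_sphere hone) fun w => by simpa using hle w (by simp)

end Approximation

theorem QuasiconvexJensen.memY {n k l : ℕ} {V W U : Type*} [NormedAddCommGroup V]
    [InnerProductSpace ℝ V] [FiniteDimensional ℝ V] [MeasurableSpace V] [BorelSpace V]
    [NormedAddCommGroup W] [NormedSpace ℝ W] [NormedAddCommGroup U] [NormedSpace ℝ U]
    {A : (Fin n → ℕ) → (V →L[ℝ] W)} {B : (Fin n → ℕ) → (U →L[ℝ] V)} {z : V} {ν₀ : Measure V}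
    [IsFiniteMeasure ν₀] {νInf : Measure (Metric.sphere (0 : V) 1)} [IsFiniteMeasure νInf]
    (hJ : QuasiconvexJensen A k z ν₀ νInf) (hn : 0 < n) (hAB : ExactPotential A k B l)
    (hmom : Integrable (fun v : V => ‖v‖) ν₀) : memY B l z ν₀ νInf := by
  have : ProperSpace V := FiniteDimensional.proper ℝ V
  obtain ⟨g, hg, hdense⟩ :=
    exists_seq_contDiff_forall_abs_sub_le (isCompact_closedBall (0 : V) 1)
  -- The lift of the constant `1`, put in front, controls the masses in the approximation of `Φ`.
  obtain ⟨u, hu, hsob, hlim⟩ := hJ.exists_seq_tendsto (B := B) hn hAB hmom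
    (g := fun i => Nat.casesOn i (fun _ => 1) g) fun i => by
      cases i with
      | zero => exact contDiff_const
      | succ i => exact hg i
  refine ⟨u, hu, hsob, fun Φ hΦ => ?_⟩
  obtain ⟨G, hG, rfl, hrec⟩ := hΦ.exists_eq_ballLift
  simp only [hrec _ (norm_eq_of_mem_sphere _)]
  refine tendsto_of_forall_exists_approx (hlim 0) fun ε hε => ?_
  obtain ⟨i, hi⟩ := hdense G hG ε hε
  have hgi := (hg i).continuous.continuousOn (s := Metric.closedBall (0 : V) 1)
  exact ⟨_, _, hlim (i + 1),
    fun j => abs_cubeIntegral_ballLift_sub_le B z hG hgi hi (hu j).1,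
    abs_youngPairing_sub_le hmom hG hgi hi⟩

theorem stmt1_general {n k l : ℕ} (hn : 0 < n) (hk : 0 < k) (hl : 0 < l)
    {V W U : Type*} [NormedAddCommGroup V] [InnerProductSpace ℝ V] [FiniteDimensional ℝ V]
    [MeasurableSpace V] [BorelSpace V] [NormedAddCommGroup W] [NormedSpace ℝ W]
    [NormedAddCommGroup U] [NormedSpace ℝ U]
    {A : (Fin n → ℕ) → (V →L[ℝ] W)} {B : (Fin n → ℕ) → (U →L[ℝ] V)}
    (hexact : ExactPotential A k B l) (z : V) (ν₀ : Measure V) [IsFiniteMeasure ν₀]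
    (hmom : Integrable (fun v : V => ‖v‖) ν₀) (νInf : Measure (Metric.sphere (0 : V) 1))
    [IsFiniteMeasure νInf] :
    memY B l z ν₀ νInf ↔
      (∫ v, v ∂ν₀) + (∫ w, (w : V) ∂νInf) = z ∧ QuasiconvexJensen A k z ν₀ νInf :=
  ⟨fun h => ⟨h.integral_add_integral_eq hl hmom, h.quasiconvexJensen hk hl hexact hmom⟩,
    fun h => h.2.memY hn hexact hmom⟩

theorem stmt1 {n k l : ℕ} (hn : 0 < n) (hk : 0 < k) (hl : 0 < l)
    {V W U : Type*} [NormedAddCommGroup V] [InnerProductSpace ℝ V] [FiniteDimensional ℝ V]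
    [MeasurableSpace V] [BorelSpace V]
    [NormedAddCommGroup W] [InnerProductSpace ℝ W] [FiniteDimensional ℝ W]
    [NormedAddCommGroup U] [InnerProductSpace ℝ U] [FiniteDimensional ℝ U]
    (A : (Fin n → ℕ) → (V →L[ℝ] W)) (B : (Fin n → ℕ) → (U →L[ℝ] V))
    (hspan : SpanningCone A k) (hexact : ExactPotential A k B l)
    (z : V) (nu0 : Measure V) (nuInf : Measure (Metric.sphere (0:V) 1))
    (hprob : IsProbabilityMeasure nu0) (hmom : Integrable (fun v : V => ‖v‖) nu0)
    (hfin : IsFiniteMeasure nuInf) :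
    memY B l z nu0 nuInf ↔
      ((∫ v, v ∂nu0) + (∫ w, (w : V) ∂nuInf) = z ∧
       ∀ f : V → ℝ, AQuasiconvex A k f → LinearGrowth f →
         f z ≤ (∫ v, f v ∂nu0) + ∫ w, urec f (w : V) ∂nuInf) :=
  stmt1_general hn hk hl hexact z nu0 hmom nuInf

end
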